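/- Fix an integer r ≥ 4 and a constant ε > 0. Let 𝒢_r(n) be the set of simple r-regular graphs on vertex set {1,…,n} (rn even), and let 𝒢′_r(n) ⊆ 𝒢_r(n) be the subset of graphs G satisfying both: (P1) G is connected and the second-largest eigenvalue of the adjacency matrix of G is at most 2√(r−1)+ε; and (P2) for every s ≤ log n, no set of s vertices of G induces more than s + ⌈2s·log(re)/log n⌉ edges. Then |𝒢′_r(n)|/|𝒢_r(n)| → 1 as n → ∞. -/

import Mathlib

open scoped Classical

-- Property (P1): `G` is connected and the second-largest eigenvalue of its adjacency
-- matrix (i.e. the largest eigenvalue other than `r`, which for a connected `r`-regular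
-- graph is the simple top eigenvalue) is at most `2√(r−1) + ε`.
noncomputable def PropP1 {n : ℕ} (r : ℕ) (ε : ℝ) (G : SimpleGraph (Fin n)) : Prop :=
  G.Connected ∧
    sSup {μ : ℝ | μ ∈ spectrum ℝ (G.adjMatrix ℝ) ∧ μ ≠ (r : ℝ)} ≤
      2 * Real.sqrt ((r : ℝ) - 1) + ε

-- Property (P2): for every `s ≤ log n`, no set of `s` vertices induces more than
-- `s + ⌈2s·log(re)/log n⌉` edges.
def PropP2 {n : ℕ} (r : ℕ) (G : SimpleGraph (Fin n)) : Prop :=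
  ∀ s : ℕ, (s : ℝ) ≤ Real.log n →
    ∀ U : Finset (Fin n), U.card = s →
      Set.ncard {e : Sym2 (Fin n) | e ∈ G.edgeSet ∧ ∀ x ∈ e, x ∈ U} ≤
        s + ⌈2 * (s : ℝ) * Real.log ((r : ℝ) * Real.exp 1) / Real.log n⌉₊

namespace Fried
section PartA
open Polynomial Polynomial.Chebyshev MeasureTheory

/-- Chebyshev expansion with coefficient bound. -/
lemma cheb_expand (q : ℕ) (p : ℝ[X]) (hp : p.natDegree ≤ q) (K : ℝ)
    (hK : ∀ x : ℝ, |x| ≤ 1 → |p.eval x| ≤ K) :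
    ∃ c : ℕ → ℝ, p = ∑ k ∈ Finset.range (q + 1), Polynomial.C (c k) * T ℝ (k : ℤ) ∧
      ∀ k ≤ q, |c k| ≤ 2 * K := by
  have hmem : p ∈ degreeLT ℝ (q + 1) := by
    rw [mem_degreeLT]
    exact lt_of_le_of_lt degree_le_natDegree (by exact_mod_cast Nat.lt_succ_of_le hp)
  rw [← Sequence.span_degreeLT (chebyshevTsequence ℝ) (by simp),
    show Set.Iio (q + 1) = Finset.range (q + 1) by simp,
    Submodule.mem_span_image_finset_iff_exists_fun'] at hmem
  obtain ⟨c, hc⟩ := hmem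
  have hc' : p = ∑ k ∈ Finset.range (q + 1), Polynomial.C (c k) * T ℝ (k : ℤ) := by
    rw [← hc]
    apply Finset.sum_congr rfl
    intro i _
    rw [Polynomial.smul_eq_C_mul]
    rfl
  refine ⟨c, hc', ?_⟩
  intro k hk
  have hK0 : 0 ≤ K := le_trans (abs_nonneg _) (hK 0 (by simp))
  have hinteg : ∫ x, p.eval x * (T ℝ (k : ℤ)).eval x ∂measureT
      = c k * ∫ x, (T ℝ (k : ℤ)).eval x * (T ℝ (k : ℤ)).eval x ∂measureT := by
    have : ∀ x : ℝ, p.eval x * (T ℝ (k : ℤ)).eval x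
        = ∑ i ∈ Finset.range (q + 1), c i * ((T ℝ (i : ℤ)).eval x * (T ℝ (k : ℤ)).eval x) := by
      intro x
      rw [hc', eval_finsetSum, Finset.sum_mul]
      apply Finset.sum_congr rfl
      intro i _
      simp [mul_assoc]
    simp_rw [this]
    rw [MeasureTheory.integral_finsetSum]
    · simp_rw [MeasureTheory.integral_const_mul]
      rw [Finset.sum_eq_single k]
      · intro i _ hik
        rw [integral_eval_T_real_mul_eval_T_real_measureT_of_ne hik, mul_zero]
      · intro h
        exact absurd (Finset.mem_range.mpr (Nat.lt_succ_of_le hk)) h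
    · intro i _
      exact (integrable_measureT (by fun_prop))
  have hub : |∫ x, p.eval x * (T ℝ (k : ℤ)).eval x ∂measureT| ≤ K * Real.pi := by
    rw [integral_measureT_eq_integral_cos]
    have := intervalIntegral.norm_integral_le_of_norm_le_const (a := 0) (b := Real.pi) (C := K)
      (f := fun θ => p.eval (Real.cos θ) * (T ℝ (k : ℤ)).eval (Real.cos θ)) ?_
    · rw [Real.norm_eq_abs, sub_zero, abs_of_pos Real.pi_pos] at this
      exact this
    · intro θ _
      rw [Real.norm_eq_abs, abs_mul]
      have h1 := hK _ (Real.abs_cos_le_one θ)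
      have h2 := abs_eval_T_real_le_one (k : ℤ) (Real.abs_cos_le_one θ)
      calc _ ≤ K * 1 := mul_le_mul h1 h2 (abs_nonneg _) hK0
        _ = K := mul_one _
  rw [hinteg, abs_mul] at hub
  by_cases h0 : k = 0
  · subst h0
    have := integral_eval_T_real_mul_self_measureT_zero
    simp only [Nat.cast_zero] at hub
    rw [this, abs_of_pos Real.pi_pos] at hub
    have := le_of_mul_le_mul_right hub Real.pi_pos
    linarith
  · rw [integral_T_real_mul_self_measureT_of_ne_zero h0, abs_of_pos (half_pos Real.pi_pos)] at hub
    have : |c k| * (Real.pi / 2) ≤ (2 * K) * (Real.pi / 2) := by linarith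
    exact le_of_mul_le_mul_right this (by positivity)

/-- Weak Markov inequality on `[-1,1]`. -/
lemma markov_unit (q : ℕ) (p : ℝ[X]) (hp : p.natDegree ≤ q) (K : ℝ)
    (hK : ∀ x : ℝ, |x| ≤ 1 → |p.eval x| ≤ K) (x : ℝ) (hx : |x| ≤ 1) :
    |(derivative p).eval x| ≤ 2 * K * (q + 1 : ℝ) ^ 3 := by
  obtain ⟨c, hc, hcK⟩ := cheb_expand q p hp K hK
  have hK0 : 0 ≤ K := le_trans (abs_nonneg _) (hK 0 (by simp))
  rw [hc, derivative_sum, eval_finsetSum]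
  refine (Finset.abs_sum_le_sum_abs _ _).trans ?_
  have : ∀ k ∈ Finset.range (q + 1), |(derivative (Polynomial.C (c k) * T ℝ (k : ℤ))).eval x|
      ≤ 2 * K * (q + 1 : ℝ) ^ 2 := by
    intro k hk
    have hkq : k ≤ q := Nat.lt_succ_iff.mp (Finset.mem_range.mp hk)
    rw [derivative_C_mul, eval_mul, eval_C, abs_mul]
    have h1 := abs_iterate_derivative_T_real_le (k : ℤ) 1 hx
    simp only [Function.iterate_one] at h1
    rw [derivative_T_eval_one] at h1
    have h2 : ((k : ℤ) : ℝ) ^ 2 ≤ (q + 1 : ℝ) ^ 2 := by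
      have : (k : ℝ) ≤ q := by exact_mod_cast hkq
      push_cast
      gcongr
      linarith
    exact mul_le_mul (hcK k hkq) (h1.trans (by exact_mod_cast h2)) (abs_nonneg _) (by positivity)
  refine (Finset.sum_le_sum this).trans ?_
  rw [Finset.sum_const, Finset.card_range, nsmul_eq_mul]
  push_cast
  apply le_of_eq
  ring

/-- Weak Markov inequality on `[0,b]`. -/
lemma markov_interval (q : ℕ) (p : ℝ[X]) (hp : p.natDegree ≤ q) (K b : ℝ) (hb : 0 < b)
    (hK : ∀ x : ℝ, 0 ≤ x → x ≤ b → |p.eval x| ≤ K) (x : ℝ) (hx0 : 0 ≤ x) (hxb : x ≤ b) :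
    |(derivative p).eval x| ≤ 4 / b * K * (q + 1 : ℝ) ^ 3 := by
  set l : ℝ[X] := Polynomial.C (b / 2) * X + Polynomial.C (b / 2) with hl
  have hld : (p.comp l).natDegree ≤ q := by
    rw [natDegree_comp]
    have : l.natDegree ≤ 1 := natDegree_linear_le
    nlinarith
  have hev : ∀ y, l.eval y = b / 2 * y + b / 2 := by intro y; simp [hl]
  have hm := markov_unit q (p.comp l) hld K (by
    intro y hy
    rw [abs_le] at hy
    rw [eval_comp, hev]
    apply hK <;> nlinarith) (2 * x / b - 1) (by
      rw [abs_le]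
      constructor
      · have : 0 ≤ 2 * x / b := by positivity
        linarith
      · have : 2 * x / b ≤ 2 := by rw [div_le_iff₀ hb]; linarith
        linarith)
  rw [derivative_comp, eval_mul, eval_comp, hev] at hm
  have h1 : b / 2 * (2 * x / b - 1) + b / 2 = x := by field_simp; ring
  have h2 : (derivative l).eval (2 * x / b - 1) = b / 2 := by simp [hl]
  rw [h1, h2, abs_mul, abs_of_pos (by positivity : 0 < b / 2)] at hm
  have : |(derivative p).eval x| = 2 / b * (b / 2 * |(derivative p).eval x|) := by field_simp
  rw [this]
  calc _ ≤ 2 / b * (2 * K * (q + 1 : ℝ) ^ 3) := by gcongr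
    _ = _ := by ring

lemma poly_lip (p : ℝ[X]) (D b : ℝ) (hD : ∀ x : ℝ, 0 ≤ x → x ≤ b → |(derivative p).eval x| ≤ D)
    (x y : ℝ) (hx : 0 ≤ x) (hxb : x ≤ b) (hy : 0 ≤ y) (hyb : y ≤ b) :
    |p.eval x - p.eval y| ≤ D * |x - y| := by
  have := Convex.norm_image_sub_le_of_norm_deriv_le (f := fun x => p.eval x) (C := D)
    (s := Set.Icc 0 b) (x := y) (y := x) (fun z _ => p.differentiable.differentiableAt)
    (fun z hz => by rw [Polynomial.deriv]; exact hD z hz.1 hz.2) (convex_Icc 0 b)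
    ⟨hy, hyb⟩ ⟨hx, hxb⟩
  simpa using this

/-- Discrete nodes: every point of `[0, 1/(2L)]` is close to a node `1/(2j)`. -/
lemma near_node (L : ℕ) (hL : 1 ≤ L) (x : ℝ) (hx0 : 0 ≤ x) (hxb : x ≤ 1 / (2 * L)) :
    ∃ j : ℕ, L ≤ j ∧ j ≤ L ^ 2 ∧ |x - 1 / (2 * j)| ≤ 1 / (2 * (L : ℝ) ^ 2) := by
  have hLr : (1 : ℝ) ≤ L := by exact_mod_cast hL
  by_cases hx : x ≤ 1 / (2 * (L : ℝ) ^ 2)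
  · refine ⟨L ^ 2, by nlinarith, le_rfl, ?_⟩
    push_cast
    rw [abs_le]
    constructor <;> linarith
  · push Not at hx
    have hxpos : 0 < x := lt_trans (by positivity) hx
    set j := ⌊1 / (2 * x)⌋₊ with hj
    have h1 : (j : ℝ) ≤ 1 / (2 * x) := Nat.floor_le (by positivity)
    have h2 : 1 / (2 * x) < j + 1 := Nat.lt_floor_add_one _
    have hLj : L ≤ j := by
      apply Nat.le_floor
      rw [le_div_iff₀ (by positivity)]
      rw [le_div_iff₀ (by positivity)] at hxb
      linarith
    have hjr : (L : ℝ) ≤ j := by exact_mod_cast hLj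
    have hjpos : (0 : ℝ) < j := by linarith
    refine ⟨j, hLj, ?_, ?_⟩
    · have : (j : ℝ) ≤ (L : ℝ) ^ 2 := by
        refine h1.trans ?_
        rw [div_le_iff₀ (by positivity)]
        rw [div_lt_iff₀ (by positivity)] at hx
        linarith
      exact_mod_cast this
    · have h3 : x ≤ 1 / (2 * j) := by
        rw [le_div_iff₀ (by positivity)]
        rw [le_div_iff₀ (by positivity)] at h1
        linarith
      have h4 : 1 / (2 * ((j : ℝ) + 1)) ≤ x := by
        rw [div_le_iff₀ (by positivity)]
        rw [div_lt_iff₀ (by positivity)] at h2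
        linarith
      have h5 : 1 / (2 * (j : ℝ)) - 1 / (2 * ((j : ℝ) + 1)) ≤ 1 / (2 * (L : ℝ) ^ 2) := by
        have : 1 / (2 * (j : ℝ)) - 1 / (2 * ((j : ℝ) + 1)) = 1 / (2 * (j * (j + 1))) := by
          field_simp; ring
        rw [this]
        apply one_div_le_one_div_of_le (by positivity)
        nlinarith
      rw [abs_le]
      constructor
      · linarith
      · have : 0 ≤ 1 / (2 * (L : ℝ) ^ 2) := by positivity
        linarith

/-- From bounds at the nodes `1/(2j)`, control of the increments of a polynomial near `0`. -/
lemma node_bound (q L : ℕ) (p : ℝ[X]) (hp : p.natDegree ≤ q) (hL : 8 * (q + 1) ^ 3 ≤ L) (B : ℝ)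
    (hB : ∀ j : ℕ, L ≤ j → j ≤ L ^ 2 → |p.eval (1 / (2 * (j : ℝ)))| ≤ B) :
    (∀ x : ℝ, 0 ≤ x → x ≤ 1 / (2 * L) → |p.eval x| ≤ 2 * B) ∧
    (∀ x : ℝ, 0 ≤ x → x ≤ 1 / (2 * L) →
      |p.eval x - p.eval 0| ≤ 16 * L * B * (q + 1 : ℝ) ^ 3 * x) := by
  have hL1 : 1 ≤ L := le_trans (by have : 0 < (q + 1) ^ 3 := by positivity
                                   omega) hL
  have hLr : (1 : ℝ) ≤ L := by exact_mod_cast hL1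
  have hLR : 8 * (q + 1 : ℝ) ^ 3 ≤ L := by exact_mod_cast hL
  set b : ℝ := 1 / (2 * L) with hb
  have hbpos : 0 < b := by positivity
  obtain ⟨x0, hx0, hmax⟩ := (isCompact_Icc (a := (0 : ℝ)) (b := b)).exists_isMaxOn
    ⟨0, by simp [hbpos.le]⟩ (f := fun x => |p.eval x|) (by fun_prop)
  set K := |p.eval x0| with hKdef
  have hK : ∀ x : ℝ, 0 ≤ x → x ≤ b → |p.eval x| ≤ K := fun x h1 h2 => hmax ⟨h1, h2⟩
  have hK0 : 0 ≤ K := abs_nonneg _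
  have hD := markov_interval q p hp K b hbpos hK
  have hKB : K ≤ 2 * B := by
    obtain ⟨j, hj1, hj2, hj3⟩ := near_node L hL1 x0 hx0.1 hx0.2
    have hjr : (L : ℝ) ≤ j := by exact_mod_cast hj1
    have hl := poly_lip p _ b hD x0 (1 / (2 * j)) hx0.1 hx0.2 (by positivity)
      (by rw [hb]; apply one_div_le_one_div_of_le <;> nlinarith)
    have h1 := hB j hj1 hj2
    have h2 : K ≤ |p.eval x0 - p.eval (1 / (2 * (j : ℝ)))| + |p.eval (1 / (2 * (j : ℝ)))| := by
      have := abs_add_le (p.eval x0 - p.eval (1 / (2 * (j : ℝ)))) (p.eval (1 / (2 * (j : ℝ))))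
      simpa [hKdef] using this
    have h3 : 4 / b * K * (q + 1 : ℝ) ^ 3 * |x0 - 1 / (2 * j)| ≤ K / 2 := by
      calc _ ≤ 4 / b * K * (q + 1 : ℝ) ^ 3 * (1 / (2 * (L : ℝ) ^ 2)) := by gcongr
        _ = K * (4 * (q + 1 : ℝ) ^ 3) / L := by rw [hb]; field_simp; try ring
        _ ≤ K * (L / 2) / L := by gcongr; linarith
        _ = K / 2 := by field_simp
    linarith
  refine ⟨fun x h1 h2 => (hK x h1 h2).trans hKB, fun x h1 h2 => ?_⟩
  have hl := poly_lip p _ b hD x 0 h1 h2 le_rfl hbpos.le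
  rw [sub_zero, abs_of_nonneg h1] at hl
  refine hl.trans ?_
  have : 4 / b = 8 * L := by rw [hb, div_div_eq_mul_div]; ring
  rw [this]
  calc _ ≤ 8 * L * (2 * B) * (q + 1 : ℝ) ^ 3 * x := by gcongr
    _ = _ := by ring

end PartA
end Fried

namespace Fried
section PartA2
open Polynomial Finset

lemma exp_sub_one_le (u : ℝ) (h0 : 0 ≤ u) (h1 : u ≤ 1) : Real.exp u - 1 ≤ u + u ^ 2 := by
  have := Real.abs_exp_sub_one_sub_id_le (x := u) (by rw [abs_of_nonneg h0]; exact h1)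
  have := (abs_le.mp this).2
  linarith

lemma bin_tail (N : ℕ) (s s0 t : ℝ) (hs : 0 ≤ s) (hs0 : s ≤ s0) (ht : s0 < t) (ht1 : t ≤ 1) :
    ∑ k ∈ (range (N + 1)).filter (fun k : ℕ => t * N ≤ k),
      (N.choose k : ℝ) * s ^ k * (1 - s) ^ (N - k) ≤ Real.exp (-((t - s0) / 2) ^ 2) ^ N := by
  set u := (t - s0) / 2 with hu
  have hu0 : 0 < u := by rw [hu]; linarith
  have hu1 : u ≤ 1 := by rw [hu]; linarith
  have h1 : ∑ k ∈ (range (N + 1)).filter (fun k : ℕ => t * N ≤ k),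
      (N.choose k : ℝ) * s ^ k * (1 - s) ^ (N - k)
      ≤ ∑ k ∈ range (N + 1), Real.exp (-(u * (t * N))) *
          ((Real.exp u * s) ^ k * (1 - s) ^ (N - k) * (N.choose k : ℝ)) := by
    rw [Finset.sum_filter]
    apply Finset.sum_le_sum
    intro k hk
    have hpos : 0 ≤ (N.choose k : ℝ) * s ^ k * (1 - s) ^ (N - k) := by
      have : 0 ≤ 1 - s := by linarith
      positivity
    have : Real.exp (-(u * (t * N))) *
          ((Real.exp u * s) ^ k * (1 - s) ^ (N - k) * (N.choose k : ℝ))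
        = Real.exp (u * (k - t * N)) * ((N.choose k : ℝ) * s ^ k * (1 - s) ^ (N - k)) := by
      rw [mul_pow, ← Real.exp_nat_mul]
      rw [show u * (k - t * N) = -(u * (t * N)) + k * u by ring, Real.exp_add]
      ring
    rw [this]
    split_ifs with h
    · have : 1 ≤ Real.exp (u * (k - t * N)) := by
        apply Real.one_le_exp
        apply mul_nonneg hu0.le
        linarith
      nlinarith
    · positivity
  refine h1.trans ?_
  rw [← Finset.mul_sum, ← add_pow]
  have h2 : Real.exp u * s + (1 - s) ≤ Real.exp ((u + u ^ 2) * s0) := by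
    have h3 := exp_sub_one_le u hu0.le hu1
    calc Real.exp u * s + (1 - s) = (Real.exp u - 1) * s + 1 := by ring
      _ ≤ (u + u ^ 2) * s0 + 1 := by
          have : 0 ≤ s0 := hs.trans hs0
          have : (Real.exp u - 1) * s ≤ (u + u ^ 2) * s0 := by
            apply mul_le_mul h3 hs0 hs (by positivity)
          linarith
      _ ≤ _ := Real.add_one_le_exp _
  have h4 : 0 ≤ Real.exp u * s + (1 - s) := by
    have : 0 ≤ 1 - s := by linarith
    positivity
  calc _ ≤ Real.exp (-(u * (t * N))) * Real.exp ((u + u ^ 2) * s0) ^ N := by gcongr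
    _ = Real.exp (-(u * t) + (u + u ^ 2) * s0) ^ N := by
        rw [← Real.exp_nat_mul, ← Real.exp_nat_mul, ← Real.exp_add]
        congr 1; ring
    _ ≤ _ := by
        gcongr
        have : t = s0 + 2 * u := by rw [hu]; ring
        have hs01 : s0 ≤ 1 := by linarith
        rw [this]
        nlinarith

/-- The Bernstein type test polynomials. -/
lemma test_poly (R a b : ℝ) (hR : 0 < R) (ha : -R ≤ a) (hab : a < b) (hbR : b ≤ R) :
    ∃ θ : ℝ, 0 < θ ∧ θ < 1 ∧ ∀ N : ℕ, ∃ p : ℝ[X], p.natDegree ≤ N ∧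
      (∀ x, -R ≤ x → x ≤ R → 0 ≤ p.eval x ∧ p.eval x ≤ 1) ∧
      (∀ x, b ≤ x → x ≤ R → 1 - θ ^ N ≤ p.eval x) ∧
      (∀ x, -R ≤ x → x ≤ a → p.eval x ≤ θ ^ N) := by
  set t := ((a + b) / 2 + R) / (2 * R) with ht
  set d := (b - a) / (4 * R) with hd
  have hdpos : 0 < d := by rw [hd]; apply div_pos <;> linarith
  refine ⟨Real.exp (-(d / 2) ^ 2), Real.exp_pos _, ?_, ?_⟩
  · rw [Real.exp_lt_one_iff]
    have : 0 < (d / 2) ^ 2 := by positivity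
    linarith
  intro N
  set l : ℝ[X] := Polynomial.C (1 / (2 * R)) * X + Polynomial.C (1 / 2) with hl
  have hev : ∀ x, l.eval x = (x + R) / (2 * R) := by
    intro x; simp [hl]; field_simp
  set p : ℝ[X] := ∑ k ∈ (range (N + 1)).filter (fun k : ℕ => t * N ≤ k),
    Polynomial.C (N.choose k : ℝ) * l ^ k * (1 - l) ^ (N - k) with hp
  have hpe : ∀ x, p.eval x = ∑ k ∈ (range (N + 1)).filter (fun k : ℕ => t * N ≤ k),
      (N.choose k : ℝ) * ((x + R) / (2 * R)) ^ k * (1 - (x + R) / (2 * R)) ^ (N - k) := by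
    intro x
    rw [hp, eval_finsetSum]
    apply Finset.sum_congr rfl
    intro k _
    rw [eval_mul, eval_mul, eval_pow, eval_pow, eval_sub, hev, eval_C, eval_one]
  have hfull : ∀ s : ℝ, ∑ k ∈ range (N + 1), (N.choose k : ℝ) * s ^ k * (1 - s) ^ (N - k) = 1 := by
    intro s
    have := add_pow s (1 - s) N
    rw [add_sub_cancel, one_pow] at this
    refine Eq.trans ?_ this.symm
    apply Finset.sum_congr rfl
    intro k _
    ring
  have hsplit : ∀ s : ℝ, ∑ k ∈ (range (N + 1)).filter (fun k : ℕ => t * N ≤ k),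
      (N.choose k : ℝ) * s ^ k * (1 - s) ^ (N - k) +
      ∑ k ∈ (range (N + 1)).filter (fun k : ℕ => ¬ t * N ≤ k),
      (N.choose k : ℝ) * s ^ k * (1 - s) ^ (N - k) = 1 := by
    intro s
    rw [Finset.sum_filter_add_sum_filter_not, hfull]
  have hrange : ∀ x, -R ≤ x → x ≤ R → 0 ≤ (x + R) / (2 * R) ∧ (x + R) / (2 * R) ≤ 1 := by
    intro x h1 h2
    constructor
    · apply div_nonneg <;> linarith
    · rw [div_le_one (by linarith)]; linarith
  have hterm : ∀ s : ℝ, 0 ≤ s → s ≤ 1 → ∀ k : ℕ, 0 ≤ (N.choose k : ℝ) * s ^ k * (1 - s) ^ (N - k) := by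
    intro s h1 h2 k
    have : 0 ≤ 1 - s := by linarith
    positivity
  have ht1 : t ≤ 1 := by rw [ht, div_le_one (by linarith)]; linarith
  have ht0 : 0 ≤ t := by rw [ht]; apply div_nonneg <;> linarith
  refine ⟨p, ?_, ?_, ?_, ?_⟩
  · rw [hp]
    apply natDegree_sum_le_of_forall_le
    intro k hk
    have hk' : k ≤ N := by simp at hk; omega
    have hl1 : l.natDegree ≤ 1 := natDegree_linear_le
    have h1l : (1 - l).natDegree ≤ 1 := (natDegree_sub_le _ _).trans (by simp [hl1])
    calc _ ≤ (0 + k * 1) + (N - k) * 1 := by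
          refine natDegree_mul_le.trans (add_le_add (natDegree_mul_le.trans (add_le_add ?_ ?_)) ?_)
          · simp
          · exact natDegree_pow_le.trans (Nat.mul_le_mul_left _ hl1)
          · exact natDegree_pow_le.trans (Nat.mul_le_mul_left _ h1l)
      _ ≤ N := by omega
  · intro x h1 h2
    obtain ⟨h3, h4⟩ := hrange x h1 h2
    rw [hpe]
    constructor
    · exact Finset.sum_nonneg fun k _ => hterm _ h3 h4 k
    · have hs := hsplit ((x + R) / (2 * R))
      have := Finset.sum_nonneg (s := (range (N + 1)).filter (fun k : ℕ => ¬ t * N ≤ k))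
        (fun k _ => hterm _ h3 h4 k)
      linarith
  · intro x h1 h2
    obtain ⟨h3, h4⟩ := hrange x (by linarith) h2
    rw [hpe]
    have hs := hsplit ((x + R) / (2 * R))
    set s := (x + R) / (2 * R) with hsd
    have htail := bin_tail N (1 - s) (1 - t - d) (1 - t) (by linarith) (by
      have : t + d ≤ s := by
        rw [ht, hd, hsd, div_add_div _ _ (by positivity) (by positivity),
          div_le_div_iff₀ (by positivity) (by positivity)]
        have : 0 ≤ (x - b) * R ^ 2 := by apply mul_nonneg <;> nlinarith
        nlinarith
      linarith) (by linarith) (by linarith)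
    rw [show (1 - t - (1 - t - d)) = d by ring] at htail
    have hle : ∑ k ∈ (range (N + 1)).filter (fun k : ℕ => ¬ t * N ≤ k),
      (N.choose k : ℝ) * s ^ k * (1 - s) ^ (N - k) ≤
      ∑ k ∈ (range (N + 1)).filter (fun k : ℕ => (1 - t) * N ≤ k),
      (N.choose k : ℝ) * (1 - s) ^ k * (1 - (1 - s)) ^ (N - k) := by
      rw [Finset.sum_filter, Finset.sum_filter, ← Finset.sum_range_reflect]
      apply Finset.sum_le_sum
      intro k hk
      have hk' : k ≤ N := by simp at hk; omega
      rw [show N + 1 - 1 - k = N - k by omega, Nat.choose_symm hk', Nat.cast_sub hk',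
        show N - (N - k) = k by omega, sub_sub_cancel]
      have hs1 : 0 ≤ 1 - s := by linarith
      by_cases h5 : t * (N : ℝ) ≤ N - k
      · rw [if_neg (not_not.mpr h5)]
        split_ifs
        · positivity
        · exact le_rfl
      · rw [if_pos h5, if_pos (by push Not at h5; nlinarith)]
        apply le_of_eq; ring
    linarith
  · intro x h1 h2
    obtain ⟨h3, h4⟩ := hrange x h1 (by linarith)
    rw [hpe]
    have htail := bin_tail N ((x + R) / (2 * R)) (t - d) t h3 (by
        rw [ht, hd, div_sub_div _ _ (by positivity) (by positivity),
          div_le_div_iff₀ (by positivity) (by positivity)]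
        have : 0 ≤ (a - x) * R ^ 2 := by apply mul_nonneg <;> nlinarith
        nlinarith) (by linarith) ht1
    rw [show (t - (t - d)) = d by ring] at htail
    exact htail

end PartA2
end Fried

namespace Fried
section PartB
open Finset

/-- Perfect matchings, encoded as fixed-point-free involutions. -/
noncomputable def PM (H : Type*) [Fintype H] : Finset (Equiv.Perm H) :=
  univ.filter (fun σ => ∀ x, σ x ≠ x ∧ σ (σ x) = x)

lemma mem_PM {H : Type*} [Fintype H] {σ : Equiv.Perm H} :
    σ ∈ PM H ↔ ∀ x, σ x ≠ x ∧ σ (σ x) = x := by simp [PM]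

/-- Matchings that agree with `τ` on `S`. -/
noncomputable def PMon {H : Type*} [Fintype H] (S : Finset H) (τ : H → H) : Finset (Equiv.Perm H) :=
  (PM H).filter (fun σ => ∀ x ∈ S, σ x = τ x)

/-- `τ` restricted to `S` is a fixed-point-free involution of `S`. -/
def IsPart {H : Type*} (S : Finset H) (τ : H → H) : Prop :=
  ∀ x ∈ S, τ x ∈ S ∧ τ x ≠ x ∧ τ (τ x) = x

variable {H : Type*} [Fintype H]

lemma conj_swap_mem (S : Finset H) (τ : H → H) (hS : IsPart S τ) (x y y' : H)
    (hy : y ∉ S) (hy' : y' ∉ S) (hyx : y ≠ x) (hyx' : y' ≠ x) (σ : Equiv.Perm H)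
    (hσ : σ ∈ (PMon S τ).filter (fun σ => σ x = y)) :
    Equiv.swap y y' * σ * Equiv.swap y y' ∈ (PMon S τ).filter (fun σ => σ x = y') := by
  simp only [PMon, mem_filter, mem_PM] at hσ ⊢
  obtain ⟨⟨h1, h2⟩, h3⟩ := hσ
  refine ⟨⟨?_, ?_⟩, ?_⟩
  · intro z
    constructor
    · intro h
      simp only [Equiv.Perm.mul_apply] at h
      apply (h1 (Equiv.swap y y' z)).1
      have := congrArg (Equiv.swap y y') h
      rwa [Equiv.swap_apply_self] at this
    · simp only [Equiv.Perm.mul_apply, Equiv.swap_apply_self]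
      rw [(h1 _).2, Equiv.swap_apply_self]
  · intro z hz
    have hz1 : Equiv.swap y y' z = z :=
      Equiv.swap_apply_of_ne_of_ne (fun h => hy (h ▸ hz)) (fun h => hy' (h ▸ hz))
    have hz2 : Equiv.swap y y' (τ z) = τ z :=
      Equiv.swap_apply_of_ne_of_ne (fun h => hy (h ▸ (hS z hz).1)) (fun h => hy' (h ▸ (hS z hz).1))
    simp only [Equiv.Perm.mul_apply]
    rw [hz1, h2 z hz, hz2]
  · simp only [Equiv.Perm.mul_apply]
    rw [Equiv.swap_apply_of_ne_of_ne hyx.symm hyx'.symm, h3, Equiv.swap_apply_left]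

lemma card_PMon_eq (S : Finset H) (τ : H → H) (hS : IsPart S τ) (x y y' : H)
    (hy : y ∉ S) (hy' : y' ∉ S) (hyx : y ≠ x) (hyx' : y' ≠ x) :
    ((PMon S τ).filter (fun σ => σ x = y)).card = ((PMon S τ).filter (fun σ => σ x = y')).card := by
  apply Finset.card_bij' (fun σ _ => Equiv.swap y y' * σ * Equiv.swap y y')
    (fun σ _ => Equiv.swap y y' * σ * Equiv.swap y y')
  · intro σ hσ; exact conj_swap_mem S τ hS x y y' hy hy' hyx hyx' σ hσ
  · intro σ hσ
    have := conj_swap_mem S τ hS x y' y hy' hy hyx' hyx σ hσ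
    rwa [Equiv.swap_comm y' y] at this
  · intro σ _
    ext z; simp
  · intro σ _
    ext z; simp

lemma card_PMon_step (S : Finset H) (τ : H → H) (hS : IsPart S τ) (x y : H)
    (hx : x ∉ S) (hy : y ∉ S) (hyx : y ≠ x) :
    ((PMon S τ).card : ℝ) = ((Fintype.card H : ℝ) - 1 - S.card) *
      ((PMon S τ).filter (fun σ => σ x = y)).card := by
  set Y := (univ \ (insert x S) : Finset H) with hY
  have hmaps : ∀ σ ∈ PMon S τ, σ x ∈ Y := by
    intro σ hσ
    simp only [PMon, mem_filter, mem_PM] at hσ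
    simp only [hY, mem_sdiff, mem_univ, true_and, mem_insert, not_or]
    refine ⟨(hσ.1 x).1, fun h => hx ?_⟩
    have h1 := hσ.2 _ h
    rw [(hσ.1 x).2] at h1
    rw [h1]
    exact (hS _ h).1
  have h1 := Finset.card_eq_sum_card_fiberwise hmaps
  have h2 : ∀ z ∈ Y, ((PMon S τ).filter (fun σ => σ x = z)).card
      = ((PMon S τ).filter (fun σ => σ x = y)).card := by
    intro z hz
    simp only [hY, mem_sdiff, mem_univ, true_and, mem_insert, not_or] at hz
    exact card_PMon_eq S τ hS x z y hz.2 hy hz.1 hyx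
  rw [Finset.sum_congr rfl h2, Finset.sum_const, smul_eq_mul] at h1
  have h3 : Y.card + (S.card + 1) = Fintype.card H := by
    rw [hY, Finset.card_sdiff_of_subset (subset_univ _), card_univ, card_insert_of_notMem hx]
    have := Finset.card_le_univ (insert x S)
    rw [card_insert_of_notMem hx] at this
    omega
  rw [h1]
  push_cast
  rw [← h3]
  push_cast
  ring

/-- The number of matchings extending a partial matching. -/
lemma card_PMon (τ : H → H) : ∀ e : ℕ, ∀ S : Finset H, IsPart S τ → (S.card = 2 * e ∨ S.card = 2 * e + 1) →
    S.card = 2 * e ∧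
    ((PMon S τ).card : ℝ) * ∏ j ∈ range e, ((Fintype.card H : ℝ) - 1 - 2 * j) = (PM H).card := by
  intro e
  induction e with
  | zero =>
    intro S hS hc
    rcases hc with hc | hc
    · have : S = ∅ := by simpa using hc
      subst this
      simp [PMon]
    · exfalso
      rw [show 2 * 0 + 1 = 1 by rfl, card_eq_one] at hc
      obtain ⟨a, rfl⟩ := hc
      have := hS a (by simp)
      simp at this
      exact this.2.1 this.1
  | succ e ih =>
    intro S hS hc
    have hne : S.Nonempty := by
      rw [← Finset.card_pos]; omega
    obtain ⟨x, hx⟩ := hne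
    obtain ⟨hx1, hx2, hx3⟩ := hS x hx
    set S' := (S.erase x).erase (τ x) with hS'
    have hmem : ∀ z, z ∈ S' ↔ z ≠ τ x ∧ z ≠ x ∧ z ∈ S := by intro z; simp [hS']
    have hP : IsPart S' τ := by
      intro z hz
      rw [hmem] at hz
      obtain ⟨h1, h2, h3⟩ := hS z hz.2.2
      refine ⟨?_, h2, h3⟩
      rw [hmem]
      refine ⟨fun h => hz.2.1 ?_, fun h => hz.1 ?_, h1⟩
      · rw [← h3, h, hx3]
      · rw [← h3, h]
    have hcard : S'.card + 2 = S.card := by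
      rw [hS', card_erase_of_mem (by simp [hx1, hx2]), card_erase_of_mem hx]
      have : 2 ≤ S.card := by omega
      omega
    obtain ⟨h1, h2⟩ := ih S' hP (by omega)
    refine ⟨by omega, ?_⟩
    have hstep := card_PMon_step S' τ hP x (τ x) (by rw [hmem]; simp) (by rw [hmem]; simp) hx2
    have heq : (PMon S' τ).filter (fun σ => σ x = τ x) = PMon S τ := by
      ext σ
      simp only [PMon, mem_filter, mem_PM]
      constructor
      · rintro ⟨⟨ha, hb⟩, hc⟩
        refine ⟨ha, fun z hz => ?_⟩
        by_cases hzx : z = x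
        · rw [hzx, hc]
        by_cases hzx' : z = τ x
        · rw [hzx', hx3, ← hc, (ha x).2]
        · exact hb z ((hmem z).mpr ⟨hzx', hzx, hz⟩)
      · rintro ⟨ha, hb⟩
        exact ⟨⟨ha, fun z hz => hb z ((hmem z).mp hz).2.2⟩, hb x hx⟩
    rw [heq] at hstep
    rw [← h2, hstep, prod_range_succ, h1]
    push_cast
    ring

lemma card_PMon' (τ : H → H) (S : Finset H) (hS : IsPart S τ) :
    S.card = 2 * (S.card / 2) ∧
    ((PMon S τ).card : ℝ) * ∏ j ∈ range (S.card / 2), ((Fintype.card H : ℝ) - 1 - 2 * j)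
      = (PM H).card :=
  card_PMon τ (S.card / 2) S hS (by omega)

/-- Perfect matchings exist. -/
lemma PM_nonempty (h : Even (Fintype.card H)) : (PM H).Nonempty := by
  obtain ⟨t, ht⟩ := h
  have e : H ≃ Fin t × Bool := Fintype.equivOfCardEq (by simp [ht]; ring)
  refine ⟨(e.trans ((Equiv.refl (Fin t)).prodCongr Equiv.boolNot)).trans e.symm, ?_⟩
  rw [mem_PM]
  intro x
  constructor
  · intro hx
    have := congrArg e hx
    simp only [Equiv.trans_apply, Equiv.apply_symm_apply] at this
    have := congrArg Prod.snd this
    simp at this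
  · have : ∀ p : Fin t × Bool,
        Prod.map id (⇑Equiv.boolNot) (Prod.map id (⇑Equiv.boolNot) p) = p := by
      rintro ⟨a, b⟩; simp
    simp [this]

end PartB
end Fried

namespace Fried
section PartC
open Finset Matrix

variable {V : Type*} [Fintype V] [DecidableEq V] {r : ℕ}

/-- Half-edge / vertex incidence. -/
noncomputable def Sm (V : Type*) [DecidableEq V] (r : ℕ) : Matrix (V × Fin r) V ℝ :=
  Matrix.of fun h v => if h.1 = v then 1 else 0

noncomputable def Pm (σ : Equiv.Perm (V × Fin r)) : Matrix (V × Fin r) (V × Fin r) ℝ :=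
  Matrix.of fun h h' => if σ h = h' then 1 else 0

/-- The adjacency matrix of the multigraph of a matching. -/
noncomputable def Am (σ : Equiv.Perm (V × Fin r)) : Matrix V V ℝ := (Sm V r)ᵀ * Pm σ * Sm V r

/-- The non-backtracking matrix. -/
noncomputable def Bm (σ : Equiv.Perm (V × Fin r)) : Matrix (V × Fin r) (V × Fin r) ℝ :=
  Pm σ * (Sm V r * (Sm V r)ᵀ - 1)

lemma SmT_Sm : (Sm V r)ᵀ * Sm V r = (r : ℝ) • (1 : Matrix V V ℝ) := by
  ext u v
  simp only [Sm, Matrix.mul_apply, Matrix.transpose_apply, Matrix.of_apply, Matrix.smul_apply,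
    Matrix.one_apply, Fintype.sum_prod_type]
  by_cases h : u = v
  · subst h; simp
  · simp [h]
    intro h'; exact absurd h'.symm h

lemma Pm_mul (σ : Equiv.Perm (V × Fin r)) {ι : Type*} (M : Matrix (V × Fin r) ι ℝ) (x : V × Fin r)
    (y : ι) : (Pm σ * M) x y = M (σ x) y := by
  simp [Pm, Matrix.mul_apply]

lemma Pm_sq (σ : Equiv.Perm (V × Fin r)) (hσ : σ ∈ PM (V × Fin r)) : Pm σ * Pm σ = 1 := by
  rw [mem_PM] at hσ
  ext x y
  rw [Pm_mul]
  simp [Pm, (hσ x).2, Matrix.one_apply]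

lemma trace_Pm (σ : Equiv.Perm (V × Fin r)) (hσ : σ ∈ PM (V × Fin r)) : (Pm σ).trace = 0 := by
  rw [mem_PM] at hσ
  simp [Matrix.trace, Pm, (fun x y => (hσ (x, y)).1)]

section alg

lemma Bm_Sm (σ : Equiv.Perm (V × Fin r)) : Bm σ * Sm V r = ((r : ℝ) - 1) • (Pm σ * Sm V r) := by
  rw [Bm, Matrix.mul_assoc, Matrix.sub_mul, Matrix.mul_assoc, SmT_Sm, Matrix.one_mul,
    Matrix.mul_smul, Matrix.mul_one, Matrix.mul_sub, Matrix.mul_smul, sub_smul, one_smul]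

lemma Bm_Pm_Sm (σ : Equiv.Perm (V × Fin r)) (hσ : σ ∈ PM (V × Fin r)) : Bm σ * (Pm σ * Sm V r) = Pm σ * Sm V r * Am σ - Sm V r := by
  rw [Bm, Am, Matrix.mul_sub, Matrix.mul_one, Matrix.sub_mul, ← Matrix.mul_assoc (Pm σ) (Pm σ),
    Pm_sq σ hσ, Matrix.one_mul]
  simp only [Matrix.mul_assoc]

/-- Non-backtracking walk matrices. -/
lemma Ak_rec (σ : Equiv.Perm (V × Fin r)) (hσ : σ ∈ PM (V × Fin r)) (k : ℕ) : (Sm V r)ᵀ * Bm σ ^ (k + 2) * (Pm σ * Sm V r) =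
    (Sm V r)ᵀ * Bm σ ^ (k + 1) * (Pm σ * Sm V r) * Am σ
     - ((r : ℝ) - 1) • ((Sm V r)ᵀ * Bm σ ^ k * (Pm σ * Sm V r)) := by
  rw [pow_succ (Bm σ) (k + 1), ← Matrix.mul_assoc (Sm V r)ᵀ, Matrix.mul_assoc _ (Bm σ), Bm_Pm_Sm σ hσ,
    Matrix.mul_sub, ← Matrix.mul_assoc]
  congr 1
  rw [pow_succ, ← Matrix.mul_assoc (Sm V r)ᵀ, Matrix.mul_assoc _ (Bm σ), Bm_Sm σ, Matrix.mul_smul]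

lemma Ak_zero (σ : Equiv.Perm (V × Fin r)) : (Sm V r)ᵀ * Bm σ ^ 0 * (Pm σ * Sm V r) = Am σ := by
  rw [pow_zero, Matrix.mul_one, Am, Matrix.mul_assoc]

lemma Ak_one (σ : Equiv.Perm (V × Fin r)) (hσ : σ ∈ PM (V × Fin r)) : (Sm V r)ᵀ * Bm σ ^ 1 * (Pm σ * Sm V r) = Am σ * Am σ - (r : ℝ) • 1 := by
  rw [pow_one, Matrix.mul_assoc, Bm_Pm_Sm σ hσ, Matrix.mul_sub, SmT_Sm, ← Matrix.mul_assoc,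
    ← Matrix.mul_assoc]
  rfl

lemma Pm_J (σ : Equiv.Perm (V × Fin r)) : Pm σ * (Sm V r * (Sm V r)ᵀ) = Bm σ + Pm σ := by
  rw [Bm, Matrix.mul_sub, Matrix.mul_one]; abel

lemma tr_Ak (σ : Equiv.Perm (V × Fin r)) (k : ℕ) : ((Sm V r)ᵀ * Bm σ ^ k * (Pm σ * Sm V r)).trace =
    (Bm σ ^ (k + 1)).trace + (Bm σ ^ k * Pm σ).trace := by
  rw [Matrix.mul_assoc, Matrix.trace_mul_comm, Matrix.mul_assoc, Matrix.mul_assoc, Pm_J σ,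
    Matrix.mul_add, Matrix.trace_add, ← pow_succ]

lemma tr_J : (Sm V r * (Sm V r)ᵀ).trace = (r : ℝ) * Fintype.card V := by
  rw [Matrix.trace_mul_comm, SmT_Sm, Matrix.trace_smul, Matrix.trace_one, smul_eq_mul]

lemma tr_BPm_one (σ : Equiv.Perm (V × Fin r)) (hσ : σ ∈ PM (V × Fin r)) : (Bm σ ^ 1 * Pm σ).trace = 0 := by
  rw [pow_one, Matrix.trace_mul_comm, Bm, ← Matrix.mul_assoc, Pm_sq σ hσ, Matrix.one_mul,
    Matrix.trace_sub, tr_J, Matrix.trace_one, Fintype.card_prod, Fintype.card_fin]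
  push_cast; ring

lemma J_J1 : (Sm V r * (Sm V r)ᵀ) * (Sm V r * (Sm V r)ᵀ - 1)
    = ((r : ℝ) - 1) • (Sm V r * (Sm V r)ᵀ) := by
  rw [Matrix.mul_sub, Matrix.mul_one, Matrix.mul_assoc, ← Matrix.mul_assoc (Sm V r)ᵀ, SmT_Sm,
    Matrix.smul_mul, Matrix.one_mul, Matrix.mul_smul, sub_smul, one_smul]

lemma tr_BPm (σ : Equiv.Perm (V × Fin r)) (hσ : σ ∈ PM (V × Fin r)) (k : ℕ) : (Bm σ ^ (k + 2) * Pm σ).trace =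
    ((r : ℝ) - 1) * ((Sm V r)ᵀ * Bm σ ^ k * (Pm σ * Sm V r)).trace - (Bm σ ^ (k + 1)).trace := by
  set J := Sm V r * (Sm V r)ᵀ with hJ
  have h1 : Bm σ ^ (k + 2) * Pm σ = Bm σ ^ (k + 1) * Pm σ * J * Pm σ - Bm σ ^ (k + 1) := by
    rw [pow_succ _ (k + 1)]
    nth_rewrite 2 [Bm]
    rw [← hJ, Matrix.mul_sub, Matrix.mul_one, Matrix.mul_sub, Matrix.sub_mul,
      Matrix.mul_assoc (Bm σ ^ (k + 1)) (Pm σ) (Pm σ), Pm_sq σ hσ, Matrix.mul_one]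
    simp only [Matrix.mul_assoc]
  rw [h1, Matrix.trace_sub]
  congr 1
  rw [pow_succ']
  nth_rewrite 1 [Bm]
  rw [← hJ, Matrix.trace_mul_comm]
  simp only [← Matrix.mul_assoc]
  rw [Pm_sq σ hσ, Matrix.one_mul, Matrix.trace_mul_comm]
  simp only [← Matrix.mul_assoc]
  rw [hJ, J_J1, Matrix.smul_mul, Matrix.smul_mul, Matrix.trace_smul, smul_eq_mul]
  congr 1
  rw [Matrix.mul_assoc, Matrix.mul_assoc, Matrix.trace_mul_comm]
  simp only [Matrix.mul_assoc]

lemma aeD (M : Matrix V V ℝ) (c : ℝ) (k : ℕ) :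
    Polynomial.aeval M (Polynomial.dickson 1 c (k + 2)) =
      Polynomial.aeval M (Polynomial.dickson 1 c (k + 1)) * M
      - c • Polynomial.aeval M (Polynomial.dickson 1 c k) := by
  rw [Polynomial.dickson_add_two, mul_comm Polynomial.X]
  simp [Algebra.smul_def]

lemma dick0 (c : ℝ) : Polynomial.dickson 1 c 0 = Polynomial.C 2 := by
  rw [Polynomial.dickson_zero]
  have : (3 - ((1 : ℕ) : Polynomial ℝ)) = Polynomial.C (3 - 1) := by
    simp only [map_sub, Nat.cast_one, map_one, map_ofNat]
  rw [this]; norm_num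

lemma aeD0 (M : Matrix V V ℝ) (c : ℝ) :
    Polynomial.aeval M (Polynomial.dickson 1 c 0) = (2 : ℝ) • 1 := by
  rw [dick0, Polynomial.aeval_C, Algebra.algebraMap_eq_smul_one]

lemma aeD1 (M : Matrix V V ℝ) (c : ℝ) :
    Polynomial.aeval M (Polynomial.dickson 1 c 1) = M := by
  rw [Polynomial.dickson_one]; simp

lemma Ak_dickson (σ : Equiv.Perm (V × Fin r)) (hσ : σ ∈ PM (V × Fin r)) (k : ℕ) :
    (Sm V r)ᵀ * Bm σ ^ (k + 2) * (Pm σ * Sm V r)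
      - ((r : ℝ) - 1) • ((Sm V r)ᵀ * Bm σ ^ k * (Pm σ * Sm V r)) =
    Polynomial.aeval (Am σ) (Polynomial.dickson 1 ((r : ℝ) - 1) (k + 3))
      - Polynomial.aeval (Am σ) (Polynomial.dickson 1 ((r : ℝ) - 1) (k + 1)) := by
  have hD := aeD (Am σ) ((r : ℝ) - 1)
  have hD0 := aeD0 (Am σ) ((r : ℝ) - 1)
  have hD1 := aeD1 (Am σ) ((r : ℝ) - 1)
  induction k using Nat.twoStepInduction with
  | zero =>
    rw [Ak_rec σ hσ, Ak_one σ hσ, Ak_zero σ, hD 1, hD 0, hD0, hD1]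
    simp only [Matrix.sub_mul, Matrix.smul_mul, Matrix.one_mul, smul_sub, smul_smul]
    module
  | one =>
    rw [Ak_rec σ hσ, Ak_rec σ hσ, Ak_one σ hσ, Ak_zero σ, hD 2, hD 1, hD 0, hD0, hD1]
    simp only [Matrix.sub_mul, Matrix.smul_mul, Matrix.one_mul, smul_sub, smul_smul]
    module
  | more k h1 h2 =>
    have e4 := Ak_rec σ hσ (k + 2)
    have e2 := Ak_rec σ hσ k
    have d5 := hD (k + 3)
    have d3 := hD (k + 1)
    set K : ℕ → Matrix V V ℝ := fun k => (Sm V r)ᵀ * Bm σ ^ k * (Pm σ * Sm V r) with hK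
    set D : ℕ → Matrix V V ℝ := fun k =>
      Polynomial.aeval (Am σ) (Polynomial.dickson 1 ((r : ℝ) - 1) k) with hDD
    change K (k + 4) = K (k + 3) * Am σ - ((r : ℝ) - 1) • K (k + 2) at e4
    change K (k + 2) = K (k + 1) * Am σ - ((r : ℝ) - 1) • K k at e2
    change D (k + 5) = D (k + 4) * Am σ - ((r : ℝ) - 1) • D (k + 3) at d5
    change D (k + 3) = D (k + 2) * Am σ - ((r : ℝ) - 1) • D (k + 1) at d3
    change K (k + 2) - ((r : ℝ) - 1) • K k = D (k + 3) - D (k + 1) at h1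
    change K (k + 3) - ((r : ℝ) - 1) • K (k + 1) = D (k + 4) - D (k + 2) at h2
    change K (k + 4) - ((r : ℝ) - 1) • K (k + 2) = D (k + 5) - D (k + 3)
    rw [sub_eq_iff_eq_add] at h1 h2
    rw [e4, d5, h2]
    nth_rewrite 2 [e2]
    nth_rewrite 2 [d3]
    rw [h1]
    simp only [Matrix.sub_mul, Matrix.add_mul, smul_sub, smul_add, Matrix.smul_mul]
    module

/-- Trace of powers of the non-backtracking matrix in terms of the adjacency matrix. -/
lemma trace_Bm_pow (σ : Equiv.Perm (V × Fin r)) (hσ : σ ∈ PM (V × Fin r)) (k : ℕ) : (Bm σ ^ (k + 1)).trace =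
    (Polynomial.aeval (Am σ) (Polynomial.dickson 1 ((r : ℝ) - 1) (k + 1))).trace
      + if Even (k + 1) then ((r : ℝ) - 2) * Fintype.card V else 0 := by
  induction k using Nat.twoStepInduction with
  | zero =>
    have h := tr_Ak σ 0
    rw [Ak_zero σ, pow_zero, Matrix.one_mul, trace_Pm σ hσ] at h
    simp at h ⊢
    exact h.symm
  | one =>
    have h := tr_Ak σ 1
    rw [Ak_one σ hσ, tr_BPm_one σ hσ, add_zero] at h
    rw [← h, aeD, aeD1, aeD0]
    simp only [Matrix.trace_sub, Matrix.trace_smul, Matrix.trace_one, smul_eq_mul]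
    rw [if_pos (by decide)]
    ring
  | more k h1 h2 =>
    have h := tr_Ak σ (k + 2)
    rw [tr_BPm σ hσ] at h
    have hd := congrArg Matrix.trace (Ak_dickson σ hσ k)
    rw [Matrix.trace_sub, Matrix.trace_sub, Matrix.trace_smul, smul_eq_mul] at hd
    have he : Even (k + 2 + 1) ↔ Even (k + 1) := by
      rw [show k + 2 + 1 = k + 1 + 2 by ring, Nat.even_add]; simp
    simp only [he]
    have : k + 2 + 1 = k + 3 := by ring
    rw [this] at *
    linarith

end alg

end PartC
end Fried

namespace Fried
section PartC2
open Finset Matrix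

variable {V : Type*} [Fintype V] [DecidableEq V] {r : ℕ}

lemma Pm_transpose (σ : Equiv.Perm (V × Fin r)) (hσ : σ ∈ PM (V × Fin r)) : (Pm σ)ᵀ = Pm σ := by
  rw [mem_PM] at hσ
  ext x y
  simp only [Pm, Matrix.transpose_apply, Matrix.of_apply]
  have : σ y = x ↔ σ x = y := ⟨fun h => by rw [← h, (hσ y).2], fun h => by rw [← h, (hσ x).2]⟩
  simp only [this]

lemma Am_transpose (σ : Equiv.Perm (V × Fin r)) (hσ : σ ∈ PM (V × Fin r)) : (Am σ)ᵀ = Am σ := by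
  rw [Am, Matrix.transpose_mul, Matrix.transpose_mul, Pm_transpose σ hσ, Matrix.transpose_transpose,
    Matrix.mul_assoc]

lemma Am_apply (σ : Equiv.Perm (V × Fin r)) (u v : V) :
    Am σ u v = ((univ.filter (fun i : Fin r => (σ (u, i)).1 = v)).card : ℝ) := by
  rw [Am, Matrix.mul_assoc, Matrix.mul_apply, Fintype.sum_prod_type]
  simp only [Pm_mul, Sm, Matrix.transpose_apply, Matrix.of_apply]
  rw [Finset.sum_eq_single u]
  · simp
  · intro b _ hb; simp [hb]
  · simp

lemma Am_row (σ : Equiv.Perm (V × Fin r)) (u : V) : ∑ v, Am σ u v = r := by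
  simp only [Am_apply]
  have h := Finset.card_eq_sum_card_fiberwise (s := (univ : Finset (Fin r))) (t := univ)
    (f := fun i => (σ (u, i)).1) (fun _ _ => Finset.mem_coe.2 (mem_univ _))
  rw [Finset.card_univ, Fintype.card_fin] at h
  rw [← Nat.cast_sum, ← h]

lemma Am_nonneg (σ : Equiv.Perm (V × Fin r)) (u v : V) : 0 ≤ Am σ u v := by
  rw [Am_apply]; positivity

/-- Powers as sums over walks. -/
lemma pow_walk {H : Type*} [Fintype H] [DecidableEq H] (M : Matrix H H ℝ) (k : ℕ) (x y : H) :
    (M ^ (k + 1)) x y = ∑ h : Fin (k + 1) → H,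
      if h 0 = x then (∏ i : Fin k, M (h i.castSucc) (h i.succ)) * M (h (Fin.last k)) y else 0 := by
  induction k generalizing y with
  | zero =>
    simp only [zero_add, pow_one, univ_eq_empty, prod_empty, one_mul]
    rw [← (Equiv.funUnique (Fin 1) H).symm.sum_comp]
    simp
  | succ k ih =>
    rw [pow_succ, Matrix.mul_apply]
    rw [← (Fin.snocEquiv (fun _ : Fin (k + 2) => H)).sum_comp, Fintype.sum_prod_type]
    apply Finset.sum_congr rfl
    intro z _
    rw [ih, Finset.sum_mul]
    apply Finset.sum_congr rfl
    intro h _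
    have e0 : (Fin.snocEquiv (fun _ : Fin (k + 2) => H)) (z, h) = Fin.snoc h z := rfl
    rw [e0]
    have e1 : (Fin.snoc h z : Fin (k + 2) → H) 0 = h 0 := by
      simp
    rw [e1, Fin.prod_univ_castSucc]
    simp only [Fin.snoc_last, Fin.succ_last, Fin.snoc_castSucc, ← Fin.castSucc_succ]
    split_ifs <;> ring

lemma trace_walk {H : Type*} [Fintype H] [DecidableEq H] (M : Matrix H H ℝ) (k : ℕ) :
    (M ^ (k + 1)).trace = ∑ h : Fin (k + 1) → H, ∏ i : Fin (k + 1), M (h i) (h (i + 1)) := by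
  rw [Matrix.trace]
  simp only [Matrix.diag_apply, pow_walk]
  rw [Finset.sum_comm]
  apply Finset.sum_congr rfl
  intro h _
  rw [Finset.sum_ite_eq]
  simp [Fin.prod_univ_castSucc]

end PartC2
end Fried

namespace Fried
section PartD
open Finset

def Val {I β : Type*} (f g : I → β) : Prop :=
  ∀ i j, (f i = f j → g i = g j) ∧ (g i = g j → f i = f j) ∧ (f i = g j → g i = f j) ∧ f i ≠ g i

noncomputable def SS {I β : Type*} [Fintype I] (f g : I → β) : Finset β :=
  univ.image f ∪ univ.image g

lemma Val_tau {I β : Type*} [Fintype I] (f g : I → β) (h : Val f g) :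
    ∃ τ : β → β, IsPart (SS f g) τ ∧ (∀ i, τ (f i) = g i) ∧ ∀ i, τ (g i) = f i := by
  let τ : β → β := fun x => if h1 : ∃ i, f i = x then g h1.choose else
    if h2 : ∃ i, g i = x then f h2.choose else x
  have hf : ∀ i, τ (f i) = g i := by
    intro i
    have h1 : ∃ j, f j = f i := ⟨i, rfl⟩
    simp only [τ]
    rw [dif_pos h1]
    exact (h _ _).1 h1.choose_spec
  have hg : ∀ i, τ (g i) = f i := by
    intro i
    simp only [τ]
    split_ifs with h1 h2
    · exact (h _ _).2.2.1 h1.choose_spec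
    · exact (h _ _).2.1 h2.choose_spec
    · exact absurd ⟨i, rfl⟩ h2
  refine ⟨τ, ?_, hf, hg⟩
  intro x hx
  simp only [SS, mem_union, mem_image, mem_univ, true_and] at hx ⊢
  rcases hx with ⟨i, rfl⟩ | ⟨i, rfl⟩
  · rw [hf, hg]
    exact ⟨Or.inr ⟨i, rfl⟩, (h i i).2.2.2.symm, rfl⟩
  · rw [hg, hf]
    exact ⟨Or.inl ⟨i, rfl⟩, (h i i).2.2.2, rfl⟩

lemma count_val {I H : Type*} [Fintype I] [Fintype H] (f g : I → H) (h : Val f g) :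
    (SS f g).card = 2 * ((SS f g).card / 2) ∧
    (((PM H).filter (fun σ => ∀ i, σ (f i) = g i)).card : ℝ) *
      ∏ j ∈ range ((SS f g).card / 2), ((Fintype.card H : ℝ) - 1 - 2 * j) = (PM H).card := by
  obtain ⟨τ, h1, h2, h3⟩ := Val_tau f g h
  have : (PM H).filter (fun σ => ∀ i, σ (f i) = g i) = PMon (SS f g) τ := by
    ext σ
    simp only [PMon, mem_filter, and_congr_right_iff, mem_PM]
    intro hσ
    constructor
    · intro hs x hx
      simp only [SS, mem_union, mem_image, mem_univ, true_and] at hx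
      rcases hx with ⟨i, rfl⟩ | ⟨i, rfl⟩
      · rw [h2, hs]
      · rw [h3, ← hs, (hσ _).2]
    · intro hs i
      rw [hs _ (by simp [SS]), h2]
  rw [this]
  exact card_PMon' τ _ h1

lemma val_of_match {I H : Type*} [Fintype H] (f g : I → H) (σ : Equiv.Perm H)
    (hσ : σ ∈ PM H) (h : ∀ i, σ (f i) = g i) : Val f g := by
  rw [mem_PM] at hσ
  intro i j
  refine ⟨fun e => ?_, fun e => ?_, fun e => ?_, fun e => ?_⟩
  · rw [← h, ← h, e]
  · rw [← h, ← h] at e; exact σ.injective e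
  · rw [← h i, e, ← h, (hσ _).2]
  · exact (hσ (f i)).1 (by rw [h, e])

variable {I : Type*} [Fintype I] {r : ℕ}

/-- outgoing half-edges -/
def hh {α : Type*} (v : I → α) (p : I → Fin r × Fin r) : I → α × Fin r := fun i => (v i, (p i).1)
/-- incoming half-edges -/
def gg {α : Type*} [Add I] [One I] (v : I → α) (p : I → Fin r × Fin r) : I → α × Fin r :=
  fun i => (v (i + 1), (p (i + 1)).2)

def SameKer {α β : Type*} (v : I → α) (w : I → β) : Prop := ∀ i j, v i = v j ↔ w i = w j

lemma card_image_ker_le {J α β : Type*} [Fintype J] (v : J → α) (w : J → β) (h : SameKer v w) :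
    (univ.image w).card ≤ (univ.image v).card := by
  apply Finset.card_le_card_of_forall_subsingleton (fun y x => ∃ i, v i = x ∧ w i = y)
  · intro y hy
    simp only [mem_image, mem_univ, true_and] at hy
    obtain ⟨i, rfl⟩ := hy
    exact ⟨v i, mem_image_of_mem _ (mem_univ _), i, rfl, rfl⟩
  · rintro x - y ⟨-, i, hi, rfl⟩ y' ⟨-, j, hj, rfl⟩
    exact (h _ _).1 (hi.trans hj.symm)

lemma SameKer.symm {J α β : Type*} {v : J → α} {w : J → β} (h : SameKer v w) :
    SameKer w v := fun i j => (h i j).symm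

lemma card_image_ker {J α β : Type*} [Fintype J] (v : J → α) (w : J → β) (h : SameKer v w) :
    (univ.image v).card = (univ.image w).card :=
  le_antisymm (card_image_ker_le w v h.symm) (card_image_ker_le v w h)

lemma SS_card_sum {β : Type*} (f g : I → β) :
    (SS f g).card = (univ.image (Sum.elim f g)).card := by
  congr 1
  ext x
  simp [SS]

/-- A canonical representative of the kernel of `v`. -/
noncomputable def can {α : Type*} [Nonempty I] (v : I → α) : I → I := fun i =>
  (fun s : Finset I => if hs : s.Nonempty then hs.choose else Classical.arbitrary I)
    (univ.filter (fun j => v j = v i))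

lemma v_can {α : Type*} [Nonempty I] (v : I → α) (i : I) : v (can v i) = v i := by
  have hs : (univ.filter (fun j => v j = v i)).Nonempty := ⟨i, by simp⟩
  simp only [can]
  rw [dif_pos hs]
  simpa using hs.choose_spec

lemma can_congr {α β : Type*} [Nonempty I] (v : I → α) (w : I → β) (h : SameKer v w) :
    can v = can w := by
  funext i
  simp only [can, h _ i]

lemma can_ker {α : Type*} [Nonempty I] (v : I → α) : SameKer (can v) v := by
  intro i j
  constructor
  · intro h
    rw [← v_can v i, h, v_can v]
  · intro h
    simp only [can, h]

lemma can_eq_iff {α : Type*} [Nonempty I] (v : I → α) (w : I → I) (hw : can w = w) :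
    can v = w ↔ SameKer v w := by
  constructor
  · rintro rfl
    exact (can_ker v).symm
  · intro h; rw [can_congr v w h, hw]

lemma card_ker (w : I → I) (n : ℕ) :
    (univ.filter (fun v : I → Fin n => SameKer v w)).card =
      n.descFactorial (univ.image w).card := by
  have h1 : Fintype.card ((univ.image w : Finset I) ↪ Fin n) =
      n.descFactorial (univ.image w).card := by
    rw [Fintype.card_embedding_eq, Fintype.card_fin, Fintype.card_coe]
  rw [← h1, ← Finset.card_univ]
  symm
  apply Finset.card_bij (fun (φ : (univ.image w : Finset I) ↪ Fin n) _ (i : I) =>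
    φ ⟨w i, mem_image_of_mem _ (mem_univ _)⟩)
  · intro φ _
    simp only [mem_filter, mem_univ, true_and]
    intro i j
    simp
  · intro φ _ ψ _ h
    ext ⟨x, hx⟩
    obtain ⟨i, -, rfl⟩ := mem_image.1 hx
    exact congrArg Fin.val (congrFun h i)
  · intro v hv
    simp only [mem_filter, mem_univ, true_and] at hv
    have hc : ∀ x : (univ.image w : Finset I), ∃ i, w i = x := fun x => by
      obtain ⟨i, -, h⟩ := mem_image.1 x.2
      exact ⟨i, h⟩
    choose c hc using hc
    refine ⟨⟨fun x => v (c x), ?_⟩, mem_univ _, ?_⟩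
    · intro x y h
      have := (hv _ _).1 h
      rw [hc, hc] at this
      exact Subtype.ext this
    · funext i
      exact (hv _ _).2 (hc _)

variable [Add I] [One I]

lemma ker_hh {α β : Type*} (v : I → α) (w : I → β) (h : SameKer v w) (p : I → Fin r × Fin r) :
    (SS (hh v p) (gg v p)).card = (SS (hh w p) (gg w p)).card := by
  rw [SS_card_sum, SS_card_sum]
  apply card_image_ker
  rintro (i | i) (j | j) <;> simp [hh, gg, h _ _]

lemma ker_val {α β : Type*} (v : I → α) (w : I → β) (h : SameKer v w) (p : I → Fin r × Fin r) :
    Val (hh v p) (gg v p) ↔ Val (hh w p) (gg w p) := by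
  simp [Val, hh, gg, h _ _]

end PartD
end Fried

namespace Fried
section PartD2
open Finset Matrix

variable {r : ℕ}

lemma Bm_apply {V : Type*} [Fintype V] [DecidableEq V] (σ : Equiv.Perm (V × Fin r)) (x y : V × Fin r) :
    Bm σ x y = ∑ b : Fin r, if (y.2 ≠ b ∧ σ x = (y.1, b)) then 1 else 0 := by
  rw [Bm, Pm_mul, Matrix.sub_apply, Matrix.mul_apply, Matrix.one_apply]
  simp only [Sm, Matrix.of_apply, Matrix.transpose_apply]
  rcases hx : σ x with ⟨u, c⟩
  obtain ⟨w, d⟩ := y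
  simp only [Prod.mk.injEq]
  by_cases h : u = w
  · subst h
    by_cases h2 : c = d
    · subst h2
      simp
    · have : ∀ x, (¬ d = x ∧ c = x) ↔ x = c := fun x =>
        ⟨fun h => h.2.symm, fun h => ⟨by rintro rfl; exact h2 h.symm, h.symm⟩⟩
      simp [h2, this]
  · have : ∀ x, ¬ (w = x ∧ u = x) := fun x h' => h (h'.2.trans h'.1.symm)
    simp [h]

lemma trace_Bm_count {V : Type*} [Fintype V] [DecidableEq V] (σ : Equiv.Perm (V × Fin r)) (k : ℕ) :
    (Bm σ ^ (k + 1)).trace = ∑ v : ZMod (k + 1) → V, ∑ p : ZMod (k + 1) → Fin r × Fin r,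
      if (∀ i, (p i).1 ≠ (p i).2) ∧ ∀ i, σ (hh v p i) = gg v p i then 1 else 0 := by
  have h0 : (Bm σ ^ (k + 1)).trace = ∑ h : ZMod (k + 1) → V × Fin r,
    ∏ i : ZMod (k + 1), Bm σ (h i) (h (i + 1)) := trace_walk (Bm σ) k
  have h1 : ∀ h : ZMod (k + 1) → V × Fin r, ∏ i : ZMod (k + 1), Bm σ (h i) (h (i + 1)) =
      ∑ b : ZMod (k + 1) → Fin r, if ∀ j, ((h j).2 ≠ b j ∧ σ (h (j - 1)) = ((h j).1, b j))
        then 1 else 0 := by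
    intro h
    have e1 : ∏ i : ZMod (k + 1), Bm σ (h i) (h (i + 1)) =
        ∏ j : ZMod (k + 1), ∑ b : Fin r,
          if ((h j).2 ≠ b ∧ σ (h (j - 1)) = ((h j).1, b)) then (1 : ℝ) else 0 := by
      rw [← Equiv.prod_comp (Equiv.addRight (1 : ZMod (k + 1))) (fun j => ∑ b : Fin r,
          if ((h j).2 ≠ b ∧ σ (h (j - 1)) = ((h j).1, b)) then (1 : ℝ) else 0)]
      apply Finset.prod_congr rfl
      intro i _
      rw [Bm_apply]
      simp
    rw [e1, Finset.prod_univ_sum, Fintype.piFinset_univ]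
    apply Finset.sum_congr rfl
    intro b _
    rw [Finset.prod_ite_zero]
    simp
  rw [h0, Finset.sum_congr rfl (fun h _ => h1 h), ← Fintype.sum_prod_type', ← Fintype.sum_prod_type']
  refine Fintype.sum_equiv
    { toFun := fun x => (fun i => (x.1 i).1, fun i => ((x.1 i).2, x.2 i))
      invFun := fun y => (fun i => (y.1 i, (y.2 i).1), fun i => (y.2 i).2)
      left_inv := fun x => rfl
      right_inv := fun x => rfl } _ _ ?_
  rintro ⟨h, b⟩
  simp only [Equiv.coe_fn_mk, hh, gg]
  congr 1
  apply propext
  constructor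
  · intro H
    refine ⟨fun i => (H i).1, fun i => ?_⟩
    have := (H (i + 1)).2
    rwa [add_sub_cancel_right] at this
  · rintro ⟨H1, H2⟩ j
    refine ⟨H1 j, ?_⟩
    have := H2 (j - 1)
    rwa [sub_add_cancel] at this

/-- Combinatorial types of closed non-backtracking walks. -/
noncomputable def Types (r k : ℕ) :
    Finset ((ZMod (k + 1) → ZMod (k + 1)) × (ZMod (k + 1) → Fin r × Fin r)) :=
  univ.filter fun T => can T.1 = T.1 ∧ (∀ i, (T.2 i).1 ≠ (T.2 i).2) ∧
    Val (hh T.1 T.2) (gg T.1 T.2)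

noncomputable def tev {r k : ℕ}
    (T : (ZMod (k + 1) → ZMod (k + 1)) × (ZMod (k + 1) → Fin r × Fin r)) : ℕ :=
  (SS (hh T.1 T.2) (gg T.1 T.2)).card / 2

noncomputable def tnv {r k : ℕ}
    (T : (ZMod (k + 1) → ZMod (k + 1)) × (ZMod (k + 1) → Fin r × Fin r)) : ℕ :=
  (univ.image T.1).card

lemma SS_card_le {I β : Type*} [Fintype I] (f g : I → β) : (SS f g).card ≤ 2 * Fintype.card I := by
  rw [SS_card_sum]
  refine Finset.card_image_le.trans ?_
  simp; omega

lemma tev_le {k : ℕ} (T : (ZMod (k + 1) → ZMod (k + 1)) × (ZMod (k + 1) → Fin r × Fin r)) :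
    tev T ≤ k + 1 := by
  have := SS_card_le (hh T.1 T.2) (gg T.1 T.2)
  rw [ZMod.card] at this
  unfold tev; omega

lemma tnv_le {k : ℕ} (T : (ZMod (k + 1) → ZMod (k + 1)) × (ZMod (k + 1) → Fin r × Fin r)) :
    tnv T ≤ k + 1 := by
  have := Finset.card_image_le (s := univ) (f := T.1)
  rw [Finset.card_univ, ZMod.card] at this
  exact this

lemma factor_pos (m k e j : ℕ) (hm : 2 * (k + 1) ≤ m) (he : e ≤ k + 1) (hj : j ∈ range e) :
    (0 : ℝ) < (m : ℝ) - 1 - 2 * j := by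
  have : 2 * j + 1 < m := by have := mem_range.1 hj; omega
  have : ((2 * j + 1 : ℕ) : ℝ) < m := by exact_mod_cast this
  push_cast at this; linarith

lemma E_trace (n k : ℕ) (hn : 2 * (k + 1) ≤ n * r) :
    ∑ σ ∈ PM (Fin n × Fin r), (Bm σ ^ (k + 1)).trace =
     (PM (Fin n × Fin r)).card * ∑ T ∈ Types r k, (n.descFactorial (tnv T) : ℝ) /
       ∏ j ∈ range (tev T), (((n * r : ℕ) : ℝ) - 1 - 2 * j) := by
  have hcard : Fintype.card (Fin n × Fin r) = n * r := by simp
  simp only [trace_Bm_count]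
  rw [Finset.sum_comm]
  have h1 : ∀ v : ZMod (k + 1) → Fin n, ∑ σ ∈ PM (Fin n × Fin r),
      ∑ p : ZMod (k + 1) → Fin r × Fin r,
      (if (∀ i, (p i).1 ≠ (p i).2) ∧ ∀ i, σ (hh v p i) = gg v p i then (1 : ℝ) else 0) =
      ∑ p : ZMod (k + 1) → Fin r × Fin r,
        if (can v, p) ∈ Types r k then (PM (Fin n × Fin r)).card /
         ∏ j ∈ range (tev (can v, p)), (((n * r : ℕ) : ℝ) - 1 - 2 * j) else 0 := by
    intro v
    rw [Finset.sum_comm]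
    apply Finset.sum_congr rfl
    intro p _
    have hk := ker_val (can v) v (can_ker v) p
    have hcc : can (can v) = can v := can_congr _ _ (can_ker v)
    simp only [Types, mem_filter, mem_univ, true_and, hcc, hk]
    by_cases hp : ∀ i, (p i).1 ≠ (p i).2
    · by_cases hv : Val (hh v p) (gg v p)
      · rw [if_pos ⟨hp, hv⟩, eq_div_iff]
        · have := (count_val (hh v p) (gg v p) hv).2
          rw [hcard] at this
          rw [← this]
          congr 1
          · rw [Finset.card_filter]
            push_cast
            apply Finset.sum_congr rfl
            intro σ _
            congr 1
            simp only [eq_iff_iff, and_iff_right_iff_imp]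
            exact fun _ => hp
          · rw [tev, ker_hh _ _ (can_ker v)]
        · apply Finset.prod_ne_zero_iff.2
          intro j hj
          exact (factor_pos _ k _ j hn (tev_le _) hj).ne'
      · rw [if_neg (fun h => hv h.2)]
        apply Finset.sum_eq_zero
        intro σ hσ
        rw [if_neg]
        rintro ⟨-, h⟩
        exact hv (val_of_match _ _ σ hσ h)
    · rw [if_neg (fun h => hp h.1)]
      apply Finset.sum_eq_zero
      intro σ hσ
      rw [if_neg]
      exact fun h => hp h.1
  rw [Finset.sum_congr rfl (fun v _ => h1 v), Finset.sum_comm, Finset.mul_sum]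
  have h2 : ∀ p : ZMod (k + 1) → Fin r × Fin r, (∑ v : ZMod (k + 1) → Fin n,
      if (can v, p) ∈ Types r k then ((PM (Fin n × Fin r)).card : ℝ) /
         ∏ j ∈ range (tev (can v, p)), (((n * r : ℕ) : ℝ) - 1 - 2 * j) else 0) =
      ∑ w : ZMod (k + 1) → ZMod (k + 1), if (w, p) ∈ Types r k then
        (PM (Fin n × Fin r)).card * ((n.descFactorial (tnv (w, p)) : ℝ) /
         ∏ j ∈ range (tev (w, p)), (((n * r : ℕ) : ℝ) - 1 - 2 * j)) else 0 := by
    intro p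
    rw [← Finset.sum_fiberwise univ (fun v : ZMod (k + 1) → Fin n => can v)]
    apply Finset.sum_congr rfl
    intro w _
    by_cases hw : (w, p) ∈ Types r k
    · rw [if_pos hw]
      have hcw : can w = w := by
        simp only [Types, mem_filter] at hw
        exact hw.2.1
      have : ∀ v ∈ univ.filter (fun v : ZMod (k + 1) → Fin n => can v = w),
          (if (can v, p) ∈ Types r k then ((PM (Fin n × Fin r)).card : ℝ) /
         ∏ j ∈ range (tev (can v, p)), (((n * r : ℕ) : ℝ) - 1 - 2 * j) else 0) =
          ((PM (Fin n × Fin r)).card : ℝ) /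
         ∏ j ∈ range (tev (w, p)), (((n * r : ℕ) : ℝ) - 1 - 2 * j) := by
        intro v hv
        rw [(mem_filter.1 hv).2, if_pos hw]
      rw [Finset.sum_congr rfl this, Finset.sum_const]
      have hc : (univ.filter (fun v : ZMod (k + 1) → Fin n => can v = w)).card =
          n.descFactorial (tnv (w, p)) := by
        have e : univ.filter (fun v : ZMod (k + 1) → Fin n => can v = w) =
            univ.filter (fun v : ZMod (k + 1) → Fin n => SameKer v w) := by
          ext v
          simp only [mem_filter, mem_univ, true_and, can_eq_iff v w hcw]
        rw [e]
        unfold tnv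
        convert card_ker w n
      rw [hc, nsmul_eq_mul]
      ring
    · rw [if_neg hw]
      apply Finset.sum_eq_zero
      intro v hv
      rw [(mem_filter.1 hv).2, if_neg hw]
  rw [Finset.sum_congr rfl (fun p _ => h2 p), Finset.sum_comm, ← Fintype.sum_prod_type',
    ← Finset.sum_filter]
  congr 1
  ext T
  simp

end PartD2
end Fried

namespace Fried
section PartE
open Finset

variable {r : ℕ}

lemma gg_pred {I α : Type*} [AddCommGroup I] [One I] [DecidableEq α] (v : I → α) (p : I → Fin r × Fin r) (i : I) :
    gg v p (i - 1) = (v i, (p i).2) := by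
  simp [gg]

lemma pair_sub {I α : Type*} [Fintype I] [AddCommGroup I] [One I] [DecidableEq α] (v : I → α)
    (p : I → Fin r × Fin r) (i : I) :
    ({(v i, (p i).1), (v i, (p i).2)} : Finset (α × Fin r)) ⊆
      (SS (hh v p) (gg v p)).filter (fun x => x.1 = v i) := by
  intro x hx
  simp only [mem_insert, mem_singleton] at hx
  rcases hx with rfl | rfl
  · simp only [SS, mem_filter, mem_union, mem_image, mem_univ, true_and, and_true]
    exact Or.inl ⟨i, rfl⟩
  · simp only [SS, mem_filter, mem_union, mem_image, mem_univ, true_and, and_true]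
    exact Or.inr ⟨i - 1, gg_pred v p i⟩

lemma fib_ge {I α : Type*} [Fintype I] [AddCommGroup I] [One I] [DecidableEq α] (v : I → α)
    (p : I → Fin r × Fin r) (hp : ∀ i, (p i).1 ≠ (p i).2) :
    ∀ u ∈ univ.image v, 2 ≤ ((SS (hh v p) (gg v p)).filter (fun x => x.1 = u)).card := by
  intro u hu
  obtain ⟨i, -, rfl⟩ := mem_image.1 hu
  refine le_trans ?_ (Finset.card_le_card (pair_sub v p i))
  rw [Finset.card_pair]
  intro h
  exact hp i (Prod.mk.inj h).2

lemma SS_fib {I α : Type*} [Fintype I] [AddCommGroup I] [One I] [DecidableEq α] (v : I → α)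
    (p : I → Fin r × Fin r) :
    (SS (hh v p) (gg v p)).card =
      ∑ u ∈ univ.image v, ((SS (hh v p) (gg v p)).filter (fun x => x.1 = u)).card := by
  apply Finset.card_eq_sum_card_fiberwise
  intro x hx
  simp only [SS, coe_union, coe_image, Set.mem_union, Set.mem_image, true_and,
    coe_univ, Set.mem_univ] at hx ⊢
  rcases hx with ⟨i, rfl⟩ | ⟨i, rfl⟩
  · exact ⟨i, rfl⟩
  · exact ⟨i + 1, rfl⟩

lemma nv_le {I α : Type*} [Fintype I] [AddCommGroup I] [One I] [DecidableEq α] (v : I → α)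
    (p : I → Fin r × Fin r) (hp : ∀ i, (p i).1 ≠ (p i).2) :
    2 * (univ.image v).card ≤ (SS (hh v p) (gg v p)).card := by
  rw [SS_fib, mul_comm, ← smul_eq_mul, ← Finset.sum_const]
  exact Finset.sum_le_sum (fib_ge v p hp)

lemma tight_pair {I α : Type*} [Fintype I] [AddCommGroup I] [One I] [DecidableEq α] (v : I → α)
    (p : I → Fin r × Fin r) (hp : ∀ i, (p i).1 ≠ (p i).2)
    (ht : (SS (hh v p) (gg v p)).card = 2 * (univ.image v).card) (i j : I) (hij : v j = v i) :
    ((p j).1 = (p i).1 ∨ (p j).1 = (p i).2) := by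
  have h1 := SS_fib v p
  rw [ht, mul_comm, ← smul_eq_mul, ← Finset.sum_const,
    Finset.sum_eq_sum_iff_of_le (fib_ge v p hp)] at h1
  have h2 := h1 (v i) (mem_image_of_mem _ (mem_univ _))
  have h3 := Finset.eq_of_subset_of_card_le (pair_sub v p i) (by
    rw [← h2, Finset.card_pair]
    intro h
    exact hp i (Prod.mk.inj h).2)
  have h4 : (v i, (p j).1) ∈ (SS (hh v p) (gg v p)).filter (fun x => x.1 = v i) := by
    have := pair_sub v p j (by simp : (v j, (p j).1) ∈ _)
    rwa [hij] at this
  rw [← h3] at h4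
  simpa using h4

lemma no_reverse {k : ℕ} {α : Type*} [DecidableEq α] (v : ZMod (k + 1) → α)
    (p : ZMod (k + 1) → Fin r × Fin r) (hp : ∀ i, (p i).1 ≠ (p i).2) (hv : Val (hh v p) (gg v p))
    (ht : (SS (hh v p) (gg v p)).card = 2 * (univ.image v).card) (i j : ZMod (k + 1))
    (hij : v j = v i) : (p j).1 = (p i).1 := by
  rcases tight_pair v p hp ht i j hij with h | h
  · exact h
  exfalso
  have key : ∀ s : ℕ, hh v p (j + s) = gg v p (i - 1 - s) := by
    intro s
    induction s with
    | zero => 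
      simp only [Nat.cast_zero, add_zero, sub_zero]
      rw [gg_pred, hh, hij, h]
    | succ s ih =>
      have h1 := (hv _ _).2.2.1 ih
      simp only [gg, hh, Prod.mk.injEq] at h1
      obtain ⟨h1a, h1b⟩ := h1
      have h2 := tight_pair v p hp ht _ _ h1a
      have h3 : (p (j + s + 1)).1 = (p (i - 1 - s)).2 := by
        rcases h2 with h2 | h2
        · rw [← h1b] at h2
          exact absurd h2 (hp _)
        · exact h2
      push_cast
      rw [← add_assoc, ← sub_sub, gg_pred, hh, h1a, h3]
  have hd : i = j + ((i - j).val : ℕ) := by rw [ZMod.natCast_zmod_val]; ring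
  set δ := (i - j).val
  rcases Nat.even_or_odd δ with ⟨s, hs⟩ | ⟨s, hs⟩
  · rcases Nat.eq_zero_or_pos s with h0 | h0
    · subst h0
      rw [hs] at hd
      simp at hd
      subst hd
      exact hp _ h
    · obtain ⟨s', rfl⟩ : ∃ s', s = s' + 1 := ⟨s - 1, by omega⟩
      have h1 := key s'
      have h2 : i - 1 - (s' : ZMod (k + 1)) = j + s' + 1 := by
        rw [hd, hs]; push_cast; ring
      rw [h2] at h1
      have h3 := (hv _ _).2.2.1 h1
      simp only [gg, hh, Prod.mk.injEq] at h3
      exact hp _ h3.2.symm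
  · have h1 := key s
    have h2 : i - 1 - (s : ZMod (k + 1)) = j + s := by
      rw [hd, hs]; push_cast; ring
    rw [h2] at h1
    exact (hv (j + s) (j + s)).2.2.2 h1

lemma tight_step {k : ℕ} {α : Type*} [DecidableEq α] (v : ZMod (k + 1) → α)
    (p : ZMod (k + 1) → Fin r × Fin r) (hp : ∀ i, (p i).1 ≠ (p i).2) (hv : Val (hh v p) (gg v p))
    (ht : (SS (hh v p) (gg v p)).card = 2 * (univ.image v).card) (i j : ZMod (k + 1))
    (hij : v j = v i) : (p j).1 = (p i).1 ∧ v (j + 1) = v (i + 1) ∧ (p (j + 1)).2 = (p (i + 1)).2 := by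
  have h1 := no_reverse v p hp hv ht i j hij
  have h2 : hh v p j = hh v p i := by simp only [hh, hij, h1]
  have h3 := (hv _ _).1 h2
  simp only [gg, Prod.mk.injEq] at h3
  exact ⟨h1, h3⟩

lemma tight_shift {k : ℕ} {α : Type*} [DecidableEq α] (v : ZMod (k + 1) → α)
    (p : ZMod (k + 1) → Fin r × Fin r) (hp : ∀ i, (p i).1 ≠ (p i).2) (hv : Val (hh v p) (gg v p))
    (ht : (SS (hh v p) (gg v p)).card = 2 * (univ.image v).card) (i j : ZMod (k + 1))
    (hij : v j = v i) (x : ZMod (k + 1)) : v (j + x) = v (i + x) := by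
  rw [← ZMod.natCast_zmod_val x]
  induction x.val with
  | zero => simpa using hij
  | succ s ih =>
    push_cast
    rw [← add_assoc, ← add_assoc]
    exact (tight_step v p hp hv ht _ _ ih).2.1

lemma tight_p {k : ℕ} {α : Type*} [DecidableEq α] (v : ZMod (k + 1) → α)
    (p : ZMod (k + 1) → Fin r × Fin r) (hp : ∀ i, (p i).1 ≠ (p i).2) (hv : Val (hh v p) (gg v p))
    (ht : (SS (hh v p) (gg v p)).card = 2 * (univ.image v).card) (i j : ZMod (k + 1))
    (hij : v j = v i) : p j = p i := by
  have h1 := (tight_step v p hp hv ht _ _ hij).1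
  have h2 := tight_shift v p hp hv ht _ _ hij (-1)
  have h3 := (tight_step v p hp hv ht _ _ h2).2.2
  simp only [neg_add_cancel_right] at h3
  exact Prod.ext h1 h3

lemma tight_period {k : ℕ} {α : Type*} [DecidableEq α] (v : ZMod (k + 1) → α)
    (hs : ∀ i j : ZMod (k + 1), v j = v i → ∀ x, v (j + x) = v (i + x)) :
    ∃ d : ℕ, d ∣ k + 1 ∧ 0 < d ∧ SameKer v (fun i => i.val % d) := by
  let G : AddSubgroup (ZMod (k + 1)) :=
    { carrier := {x | v x = v 0}
      add_mem' := by
        intro a b ha hb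
        have := hs _ _ ha b
        rw [zero_add] at this
        exact this.trans hb
      zero_mem' := rfl
      neg_mem' := by
        intro a ha
        have := hs _ _ ha (-a)
        simp only [add_neg_cancel, zero_add] at this
        exact this.symm }
  have hG : ∀ i j, v i = v j ↔ i - j ∈ G := by
    intro i j
    constructor
    · intro h
      have := hs _ _ h (-j)
      simp only [add_neg_cancel, ← sub_eq_add_neg] at this
      exact this
    · intro h
      have := hs _ _ (show v (i - j) = v 0 from h) j
      simpa using this
  -- pull back to the integers
  obtain ⟨g, hg⟩ := Int.subgroup_cyclic (G.comap (Int.castAddHom (ZMod (k + 1))))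
  have hmem : ∀ x : ℤ, ((x : ℤ) : ZMod (k + 1)) ∈ G ↔ g ∣ x := by
    intro x
    have h1 : ((x : ℤ) : ZMod (k + 1)) ∈ G ↔ x ∈ G.comap (Int.castAddHom (ZMod (k + 1))) := by
      rw [AddSubgroup.mem_comap]; rfl
    rw [h1, hg, AddSubgroup.mem_closure_singleton]
    constructor
    · rintro ⟨c, rfl⟩; exact ⟨c, by rw [smul_eq_mul, mul_comm]⟩
    · rintro ⟨c, rfl⟩; exact ⟨c, by rw [smul_eq_mul, mul_comm]⟩
  have hk : g ∣ ((k + 1 : ℕ) : ℤ) := by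
    rw [← hmem]
    have : (((k + 1 : ℕ) : ℤ) : ZMod (k + 1)) = 0 := by
      rw [Int.cast_natCast]; exact ZMod.natCast_self _
    rw [this]; exact G.zero_mem
  have hdk : g.natAbs ∣ k + 1 := by
    have := Int.natAbs_dvd_natAbs.2 hk
    rwa [Int.natAbs_natCast] at this
  refine ⟨g.natAbs, hdk, Nat.pos_of_ne_zero ?_, ?_⟩
  · intro h; rw [h] at hdk; simp at hdk
  · intro i j
    have e : i - j = (((i.val : ℤ) - (j.val : ℤ) : ℤ) : ZMod (k + 1)) := by
      push_cast; rw [ZMod.natCast_zmod_val, ZMod.natCast_zmod_val]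
    rw [hG, e, hmem, ← Int.natAbs_dvd, ← Nat.modEq_iff_dvd]
    exact ⟨fun h => h.symm, fun h => Nat.ModEq.symm h⟩

lemma image_mod (k d : ℕ) (hd : 0 < d) (hk : d ∣ k + 1) :
    (univ.image (fun i : ZMod (k + 1) => i.val % d)).card = d := by
  have : univ.image (fun i : ZMod (k + 1) => i.val % d) = range d := by
    ext x
    simp only [mem_image, mem_univ, true_and, mem_range]
    constructor
    · rintro ⟨i, rfl⟩; exact Nat.mod_lt _ hd
    · intro hx
      have h2 := Nat.le_of_dvd (by omega) hk
      refine ⟨(x : ZMod (k + 1)), ?_⟩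
      rw [ZMod.val_natCast, Nat.mod_eq_of_lt (show x < k + 1 by omega), Nat.mod_eq_of_lt hx]
  rw [this, card_range]

lemma Types_even {k : ℕ} (T) (hT : T ∈ Types r k) :
    (SS (hh T.1 T.2) (gg T.1 T.2)).card = 2 * tev T := by
  simp only [Types, mem_filter] at hT
  exact (count_val _ _ hT.2.2.2).1

lemma tnv_eq {k : ℕ} (T : (ZMod (k + 1) → ZMod (k + 1)) × (ZMod (k + 1) → Fin r × Fin r)) :
    tnv T = (univ.image T.1).card := by
  unfold tnv; congr

lemma tnv_le_tev {k : ℕ} (T) (hT : T ∈ Types r k) : tnv T ≤ tev T := by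
  have h1 := Types_even T hT
  simp only [Types, mem_filter] at hT
  have := nv_le T.1 T.2 hT.2.2.1
  rw [tnv_eq]
  unfold tev; omega

lemma tight_type {k : ℕ} (T) (hT : T ∈ Types r k) (ht : tev T = tnv T) :
    tnv T ∣ k + 1 ∧ 0 < tnv T ∧ SameKer T.1 (fun i => i.val % tnv T) ∧
      ∀ i j, i.val % tnv T = j.val % tnv T → T.2 i = T.2 j := by
  have h1 := Types_even T hT
  simp only [Types, mem_filter] at hT
  rw [ht, tnv_eq] at h1
  obtain ⟨-, hc, hp, hv⟩ := hT
  obtain ⟨d, hd, hd0, hk⟩ := tight_period T.1 (fun i j h x => tight_shift T.1 T.2 hp hv h1 i j h x)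
  have hdd : tnv T = d := by
    rw [tnv_eq, ← image_mod k d hd0 hd]
    convert card_image_ker _ _ hk
  rw [hdd]
  exact ⟨hd, hd0, hk, fun i j h => tight_p T.1 T.2 hp hv h1 _ _ ((hk i j).2 h)⟩

lemma NB_card (r : ℕ) (J : Type*) [Fintype J] [DecidableEq J] :
    (univ.filter (fun q : J → Fin r × Fin r => ∀ i, (q i).1 ≠ (q i).2)).card
    = (r * r - r) ^ Fintype.card J := by
  have : univ.filter (fun q : J → Fin r × Fin r => ∀ i, (q i).1 ≠ (q i).2) =
      Fintype.piFinset (fun _ : J => (univ : Finset (Fin r)).offDiag) := by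
    ext q; simp [Fintype.mem_piFinset]
  rw [this, Fintype.card_piFinset]
  simp [offDiag_card]

lemma tight_count (r k d : ℕ) :
    ((Types r k).filter (fun T => tev T = d ∧ tnv T = d)).card ≤ (r * r - r) ^ d := by
  have hN := NB_card r (Fin d)
  rw [Fintype.card_fin] at hN
  rw [← hN]
  apply Finset.card_le_card_of_injOn (fun T (i : Fin d) => T.2 ((i : ℕ) : ZMod (k + 1)))
  · intro T hT
    simp only [coe_filter, Set.mem_ofPred_eq, Types, mem_filter] at hT
    simp only [coe_filter, Set.mem_ofPred_eq, mem_univ, true_and]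
    intro i; exact hT.1.2.2.1 _
  · intro T hT T' hT' h
    simp only [coe_filter, Set.mem_ofPred_eq] at hT hT'
    obtain ⟨hT, h1, h2⟩ := hT
    obtain ⟨hT', h1', h2'⟩ := hT'
    obtain ⟨a1, a2, a3, a4⟩ := tight_type T hT (h1.trans h2.symm)
    obtain ⟨b1, b2, b3, b4⟩ := tight_type T' hT' (h1'.trans h2'.symm)
    rw [h2] at a1 a2 a3 a4
    rw [h2'] at b1 b2 b3 b4
    simp only [Types, mem_filter] at hT hT'
    apply Prod.ext
    · rw [← hT.2.1, ← hT'.2.1, can_congr _ _ a3, can_congr _ _ b3]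
    · funext i
      have hlt : i.val % d < d := Nat.mod_lt _ a2
      have hle := Nat.le_of_dvd (by omega) a1
      have hv : (((i.val % d : ℕ) : ZMod (k + 1))).val = i.val % d := by
        rw [ZMod.val_natCast, Nat.mod_eq_of_lt (by omega)]
      have hi : i.val % d = (((i.val % d : ℕ) : ZMod (k + 1))).val % d := by
        rw [hv, Nat.mod_mod]
      rw [a4 _ _ hi, b4 _ _ hi]
      exact congrFun h ⟨i.val % d, hlt⟩

lemma full_type {k : ℕ} (p : ZMod (k + 1) → Fin r × Fin r) (hp : ∀ i, (p i).1 ≠ (p i).2) :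
    (can (fun i : ZMod (k + 1) => i), p) ∈ Types r k ∧
      tev (can (fun i : ZMod (k + 1) => i), p) = k + 1 ∧
      tnv (can (fun i : ZMod (k + 1) => i), p) = k + 1 := by
  set w := can (fun i : ZMod (k + 1) => i) with hw
  have hker : SameKer w (fun i : ZMod (k + 1) => i) := can_ker _
  have hT : (w, p) ∈ Types r k := by
    simp only [Types, mem_filter, mem_univ, true_and]
    refine ⟨can_congr _ _ hker, hp, ?_⟩
    rw [ker_val _ _ hker]
    intro i j
    simp only [hh, gg, Prod.mk.injEq]
    refine ⟨?_, ?_, ?_, ?_⟩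
    · rintro ⟨rfl, -⟩; exact ⟨rfl, rfl⟩
    · rintro ⟨h, -⟩
      have := add_right_cancel h
      subst this; exact ⟨rfl, rfl⟩
    · rintro ⟨h0, h⟩
      rw [← h0] at h
      exact absurd h (hp _)
    · intro h0
      obtain ⟨h, h2⟩ := Prod.mk.inj h0
      rw [← h] at h2
      exact hp _ h2
  have hn : tnv (w, p) = k + 1 := by
    rw [tnv_eq]
    have h1 : (univ.image w).card = (univ.image (fun i : ZMod (k + 1) => i)).card := by
      convert card_image_ker _ _ hker
    change (univ.image w).card = k + 1
    rw [h1, Finset.card_image_of_injective _ (fun a b h => h), card_univ, ZMod.card]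
  have h2 := tnv_le_tev _ hT
  rw [hn] at h2
  exact ⟨hT, le_antisymm (tev_le _) h2, hn⟩

lemma full_count (r k : ℕ) :
    ((Types r k).filter (fun T => tev T = k + 1 ∧ tnv T = k + 1)).card = (r * r - r) ^ (k + 1) := by
  apply le_antisymm (tight_count r k (k + 1))
  have hN : (univ.filter (fun q : ZMod (k + 1) → Fin r × Fin r => ∀ i, (q i).1 ≠ (q i).2)).card
      = (r * r - r) ^ (k + 1) := by
    have := NB_card r (ZMod (k + 1))
    rwa [ZMod.card] at this
  rw [← hN]
  apply Finset.card_le_card_of_injOn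
    (fun q : ZMod (k + 1) → Fin r × Fin r => (can (fun i : ZMod (k + 1) => i), q))
  · intro q hq
    rw [mem_coe, mem_filter] at hq
    rw [mem_coe, mem_filter]
    exact full_type q hq.2
  · intro q _ q' _ h
    exact (Prod.mk.inj h).2

end PartE
end Fried

namespace Fried
section PartE2
open Finset Polynomial

/-- The common denominator. -/
noncomputable def gq (r q : ℕ) : ℝ[X] :=
  ∏ j ∈ range q, (1 - C ((2 * (j : ℝ) + 1) / r) * X)

/-- The numerator polynomial. -/
noncomputable def Pk (r q k : ℕ) : ℝ[X] :=
  ∑ T ∈ Types r k, X ^ (tev T - tnv T) * (∏ i ∈ range (tnv T), (1 - C (i : ℝ) * X)) *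
    C (((r : ℝ) ^ tev T)⁻¹) * ∏ j ∈ Ico (tev T) q, (1 - C ((2 * (j : ℝ) + 1) / r) * X)

lemma natDegree_lin (c : ℝ) : (1 - C c * X : ℝ[X]).natDegree ≤ 1 := by
  have : (1 - C c * X : ℝ[X]) = C (-c) * X + C 1 := by simp; ring
  rw [this]; exact natDegree_linear_le

lemma natDegree_linprod {ι : Type*} (s : Finset ι) (c : ι → ℝ) :
    (∏ i ∈ s, (1 - C (c i) * X : ℝ[X])).natDegree ≤ s.card := by
  refine (natDegree_prod_le _ _).trans ?_
  refine (Finset.sum_le_sum (fun i _ => natDegree_lin (c i))).trans ?_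
  simp

lemma Pk_natDegree (r q k : ℕ) (hk : k + 1 ≤ q) : (Pk r q k).natDegree ≤ q := by
  apply natDegree_sum_le_of_forall_le
  intro T hT
  have h1 := tnv_le_tev T hT
  have h2 := tev_le T
  have e1 : (X ^ (tev T - tnv T) : ℝ[X]).natDegree ≤ tev T - tnv T := natDegree_X_pow_le _
  have e2 := natDegree_linprod (range (tnv T)) (fun i => (i : ℝ))
  have e3 := natDegree_linprod (Ico (tev T) q) (fun j => (2 * (j : ℝ) + 1) / r)
  rw [card_range] at e2
  rw [Nat.card_Ico] at e3
  refine natDegree_mul_le.trans ?_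
  have := (natDegree_mul_C_le (X ^ (tev T - tnv T) * ∏ i ∈ range (tnv T), (1 - C (i : ℝ) * X))
    (((r : ℝ) ^ tev T)⁻¹)).trans natDegree_mul_le
  omega

lemma desc_eval (n v : ℕ) (hn : 0 < n) :
    (n.descFactorial v : ℝ) = (n : ℝ) ^ v * ∏ i ∈ range v, (1 - (i : ℝ) * (1 / n)) := by
  have hn' : (n : ℝ) ≠ 0 := by positivity
  rw [← Finset.card_range v, ← Finset.prod_const, card_range, ← Finset.prod_mul_distrib]
  induction v with
  | zero => simp
  | succ v ih =>
    rw [Nat.descFactorial_succ, Finset.prod_range_succ, ← ih]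
    push_cast
    rcases le_or_gt v n with h | h
    · rw [Nat.cast_sub h]; field_simp
    · rw [Nat.descFactorial_eq_zero_iff_lt.2 h]; simp

lemma Pk_eval (r q k n : ℕ) (hr : 0 < r) (hn : 0 < n) (hk : k + 1 ≤ q) (hq : 2 * q ≤ n * r) :
    ∑ T ∈ Types r k, (n.descFactorial (tnv T) : ℝ) /
       ∏ j ∈ range (tev T), (((n * r : ℕ) : ℝ) - 1 - 2 * j) =
    (Pk r q k).eval (1 / (n : ℝ)) / (gq r q).eval (1 / (n : ℝ)) := by
  have hn' : (n : ℝ) ≠ 0 := by positivity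
  have hr' : (r : ℝ) ≠ 0 := by positivity
  have hfac : ∀ j ∈ range q, (1 - (2 * (j : ℝ) + 1) / r * (1 / n)) ≠ 0 := by
    intro j hj
    have h1 := factor_pos (n * r) (q - 1) q j (by omega) (by omega) hj
    have : (1 - (2 * (j : ℝ) + 1) / r * (1 / n)) = (((n * r : ℕ) : ℝ) - 1 - 2 * j) / (n * r) := by
      push_cast; field_simp; ring
    rw [this]
    exact div_ne_zero h1.ne' (by positivity)
  rw [Pk, gq, eval_finsetSum, Finset.sum_div]
  apply Finset.sum_congr rfl
  intro T hT
  have h1 := tnv_le_tev T hT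
  have h2 := tev_le T
  simp only [eval_mul, eval_pow, eval_X, eval_prod, eval_sub, eval_one, eval_C]
  rw [← Finset.prod_range_mul_prod_Ico _ (show tev T ≤ q by omega)]
  have hA : ∏ j ∈ range (tev T), (1 - (2 * (j : ℝ) + 1) / r * (1 / n)) ≠ 0 :=
    Finset.prod_ne_zero_iff.2 (fun j hj => hfac j (mem_range.2 (by have := mem_range.1 hj; omega)))
  have hB : ∏ j ∈ Ico (tev T) q, (1 - (2 * (j : ℝ) + 1) / r * (1 / n)) ≠ 0 :=
    Finset.prod_ne_zero_iff.2 (fun j hj => hfac j (mem_range.2 (by have := mem_Ico.1 hj; omega)))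
  have hC : ∏ j ∈ range (tev T), (((n * r : ℕ) : ℝ) - 1 - 2 * j) =
      ((n : ℝ) * r) ^ tev T * ∏ j ∈ range (tev T), (1 - (2 * (j : ℝ) + 1) / r * (1 / n)) := by
    conv_rhs => rw [← Finset.card_range (tev T), ← Finset.prod_const, card_range, ← Finset.prod_mul_distrib]
    apply Finset.prod_congr rfl
    intro j _
    push_cast; field_simp; ring
  rw [hC, desc_eval n _ hn]
  obtain ⟨s, hs⟩ : ∃ s, tev T = tnv T + s := ⟨tev T - tnv T, by omega⟩
  have hs' : tev T - tnv T = s := by omega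
  rw [hs']
  rw [div_eq_div_iff (by positivity) (mul_ne_zero hA hB)]
  generalize ∏ j ∈ range (tev T), (1 - (2 * (j : ℝ) + 1) / r * (1 / n)) = A at *
  generalize ∏ j ∈ Ico (tev T) q, (1 - (2 * (j : ℝ) + 1) / r * (1 / n)) = B at *
  generalize ∏ i ∈ range (tnv T), (1 - (i : ℝ) * (1 / n)) = D at *
  rw [mul_pow, hs, one_div, inv_pow]
  field_simp
  rw [pow_add]
  ring

lemma Pk_zero (r q k : ℕ) (hr : 2 ≤ r) :
    |(Pk r q k).eval 0 - ((r : ℝ) - 1) ^ (k + 1)| ≤ (k + 1) * √((r : ℝ) - 1) ^ (k + 1) := by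
  have hr2 : (2 : ℝ) ≤ r := by exact_mod_cast hr
  have hr' : (r : ℝ) ≠ 0 := by positivity
  have e1 : (Pk r q k).eval 0 = ∑ T ∈ (Types r k).filter (fun T => tev T = tnv T),
      ((r : ℝ) ^ tev T)⁻¹ := by
    rw [Pk, eval_finsetSum, Finset.sum_filter]
    apply Finset.sum_congr rfl
    intro T hT
    have h1 := tnv_le_tev T hT
    simp only [eval_mul, eval_pow, eval_X, eval_prod, eval_sub, eval_one, eval_C, mul_zero, sub_zero,
      Finset.prod_const_one, mul_one]
    split_ifs with h
    · rw [h]; simp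
    · rw [zero_pow (by omega), zero_mul]
  have e2 : (Pk r q k).eval 0 = ∑ d ∈ range (k + 2),
      (((Types r k).filter (fun T => tev T = d ∧ tnv T = d)).card : ℝ) * ((r : ℝ) ^ d)⁻¹ := by
    rw [e1, ← Finset.sum_fiberwise_of_maps_to (t := range (k + 2)) (g := fun T => tev T)
      (fun T _ => mem_range.2 (by have := tev_le T; omega))]
    apply Finset.sum_congr rfl
    intro d _
    rw [Finset.filter_filter, Finset.sum_congr rfl (g := fun _ => ((r : ℝ) ^ d)⁻¹)]
    · rw [Finset.sum_const, nsmul_eq_mul]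
      congr 3
      ext T
      simp only [mem_filter]
      constructor
      · rintro ⟨h, h1, h2⟩; exact ⟨h, h2, by omega⟩
      · rintro ⟨h, h1, h2⟩; exact ⟨h, by omega, by omega⟩
    · intro T hT
      rw [(mem_filter.1 hT).2.2]
  have e3 : ∀ d, (((r * r - r) ^ d : ℕ) : ℝ) * ((r : ℝ) ^ d)⁻¹ = ((r : ℝ) - 1) ^ d := by
    intro d
    have : ((r * r - r : ℕ) : ℝ) = r * (r - 1) := by
      rw [Nat.cast_sub (Nat.le_mul_self r)]; push_cast; ring
    rw [Nat.cast_pow, this, mul_pow]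
    field_simp
  rw [e2, Finset.sum_range_succ, full_count, e3, add_sub_cancel_right, abs_of_nonneg
    (Finset.sum_nonneg (fun d _ => by positivity))]
  have e4 : ∀ d ∈ range (k + 1), (((Types r k).filter (fun T => tev T = d ∧ tnv T = d)).card : ℝ) *
      ((r : ℝ) ^ d)⁻¹ ≤ √((r : ℝ) - 1) ^ (k + 1) := by
    intro d hd
    have ha : 1 ≤ √((r : ℝ) - 1) := by rw [Real.one_le_sqrt]; linarith
    by_cases hz : ((Types r k).filter (fun T => tev T = d ∧ tnv T = d)).Nonempty
    · obtain ⟨T, hT⟩ := hz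
      obtain ⟨hT, h1, h2⟩ := mem_filter.1 hT
      have h3 := (tight_type T hT (h1.trans h2.symm)).1
      rw [h2] at h3
      obtain ⟨c, hc⟩ := h3
      have hd' := mem_range.1 hd
      have hc2 : 2 ≤ c := by
        by_contra hlt
        interval_cases c <;> omega
      have : 2 * d ≤ k + 1 := by rw [hc]; nlinarith
      calc _ ≤ (((r * r - r) ^ d : ℕ) : ℝ) * ((r : ℝ) ^ d)⁻¹ := by
            gcongr; exact tight_count r k d
        _ = √((r : ℝ) - 1) ^ (2 * d) := by
            rw [e3, pow_mul, Real.sq_sqrt (by linarith)]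
        _ ≤ _ := pow_le_pow_right₀ ha this
    · rw [Finset.not_nonempty_iff_eq_empty] at hz
      rw [hz]; simp
  refine (Finset.sum_le_sum e4).trans ?_
  rw [Finset.sum_const, card_range, nsmul_eq_mul]
  push_cast; exact le_rfl

lemma gq_bounds (r q : ℕ) (hr : 0 < r) (x : ℝ) (hx : 0 ≤ x) (hx2 : (2 * q : ℝ) * x ≤ r) :
    1 - (q : ℝ) ^ 2 * x / r ≤ (gq r q).eval x ∧ (gq r q).eval x ≤ 1 ∧ 0 ≤ (gq r q).eval x := by
  have hr' : (0 : ℝ) < r := by exact_mod_cast hr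
  rw [gq]
  induction q with
  | zero => simp
  | succ q ih =>
    rw [Finset.prod_range_succ, eval_mul]
    push_cast at hx2
    obtain ⟨h1, h2, h3⟩ := ih (by nlinarith)
    set G := eval x (∏ j ∈ range q, (1 - C ((2 * (j : ℝ) + 1) / r) * X))
    simp only [eval_sub, eval_one, eval_mul, eval_C, eval_X]
    set y := (2 * (q : ℝ) + 1) / r * x with hy
    have hy0 : 0 ≤ y := by positivity
    have hy1 : y ≤ 1 := by
      rw [hy, div_mul_eq_mul_div, div_le_one hr']; nlinarith
    refine ⟨?_, by nlinarith, by nlinarith⟩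
    have : ((q + 1 : ℕ) : ℝ) ^ 2 * x / r = (q : ℝ) ^ 2 * x / r + y := by
      rw [hy]; push_cast; field_simp; ring
    rw [this]
    nlinarith

end PartE2
end Fried

namespace Fried
section PartF
open Finset Matrix Polynomial

lemma dick_comp (a : ℝ) (k : ℕ) :
    (dickson 1 (a ^ 2) k).comp (C (2 * a) * X) = C (2 * a ^ k) * Chebyshev.T ℝ (k : ℤ) ∧
    (dickson 1 (a ^ 2) (k + 1)).comp (C (2 * a) * X)
      = C (2 * a ^ (k + 1)) * Chebyshev.T ℝ ((k + 1 : ℕ) : ℤ) := by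
  induction k with
  | zero => 
    constructor
    · rw [dick0]; simp
    · simp
  | succ k ih =>
    refine ⟨ih.2, ?_⟩
    rw [dickson_add_two]
    have e : ((k + 1 + 1 : ℕ) : ℤ) = (k : ℤ) + 2 := by push_cast; ring
    have e' : ((k + 1 : ℕ) : ℤ) = (k : ℤ) + 1 := by push_cast; ring
    rw [e, Chebyshev.T_add_two, sub_comp, mul_comp, mul_comp, X_comp, C_comp, ih.1, ih.2, e']
    simp only [map_mul, map_pow, map_ofNat]
    ring

lemma dick_eval_r (r : ℝ) (k : ℕ) : (dickson 1 (r - 1) k).eval r = (r - 1) ^ k + 1 ∧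
    (dickson 1 (r - 1) (k + 1)).eval r = (r - 1) ^ (k + 1) + 1 := by
  induction k with
  | zero => 
    constructor
    · rw [dick0]; simp; norm_num
    · simp
  | succ k ih =>
    refine ⟨ih.2, ?_⟩
    rw [dickson_add_two, eval_sub, eval_mul, eval_mul, ih.1, ih.2]
    simp
    ring

lemma dickson_expand (a : ℝ) (ha : 0 < a) (q : ℕ) (h : ℝ[X]) (hq : h.natDegree ≤ q) (K : ℝ)
    (hK : ∀ x, |x| ≤ 2 * a → |h.eval x| ≤ K) :
    ∃ c : ℕ → ℝ, h = ∑ k ∈ range (q + 1), C (c k) * dickson 1 (a ^ 2) k ∧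
      ∀ k ≤ q, |c k| * a ^ k ≤ K := by
  obtain ⟨c, hc, hb⟩ := cheb_expand q (h.comp (C (2 * a) * X)) (by
    rw [natDegree_comp]
    calc _ ≤ h.natDegree * 1 := by
            gcongr; exact (natDegree_C_mul_le _ _).trans (by simp)
      _ ≤ q := by omega) K (by
    intro x hx
    rw [eval_comp]
    apply hK
    simp only [eval_mul, eval_C, eval_X]
    rw [abs_mul, abs_of_pos (by positivity : 0 < 2 * a)]
    nlinarith)
  refine ⟨fun k => c k / (2 * a ^ k), ?_, ?_⟩
  · have e : h = (h.comp (C (2 * a) * X)).comp (C (1 / (2 * a)) * X) := by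
      rw [comp_assoc]
      simp only [mul_comp, C_comp, X_comp]
      rw [← mul_assoc, ← C_mul]
      have : 2 * a * (1 / (2 * a)) = 1 := by field_simp
      rw [this]; simp
    have e2 : (∑ k ∈ range (q + 1), C (c k / (2 * a ^ k)) * dickson 1 (a ^ 2) k)
        = ((∑ k ∈ range (q + 1), C (c k / (2 * a ^ k)) * dickson 1 (a ^ 2) k).comp
            (C (2 * a) * X)).comp (C (1 / (2 * a)) * X) := by
      rw [comp_assoc]
      simp only [mul_comp, C_comp, X_comp]
      rw [← mul_assoc, ← C_mul]
      have : 2 * a * (1 / (2 * a)) = 1 := by field_simp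
      rw [this]; simp
    rw [e2, e]
    congr 1
    rw [hc, ← coe_compRingHom_apply, map_sum]
    simp only [coe_compRingHom_apply]
    apply Finset.sum_congr rfl
    intro k _
    rw [mul_comp, (dick_comp a k).1, C_comp, ← mul_assoc, ← C_mul]
    congr 2
    field_simp
  · intro k hk
    have := hb k hk
    simp only
    rw [abs_div, abs_of_pos (by positivity : 0 < 2 * a ^ k)]
    have : |c k| / (2 * a ^ k) * a ^ k = |c k| / 2 := by field_simp
    linarith

lemma master1 (r q : ℕ) (hr : 2 ≤ r) (h : ℝ[X]) (hq : h.natDegree ≤ q) (K : ℝ)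
    (hK : ∀ x, |x| ≤ 2 * √((r : ℝ) - 1) → |h.eval x| ≤ K) :
    ∃ (κ : ℝ) (P : ℝ[X]), P.natDegree ≤ q ∧ |κ| ≤ r * (q + 1) * K ∧
      |P.eval 0 - h.eval (r : ℝ)| ≤ 2 * (q + 1) ^ 2 * K ∧
      ∀ n : ℕ, 0 < n → 2 * q ≤ n * r →
        ∑ σ ∈ PM (Fin n × Fin r), (aeval (Am σ) h).trace =
          (PM (Fin n × Fin r)).card * (n * κ + P.eval (1 / (n : ℝ)) / (gq r q).eval (1 / (n : ℝ))) := by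
  have hr2 : (2 : ℝ) ≤ r := by exact_mod_cast hr
  have ha1 : 1 ≤ √((r : ℝ) - 1) := by
    rw [Real.one_le_sqrt]; linarith
  have hasq : √((r : ℝ) - 1) ^ 2 = (r : ℝ) - 1 := Real.sq_sqrt (by linarith)
  obtain ⟨c, hc, hb⟩ := dickson_expand (√((r : ℝ) - 1)) (by linarith) q h hq K hK
  rw [hasq] at hc
  have hK0 : 0 ≤ K := (abs_nonneg _).trans (hK 0 (by simp))
  have hb1 : ∀ k ≤ q, |c k| ≤ K := fun k hk => by
    refine le_trans ?_ (hb k hk)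
    exact le_mul_of_one_le_right (abs_nonneg _) (one_le_pow₀ ha1)
  rw [Finset.sum_range_succ'] at hc
  refine ⟨2 * c 0 - ∑ k ∈ range q, c (k + 1) * (if Even (k + 1) then (r : ℝ) - 2 else 0),
    ∑ k ∈ range q, C (c (k + 1)) * Pk r q k, ?_, ?_, ?_, ?_⟩
  · apply natDegree_sum_le_of_forall_le
    intro k hk
    rw [mem_range] at hk
    exact (natDegree_C_mul_le _ _).trans (Pk_natDegree r q k hk)
  · have h1 : |∑ k ∈ range q, c (k + 1) * (if Even (k + 1) then (r : ℝ) - 2 else 0)|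
        ≤ ∑ k ∈ range q, K * (r - 2) := by
      refine (Finset.abs_sum_le_sum_abs _ _).trans (Finset.sum_le_sum fun k hk => ?_)
      rw [mem_range] at hk
      rw [abs_mul]
      apply mul_le_mul (hb1 _ (by omega)) _ (abs_nonneg _) hK0
      split_ifs
      · rw [abs_of_nonneg]; linarith
      · simp; linarith
    rw [Finset.sum_const, card_range, nsmul_eq_mul] at h1
    have h2 := hb1 0 (by omega)
    have h3 : |2 * c 0| ≤ 2 * K := by rw [abs_mul]; norm_num; linarith
    refine (abs_sub _ _).trans ?_
    have : (0 : ℝ) ≤ q := by positivity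
    nlinarith [mul_nonneg this hK0]
  · have e : (∑ k ∈ range q, C (c (k + 1)) * Pk r q k).eval 0 - h.eval (r : ℝ) =
        ∑ k ∈ range q, c (k + 1) * (((Pk r q k).eval 0 - ((r : ℝ) - 1) ^ (k + 1)) - 1) - 2 * c 0 := by
      rw [hc, eval_add, eval_finsetSum, eval_finsetSum]
      simp only [eval_mul, eval_C, (dick_eval_r (r : ℝ) _).2, (dick_eval_r (r : ℝ) 0).1]
      rw [← sub_sub, ← Finset.sum_sub_distrib]
      congr 1
      · apply Finset.sum_congr rfl; intros; ring
      · simp; ring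
    rw [e]
    have h1 : |∑ k ∈ range q, c (k + 1) * (((Pk r q k).eval 0 - ((r : ℝ) - 1) ^ (k + 1)) - 1)|
        ≤ ∑ k ∈ range q, (K * q + K) := by
      refine (Finset.abs_sum_le_sum_abs _ _).trans (Finset.sum_le_sum fun k hk => ?_)
      rw [mem_range] at hk
      have hz := Pk_zero r q k hr
      have h3 := hb (k + 1) hk
      have h4 := hb1 (k + 1) hk
      rw [mul_sub, mul_one]
      refine (abs_sub _ _).trans (add_le_add ?_ h4)
      rw [abs_mul]
      calc _ ≤ |c (k + 1)| * ((k + 1) * √((r : ℝ) - 1) ^ (k + 1)) := by gcongr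
        _ = (|c (k + 1)| * √((r : ℝ) - 1) ^ (k + 1)) * ((k + 1 : ℕ) : ℝ) := by push_cast; ring
        _ ≤ K * q := by
          gcongr
          exact_mod_cast hk
    rw [Finset.sum_const, card_range, nsmul_eq_mul] at h1
    have h2 := hb1 0 (by omega)
    have h3 : |2 * c 0| ≤ 2 * K := by rw [abs_mul]; norm_num; linarith
    refine (abs_sub _ _).trans ?_
    have : (0 : ℝ) ≤ q := by positivity
    nlinarith [mul_nonneg this hK0, mul_nonneg (mul_nonneg this this) hK0]
  · intro n hn hqn
    have step : ∀ σ ∈ PM (Fin n × Fin r), (aeval (Am σ) h).trace =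
        (∑ k ∈ range q, c (k + 1) * (Bm σ ^ (k + 1)).trace) +
         n * (2 * c 0 - ∑ k ∈ range q, c (k + 1) * (if Even (k + 1) then (r : ℝ) - 2 else 0)) := by
      intro σ hσ
      conv_lhs => rw [hc]
      rw [map_add, map_sum, Matrix.trace_add, Matrix.trace_sum]
      simp only [map_mul, aeval_C, trace_Bm_pow σ hσ]
      rw [dick0, aeval_C]
      simp only [Algebra.algebraMap_eq_smul_one, smul_mul_assoc, one_mul, Matrix.trace_smul, Matrix.trace_one,
        smul_eq_mul, Fintype.card_fin]
      rw [mul_sub, Finset.mul_sum, ← add_sub_assoc, add_sub_right_comm, ← Finset.sum_sub_distrib]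
      congr 1
      · apply Finset.sum_congr rfl
        intro k _
        split_ifs <;> ring
      · ring
    rw [Finset.sum_congr rfl step, Finset.sum_add_distrib, Finset.sum_comm]
    simp only [← Finset.mul_sum]
    rw [Finset.sum_const, nsmul_eq_mul, mul_add, add_comm, eval_finsetSum, Finset.sum_div, Finset.mul_sum]
    congr 1
    · ring
    apply Finset.sum_congr rfl
    intro k hk
    rw [mem_range] at hk
    have h1 : 2 * (k + 1) ≤ n * r := by omega
    rw [E_trace n k h1, Pk_eval r q k n (by omega) hn hk hqn, eval_mul, eval_C]
    ring

end PartF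
end Fried

namespace Fried
section PartF2
open Finset Matrix Polynomial

variable {V : Type*} [Fintype V] [DecidableEq V]

lemma trace_aeval (A : Matrix V V ℝ) (hA : A.IsHermitian) (h : ℝ[X]) :
    (aeval A h).trace = ∑ i, h.eval (hA.eigenvalues i) := by
  have key : ∀ d : V → ℝ, aeval (Matrix.diagonal d) h = Matrix.diagonal (fun i => h.eval (d i)) := by
    intro d
    have := Polynomial.aeval_algHom_apply (Matrix.diagonalAlgHom ℝ (n := V) (α := ℝ)) d h
    simp only [Matrix.diagonalAlgHom_apply] at this
    rw [this]
    congr 1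
    funext i
    have h2 := Polynomial.aeval_algHom_apply (Pi.evalAlgHom ℝ (fun _ : V => ℝ) i) d h
    simp only [Pi.evalAlgHom_apply] at h2
    rw [← h2]
    simp [Polynomial.aeval_def, Polynomial.eval₂_eq_eval_map]
  conv_lhs => rw [hA.spectral_theorem]
  have h1 := Polynomial.aeval_algHom_apply (((Unitary.conjStarAlgAut ℝ (Matrix V V ℝ))
    hA.eigenvectorUnitary).toAlgEquiv.toAlgHom) (diagonal (RCLike.ofReal ∘ hA.eigenvalues)) h
  have h3 : (aeval ((Unitary.conjStarAlgAut ℝ (Matrix V V ℝ)) hA.eigenvectorUnitary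
      (diagonal (RCLike.ofReal ∘ hA.eigenvalues)))) h =
      (Unitary.conjStarAlgAut ℝ (Matrix V V ℝ)) hA.eigenvectorUnitary
       ((aeval (diagonal (RCLike.ofReal ∘ hA.eigenvalues))) h) := h1
  rw [h3, key, Unitary.conjStarAlgAut_apply, Matrix.trace_mul_comm, ← mul_assoc]
  simp [Matrix.trace]

lemma eig_expand (A : Matrix V V ℝ) (hA : A.IsHermitian) (f : V → ℝ) (u : V) :
    f u = ∑ i, ((hA.eigenvectorBasis i).ofLp ⬝ᵥ f) * (hA.eigenvectorBasis i).ofLp u := by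
  have h1 := hA.eigenvectorBasis.sum_repr (WithLp.toLp 2 f)
  have h2 := congrArg (fun x => x.ofLp u) h1
  simp only at h2
  rw [← h2]
  simp only [WithLp.ofLp_sum, WithLp.ofLp_smul, Finset.sum_apply, Pi.smul_apply, smul_eq_mul]
  apply Finset.sum_congr rfl
  intro i _
  rw [OrthonormalBasis.repr_apply_apply, EuclideanSpace.inner_eq_star_dotProduct]
  simp [dotProduct_comm]

lemma eig_coef (A : Matrix V V ℝ) (hA : A.IsHermitian) (f : V → ℝ) (μ : ℝ) (hf : A *ᵥ f = μ • f)
    (i : V) (hi : hA.eigenvalues i ≠ μ) : (hA.eigenvectorBasis i).ofLp ⬝ᵥ f = 0 := by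
  have h1 : (hA.eigenvectorBasis i).ofLp ⬝ᵥ (A *ᵥ f) =
      hA.eigenvalues i * ((hA.eigenvectorBasis i).ofLp ⬝ᵥ f) := by
    rw [Matrix.dotProduct_mulVec, ← Matrix.mulVec_transpose]
    have : Aᵀ = A := by rw [← Matrix.conjTranspose_eq_transpose_of_trivial]; exact hA
    rw [this, hA.mulVec_eigenvectorBasis, smul_dotProduct, smul_eq_mul]
  rw [hf, dotProduct_smul, smul_eq_mul] at h1
  have : (hA.eigenvalues i - μ) * ((hA.eigenvectorBasis i).ofLp ⬝ᵥ f) = 0 := by linarith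
  rcases mul_eq_zero.1 this with h | h
  · exact absurd (by linarith) hi
  · exact h

variable (A : Matrix V V ℝ) (hA : A.IsHermitian) (r : ℝ)

lemma one_eig (hrow : ∀ u, ∑ v, A u v = r) : A *ᵥ (fun _ => 1) = r • (fun _ => (1 : ℝ)) := by
  funext u; simp [Matrix.mulVec, dotProduct, hrow]

lemma exists_eig_r [Nonempty V] (hrow : ∀ u, ∑ v, A u v = r) : ∃ i, hA.eigenvalues i = r := by
  by_contra hcon
  push Not at hcon
  have u : V := Classical.arbitrary V
  have := eig_expand A hA (fun _ => 1) u
  rw [Finset.sum_eq_zero] at this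
  · norm_num at this
  · intro i _
    rw [eig_coef A hA _ r (one_eig A r hrow) i (hcon i), zero_mul]

lemma eig_abs_le (hrow : ∀ u, ∑ v, A u v = r) (hnn : ∀ u v, 0 ≤ A u v) (i : V) :
    |hA.eigenvalues i| ≤ r := by
  set w := (hA.eigenvectorBasis i).ofLp with hw
  have hw0 : ∃ u, w u ≠ 0 := by
    by_contra hcon
    push Not at hcon
    have : hA.eigenvectorBasis i = 0 := by
      ext u; exact hcon u
    exact hA.eigenvectorBasis.orthonormal.ne_zero i this
  obtain ⟨u0, hu0⟩ := hw0
  obtain ⟨u, -, hu⟩ := Finset.exists_max_image univ (fun u => |w u|) ⟨u0, mem_univ _⟩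
  have hpos : 0 < |w u| := lt_of_lt_of_le (abs_pos.2 hu0) (hu u0 (mem_univ _))
  have h1 : (A *ᵥ w) u = hA.eigenvalues i * w u := by
    rw [hw, hA.mulVec_eigenvectorBasis]; rfl
  have h2 : |(A *ᵥ w) u| ≤ r * |w u| := by
    rw [← hrow u, Finset.sum_mul]
    refine (Finset.abs_sum_le_sum_abs _ _).trans (Finset.sum_le_sum fun v _ => ?_)
    rw [abs_mul, abs_of_nonneg (hnn u v)]
    exact mul_le_mul_of_nonneg_left (hu v (mem_univ _)) (hnn u v)
  rw [h1, abs_mul] at h2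
  exact le_of_mul_le_mul_right h2 hpos

/-- Spectral badness. -/
def BadSpec (b : ℝ) : Prop :=
  (∃ μ ∈ spectrum ℝ A, μ ≠ r ∧ b ≤ μ) ∨ (∃ f : V → ℝ, A *ᵥ f = r • f ∧ ∃ u v, f u ≠ f v)

lemma two_eig [Nonempty V] (hrow : ∀ u, ∑ v, A u v = r) (b : ℝ) (hb : b ≤ r)
    (hbad : BadSpec A r b) : ∃ i j, i ≠ j ∧ hA.eigenvalues i = r ∧ b ≤ hA.eigenvalues j := by
  obtain ⟨i, hi⟩ := exists_eig_r A hA r hrow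
  rcases hbad with ⟨μ, hμ, hμr, hbμ⟩ | ⟨f, hf, u, v, huv⟩
  · rw [hA.spectrum_real_eq_range_eigenvalues] at hμ
    obtain ⟨j, rfl⟩ := hμ
    exact ⟨i, j, fun h => hμr (by rw [← h, hi]), hi, hbμ⟩
  · by_contra hcon
    push Not at hcon
    have hne : ∀ j, j ≠ i → hA.eigenvalues j ≠ r := by
      intro j hj h
      have := hcon i j hj.symm hi
      linarith
    have ex : ∀ g : V → ℝ, A *ᵥ g = r • g → ∀ x, g x = ((hA.eigenvectorBasis i).ofLp ⬝ᵥ g) *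
        (hA.eigenvectorBasis i).ofLp x := by
      intro g hg x
      rw [eig_expand A hA g x]
      conv_lhs => rw [← eig_expand A hA g x]
      conv_lhs => rw [eig_expand A hA g x]
      apply Finset.sum_eq_single
      · intro j _ hj
        rw [eig_coef A hA g r hg j (hne j hj), zero_mul]
      · simp
    have e1 := ex _ (one_eig A r hrow)
    have eu := e1 u
    have ev := e1 v
    have fu := ex f hf u
    have fv := ex f hf v
    simp only at eu ev
    set c := (hA.eigenvectorBasis i).ofLp ⬝ᵥ fun _ => (1 : ℝ)
    have hc : c ≠ 0 := by rintro h; rw [h] at eu; norm_num at eu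
    apply huv
    rw [fu, fv]
    congr 1
    apply mul_left_cancel₀ hc
    rw [← eu, ← ev]

lemma tr_nonneg (hrow : ∀ u, ∑ v, A u v = r) (hnn : ∀ u v, 0 ≤ A u v) (hAs : A.IsHermitian) (h : ℝ[X])
    (h01 : ∀ x, -r ≤ x → x ≤ r → 0 ≤ h.eval x ∧ h.eval x ≤ 1) :
    0 ≤ (aeval A h).trace ∧ (aeval A h).trace ≤ Fintype.card V := by
  have hl := fun i => abs_le.1 (eig_abs_le A hAs r hrow hnn i)
  rw [trace_aeval A hAs]
  refine ⟨Finset.sum_nonneg fun i _ => (h01 _ (hl i).1 (hl i).2).1, ?_⟩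
  calc _ ≤ ∑ i : V, (1 : ℝ) := Finset.sum_le_sum fun i _ => (h01 _ (hl i).1 (hl i).2).2
    _ = _ := by simp

lemma tr_lower [Nonempty V] (hrow : ∀ u, ∑ v, A u v = r) (hnn : ∀ u v, 0 ≤ A u v)
    (hAs : A.IsHermitian) (h : ℝ[X]) (b δ : ℝ) (hbr : b ≤ r)
    (h01 : ∀ x, -r ≤ x → x ≤ r → 0 ≤ h.eval x ∧ h.eval x ≤ 1)
    (hb : ∀ x, b ≤ x → x ≤ r → 1 - δ ≤ h.eval x) :
    h.eval r ≤ (aeval A h).trace ∧ (BadSpec A r b → h.eval r + (1 - δ) ≤ (aeval A h).trace) := by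
  have hl := fun i => abs_le.1 (eig_abs_le A hAs r hrow hnn i)
  have hnn' : ∀ i, 0 ≤ h.eval (hAs.eigenvalues i) := fun i => (h01 _ (hl i).1 (hl i).2).1
  rw [trace_aeval A hAs]
  constructor
  · obtain ⟨i, hi⟩ := exists_eig_r A hAs r hrow
    rw [← hi]
    exact Finset.single_le_sum (f := fun i => h.eval (hAs.eigenvalues i)) (fun i _ => hnn' i) (mem_univ i)
  · intro hbad
    obtain ⟨i, j, hij, hi, hj⟩ := two_eig A hAs r hrow b hbr hbad
    have h1 : ∑ k ∈ ({i, j} : Finset V), h.eval (hAs.eigenvalues k) ≤ ∑ k, h.eval (hAs.eigenvalues k) :=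
      Finset.sum_le_sum_of_subset_of_nonneg (Finset.subset_univ _) (fun k _ _ => hnn' k)
    rw [Finset.sum_pair hij, hi] at h1
    have := hb _ hj (hl j).2
    linarith

end PartF2
end Fried

namespace Fried
section PartF3
open Finset Matrix Polynomial

lemma two_sqrt_lt (r : ℕ) (hr : 3 ≤ r) : 2 * √((r : ℝ) - 1) < r := by
  have hr3 : (3 : ℝ) ≤ r := by exact_mod_cast hr
  have h1 := Real.sq_sqrt (show (0 : ℝ) ≤ r - 1 by linarith)
  have h2 := Real.sqrt_nonneg ((r : ℝ) - 1)
  nlinarith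

lemma Am_herm {n r : ℕ} (σ : Equiv.Perm (Fin n × Fin r)) (hσ : σ ∈ PM (Fin n × Fin r)) :
    (Am σ).IsHermitian := by
  rw [Matrix.IsHermitian, Matrix.conjTranspose_eq_transpose_of_trivial, Am_transpose σ hσ]

set_option maxHeartbeats 2000000 in
lemma bound_q (r q : ℕ) (hr : 3 ≤ r) (h : ℝ[X]) (hq : h.natDegree ≤ q) (K b : ℝ) (hK1 : K ≤ 1) (hbr : b ≤ r)
    (h01 : ∀ x, -(r : ℝ) ≤ x → x ≤ r → 0 ≤ h.eval x ∧ h.eval x ≤ 1)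
    (hb : ∀ x, b ≤ x → x ≤ r → 1 - K ≤ h.eval x)
    (hK : ∀ x, -(r : ℝ) ≤ x → x ≤ 2 * √((r : ℝ) - 1) → h.eval x ≤ K)
    (n : ℕ) (hn : 16 * (q + 1) ^ 3 ≤ n) :
    (((PM (Fin n × Fin r)).filter (fun σ => BadSpec (Am σ) r b)).card : ℝ) * (1 - K) ≤
     (PM (Fin n × Fin r)).card * (40000 * r * (q + 1) ^ 13 / n + (r * (q + 1) * n + 2 * (q + 1) ^ 2) * K) := by
  have hr3 : (3 : ℝ) ≤ r := by exact_mod_cast hr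
  have hlt := two_sqrt_lt r hr
  have hsn := Real.sqrt_nonneg ((r : ℝ) - 1)
  have hKa : ∀ x, |x| ≤ 2 * √((r : ℝ) - 1) → |h.eval x| ≤ K := by
    intro x hx
    obtain ⟨h1, h2⟩ := abs_le.1 hx
    rw [abs_of_nonneg (h01 x (by linarith) (by linarith)).1]
    exact hK x (by linarith) h2
  have hK0 : 0 ≤ K := (abs_nonneg _).trans (hKa 0 (by simp))
  obtain ⟨κ, P, hPd, hκ, hP0, hmain⟩ := master1 r q (by omega) h hq K hKa
  set Q : ℝ := (q : ℝ) + 1 with hQ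
  have hQ1 : 1 ≤ Q := by rw [hQ]; linarith [(Nat.cast_nonneg q : (0 : ℝ) ≤ q)]
  set L : ℕ := 8 * (q + 1) ^ 3 with hL
  have hLr : (L : ℝ) = 8 * Q ^ 3 := by rw [hL, hQ]; push_cast; ring
  have hqL : q ≤ L := by
    rw [hL]; nlinarith [Nat.zero_le q, sq_nonneg q, Nat.zero_le (q ^ 3), Nat.zero_le (q ^ 2)]
  have hκ' : |κ| ≤ r * Q := hκ.trans (by
    have : 0 ≤ r * Q := by positivity
    nlinarith)
  have hL1 : 1 ≤ L := by
    rw [hL]; have : 0 < (q + 1) ^ 3 := by positivity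
    omega
  have gb : ∀ m : ℕ, 2 * L ≤ m → 1 / 2 ≤ (gq r q).eval (1 / (m : ℝ)) ∧ (gq r q).eval (1 / (m : ℝ)) ≤ 1
      ∧ 1 - (q : ℝ) ^ 2 * (1 / m) ≤ (gq r q).eval (1 / (m : ℝ)) := by
    intro m hm
    have hm0 : (0 : ℝ) < m := by exact_mod_cast (by omega)
    have hmQ : 16 * Q ^ 3 ≤ m := by
      have : ((2 * L : ℕ) : ℝ) ≤ m := by exact_mod_cast hm
      push_cast at this; rw [hLr] at this; linarith
    have hqQ : (q : ℝ) ≤ Q := by rw [hQ]; linarith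
    have hq0 : (0 : ℝ) ≤ q := by positivity
    have hQ3 : Q ^ 2 ≤ Q ^ 3 := pow_le_pow_right₀ hQ1 (by norm_num)
    have hQ2 : Q ≤ Q ^ 3 := le_self_pow₀ hQ1 (by norm_num)
    have hqq : (q : ℝ) ^ 2 ≤ Q ^ 2 := by gcongr
    obtain ⟨g1, g2, g3⟩ := gq_bounds r q (by omega) (1 / (m : ℝ)) (by positivity) (by
      rw [mul_one_div, div_le_iff₀ hm0]
      nlinarith)
    have g4 : (q : ℝ) ^ 2 * (1 / m) / r ≤ (q : ℝ) ^ 2 * (1 / m) := by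
      apply div_le_self (by positivity); linarith
    have g5 : (q : ℝ) ^ 2 * (1 / m) ≤ 1 / 2 := by
      rw [mul_one_div, div_le_iff₀ hm0]; linarith
    exact ⟨by linarith, g2, by linarith⟩
  have hmq : ∀ m : ℕ, 2 * L ≤ m → 0 < m ∧ 2 * q ≤ m * r := by
    intro m hm
    refine ⟨by omega, ?_⟩
    calc 2 * q ≤ m * 1 := by omega
      _ ≤ m * r := by gcongr; omega
  set B : ℝ := 2 * (L : ℝ) ^ 2 * (1 + r * Q) with hB
  have hB0 : 0 ≤ B := by positivity
  obtain ⟨nb1, nb2⟩ := node_bound q L P hPd le_rfl B (by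
    intro j hj1 hj2
    have hm : 2 * L ≤ 2 * j := by omega
    obtain ⟨g1, g2, -⟩ := gb (2 * j) hm
    obtain ⟨hm0, hm1⟩ := hmq (2 * j) hm
    have hM := hmain (2 * j) hm0 hm1
    have hne : (PM (Fin (2 * j) × Fin r)).Nonempty := PM_nonempty (by
      simp only [Fintype.card_prod, Fintype.card_fin]
      rw [mul_assoc]; exact even_two_mul _)
    have hNpos : (0 : ℝ) < (PM (Fin (2 * j) × Fin r)).card := by exact_mod_cast hne.card_pos
    have htr := fun σ (hσ : σ ∈ PM (Fin (2 * j) × Fin r)) => tr_nonneg (Am σ) (r : ℝ) (Am_row σ) (Am_nonneg σ)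
      (Am_herm σ hσ) h h01
    have s1 : 0 ≤ ∑ σ ∈ PM (Fin (2 * j) × Fin r), (aeval (Am σ) h).trace :=
      Finset.sum_nonneg fun σ hσ => (htr σ hσ).1
    have s2 : ∑ σ ∈ PM (Fin (2 * j) × Fin r), (aeval (Am σ) h).trace ≤
        (PM (Fin (2 * j) × Fin r)).card * ((2 * j : ℕ) : ℝ) := by
      rw [← nsmul_eq_mul, ← Finset.sum_const]
      exact Finset.sum_le_sum fun σ hσ => (htr σ hσ).2.trans (by simp)
    rw [hM] at s1 s2
    have s1' := nonneg_of_mul_nonneg_right s1 hNpos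
    have s2' := le_of_mul_le_mul_left s2 hNpos
    push_cast at s1' s2' g1 g2
    set x := (1 : ℝ) / (2 * (j : ℝ)) with hx
    have hg : 0 < (gq r q).eval x := by linarith
    have hPg : |P.eval x / (gq r q).eval x| ≤ 2 * j * (1 + r * Q) := by
      obtain ⟨k1, k2⟩ := abs_le.1 hκ'
      have hj0 : (0 : ℝ) ≤ 2 * j := by positivity
      have k3 := mul_le_mul_of_nonneg_left k1 hj0
      have k4 := mul_le_mul_of_nonneg_left k2 hj0
      rw [abs_le]
      constructor <;> nlinarith
    rw [abs_div, abs_of_pos hg, div_le_iff₀ hg] at hPg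
    refine hPg.trans ?_
    have hjL : (j : ℝ) ≤ (L : ℝ) ^ 2 := by exact_mod_cast hj2
    calc 2 * (j : ℝ) * (1 + r * Q) * (gq r q).eval x ≤ 2 * (j : ℝ) * (1 + r * Q) * 1 := by gcongr
      _ ≤ B := by rw [mul_one, hB]; gcongr)
  have hnL : 2 * L ≤ n := by omega
  obtain ⟨hn0, hnq⟩ := hmq n hnL
  have hn0' : (0 : ℝ) < n := by exact_mod_cast hn0
  obtain ⟨g1, g2, g3⟩ := gb n hnL
  have hM := hmain n hn0 hnq
  have : Nonempty (Fin n) := ⟨⟨0, hn0⟩⟩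
  have hx1 : (1 : ℝ) / n ≤ 1 / (2 * L) := by
    apply one_div_le_one_div_of_le
    · have : (1 : ℝ) ≤ L := by exact_mod_cast hL1
      linarith
    · exact_mod_cast hnL
  have p1 := nb1 (1 / (n : ℝ)) (by positivity) hx1
  have p2 := nb2 (1 / (n : ℝ)) (by positivity) hx1
  have low := fun σ (hσ : σ ∈ PM (Fin n × Fin r)) => tr_lower (Am σ) (r : ℝ) (Am_row σ) (Am_nonneg σ)
      (Am_herm σ hσ) h b K hbr h01 hb
  have s1 : (((PM (Fin n × Fin r)).filter (fun σ => BadSpec (Am σ) r b)).card : ℝ) * (1 - K) +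
      (PM (Fin n × Fin r)).card * h.eval (r : ℝ) ≤ ∑ σ ∈ PM (Fin n × Fin r), (aeval (Am σ) h).trace := by
    rw [← nsmul_eq_mul, ← Finset.sum_const, Finset.sum_filter, ← nsmul_eq_mul, ← Finset.sum_const,
      ← Finset.sum_add_distrib]
    apply Finset.sum_le_sum
    intro σ hσ
    split_ifs with hbad
    · linarith [(low σ hσ).2 hbad]
    · linarith [(low σ hσ).1]
  rw [hM] at s1
  have s2 : (((PM (Fin n × Fin r)).filter (fun σ => BadSpec (Am σ) r b)).card : ℝ) * (1 - K) ≤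
      (PM (Fin n × Fin r)).card * (n * κ + P.eval (1 / (n : ℝ)) / (gq r q).eval (1 / (n : ℝ)) - h.eval (r : ℝ)) := by
    linarith
  refine s2.trans (mul_le_mul_of_nonneg_left ?_ (by positivity))
  set x := (1 : ℝ) / n with hx
  have hx0 : 0 < x := by positivity
  set g := (gq r q).eval x
  have hg : 0 < g := by linarith
  have d1 : P.eval x / g - P.eval x ≤ 4 * B * (q : ℝ) ^ 2 * x := by
    have : P.eval x / g - P.eval x = P.eval x * ((1 - g) / g) := by field_simp
    rw [this]
    have e1 : (1 - g) / g ≤ 2 * ((q : ℝ) ^ 2 * x) := by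
      rw [div_le_iff₀ hg]
      have : 0 ≤ (q : ℝ) ^ 2 * x := by positivity
      nlinarith
    have e0 : 0 ≤ (1 - g) / g := div_nonneg (by linarith) hg.le
    calc _ ≤ |P.eval x| * ((1 - g) / g) := by gcongr; exact le_abs_self _
      _ ≤ (2 * B) * (2 * ((q : ℝ) ^ 2 * x)) := by gcongr
      _ = _ := by ring
  have d2 := (abs_le.1 p2).2
  have d3 := (abs_le.1 hP0).2
  have d4 : n * κ ≤ n * (r * Q * K) := by gcongr; exact (abs_le.1 hκ).2
  have hBQ : B ≤ 256 * r * Q ^ 7 := by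
    rw [hB, hLr]
    have : 1 ≤ r * Q := by nlinarith
    calc 2 * (8 * Q ^ 3) ^ 2 * (1 + r * Q) ≤ 2 * (8 * Q ^ 3) ^ 2 * (r * Q + r * Q) := by gcongr
      _ = _ := by ring
  have d5 : 4 * B * (q : ℝ) ^ 2 * x ≤ 1024 * r * Q ^ 13 * x := by
    calc 4 * B * (q : ℝ) ^ 2 * x ≤ 4 * (256 * r * Q ^ 7) * Q ^ 2 * x := by
          gcongr; rw [hQ]; linarith
      _ = 1024 * r * Q ^ 9 * x := by ring
      _ ≤ _ := by gcongr <;> norm_num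
  have d6 : 16 * L * B * Q ^ 3 * x ≤ 32768 * r * Q ^ 13 * x := by
    rw [hLr]
    calc 16 * (8 * Q ^ 3) * B * Q ^ 3 * x ≤ 16 * (8 * Q ^ 3) * (256 * r * Q ^ 7) * Q ^ 3 * x := by gcongr
      _ = _ := by ring
  have d7 : 40000 * r * Q ^ 13 / n = 40000 * r * Q ^ 13 * x := by rw [hx]; ring
  rw [d7]
  have : 0 ≤ r * Q ^ 13 * x := by positivity
  linarith

end PartF3
end Fried

namespace Fried
section PartF4
open Finset Matrix Polynomial Filter Topology

lemma log_pow_div (k : ℕ) (C : ℝ) : Tendsto (fun n : ℕ => C * Real.log n ^ k / n) atTop (𝓝 0) := by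
  have h1 := (Real.isLittleO_pow_log_id_atTop (n := k)).tendsto_div_nhds_zero
  have h2 := h1.comp tendsto_natCast_atTop_atTop
  have h3 := h2.const_mul C
  simp only [mul_zero] at h3
  refine h3.congr fun n => ?_
  simp only [Function.comp, id]
  ring

lemma log_ge (C : ℝ) : ∀ᶠ n : ℕ in atTop, C ≤ Real.log n :=
  (Real.tendsto_log_atTop.comp tendsto_natCast_atTop_atTop).eventually_ge_atTop C

set_option maxHeartbeats 1000000 in
theorem bad_spec_tendsto (r : ℕ) (hr : 3 ≤ r) (ε : ℝ) (hε : 0 < ε) :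
    ∃ u : ℕ → ℝ, Tendsto u atTop (𝓝 0) ∧ ∀ᶠ n : ℕ in atTop,
     (((PM (Fin n × Fin r)).filter (fun σ => BadSpec (Am σ) r (min (2 * √((r : ℝ) - 1) + ε) r))).card : ℝ)
       ≤ (PM (Fin n × Fin r)).card * u n := by
  have hr3 : (3 : ℝ) ≤ r := by exact_mod_cast hr
  have hlt := two_sqrt_lt r hr
  have hsn := Real.sqrt_nonneg ((r : ℝ) - 1)
  set b := min (2 * √((r : ℝ) - 1) + ε) (r : ℝ) with hb
  have hb1 : 2 * √((r : ℝ) - 1) < b := lt_min (by linarith) hlt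
  have hb2 : b ≤ r := min_le_right _ _
  obtain ⟨θ, h0, h1, hp⟩ := test_poly (r : ℝ) (2 * √((r : ℝ) - 1)) b (by linarith) (by linarith) hb1 hb2
  have hlog : Real.log θ < 0 := Real.log_neg h0 h1
  set c := 2 / (- Real.log θ) with hc
  have hc0 : 0 < c := by rw [hc]; apply div_pos <;> linarith
  refine ⟨fun n => (100000 * r * (c + 2) ^ 13) * Real.log n ^ 13 / n, log_pow_div _ _, ?_⟩
  have ev1 := (log_pow_div 3 (16 * (c + 2) ^ 3)).eventually_le_const (show (0 : ℝ) < 1 by norm_num)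
  filter_upwards [ev1, log_ge 1, eventually_ge_atTop 2] with n hn1 hn2 hn3
  have hn : (2 : ℝ) ≤ n := by exact_mod_cast hn3
  set l := Real.log n with hl
  set q := ⌈c * l⌉₊ with hq
  have hqb : (q : ℝ) + 1 ≤ (c + 2) * l := by
    have := Nat.ceil_lt_add_one (show 0 ≤ c * l by positivity)
    nlinarith
  have hq0 : c * l ≤ q := Nat.le_ceil _
  obtain ⟨p, hpd, hp01, hpb, hpK⟩ := hp q
  have hθ : θ ^ q ≤ 1 / (n : ℝ) ^ 2 := by
    have e1 : θ ^ q = Real.exp (q * Real.log θ) := by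
      rw [mul_comm, Real.exp_mul, Real.exp_log h0, Real.rpow_natCast]
    have e2 : 1 / (n : ℝ) ^ 2 = Real.exp (-2 * l) := by
      rw [hl, mul_comm, Real.exp_mul, Real.exp_log (by linarith), Real.rpow_neg (by linarith)]
      norm_num
    rw [e1, e2]
    apply Real.exp_le_exp.2
    have e3 : c * l * Real.log θ = -2 * l := by
      rw [hc]; field_simp [hlog.ne]
    nlinarith
  have hθ0 : 0 < θ ^ q := by positivity
  have hn2' : 1 / (n : ℝ) ^ 2 ≤ 1 / 2 := by
    apply one_div_le_one_div_of_le (by norm_num); nlinarith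
  have hcond : 16 * (q + 1) ^ 3 ≤ n := by
    rw [div_le_one (by linarith)] at hn1
    have : (16 : ℝ) * ((q : ℝ) + 1) ^ 3 ≤ n := by
      calc (16 : ℝ) * ((q : ℝ) + 1) ^ 3 ≤ 16 * ((c + 2) * l) ^ 3 := by gcongr
        _ = 16 * (c + 2) ^ 3 * l ^ 3 := by ring
        _ ≤ n := hn1
    exact_mod_cast this
  have key := bound_q r q hr p hpd (θ ^ q) b (by linarith) hb2 hp01 hpb hpK n hcond
  set Y := (c + 2) * l with hY
  set Q := (q : ℝ) + 1 with hQ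
  have hQ1 : 1 ≤ Q := by rw [hQ]; linarith [(Nat.cast_nonneg q : (0 : ℝ) ≤ q)]
  have hY1 : 1 ≤ Y := hQ1.trans hqb
  set X := (((PM (Fin n × Fin r)).filter (fun σ => BadSpec (Am σ) r b)).card : ℝ)
  set N := ((PM (Fin n × Fin r)).card : ℝ)
  have hX0 : 0 ≤ X := Nat.cast_nonneg _
  have hN0 : 0 ≤ N := Nat.cast_nonneg _
  have hXX : X ≤ 2 * (X * (1 - θ ^ q)) := by nlinarith
  refine hXX.trans ?_
  have b1 : 40000 * r * Q ^ 13 / n ≤ 40000 * r * Y ^ 13 / n := by gcongr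
  have b2 : (r * Q * n + 2 * Q ^ 2) * θ ^ q ≤ 3 * r * Y ^ 13 / n := by
    have k0 : Q ≤ Y ^ 13 := hqb.trans (le_self_pow₀ hY1 (by norm_num))
    have k1 : Q ^ 2 ≤ Y ^ 13 := by
      calc Q ^ 2 ≤ Y ^ 2 := by gcongr
        _ ≤ Y ^ 13 := pow_le_pow_right₀ hY1 (by norm_num)
    have k2 : (1 : ℝ) ≤ n * r := by nlinarith
    have k3 : 0 ≤ Y ^ 13 := by positivity
    have A1 : r * Q * n ≤ r * Y ^ 13 * n := by gcongr
    have A2 : 2 * Q ^ 2 ≤ 2 * Y ^ 13 * (n * r) := by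
      have := mul_le_mul_of_nonneg_left k2 k3
      linarith
    calc (r * Q * n + 2 * Q ^ 2) * θ ^ q ≤ (r * Y ^ 13 * n + 2 * Y ^ 13 * (n * r)) * (1 / (n : ℝ) ^ 2) :=
          mul_le_mul (add_le_add A1 A2) hθ hθ0.le (by positivity)
      _ = 3 * r * Y ^ 13 / n := by field_simp; ring
  calc 2 * (X * (1 - θ ^ q)) ≤ 2 * (N * (40000 * r * Y ^ 13 / n + 3 * r * Y ^ 13 / n)) := by
        have := mul_le_mul_of_nonneg_left (add_le_add b1 b2) hN0
        linarith
    _ = N * (80006 * r * Y ^ 13 / n) := by ring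
    _ ≤ N * ((100000 * r * (c + 2) ^ 13) * l ^ 13 / n) := by
        have : (100000 * r * (c + 2) ^ 13) * l ^ 13 = 100000 * r * Y ^ 13 := by rw [hY]; ring
        rw [this]
        apply mul_le_mul_of_nonneg_left _ hN0
        apply div_le_div_of_nonneg_right _ (by linarith)
        have : 0 ≤ r * Y ^ 13 := by positivity
        linarith

end PartF4
end Fried

namespace Fried
section PartG
open Finset

lemma prob_le {I H : Type*} [Fintype I] [Fintype H] (f g : I → H) (hf : Function.Injective f)
    (hg : Function.Injective g) (hfg : ∀ i j, f i ≠ g j) (hm : 2 * Fintype.card I ≤ Fintype.card H) :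
    (((PM H).filter (fun σ => ∀ i, σ (f i) = g i)).card : ℝ) *
      ((Fintype.card H : ℝ) - 2 * Fintype.card I) ^ (Fintype.card I) ≤ (PM H).card := by
  have hV : Val f g := fun i j => ⟨fun e => by rw [hf e], fun e => by rw [hg e],
    fun e => absurd e (hfg i j), hfg i i⟩
  obtain ⟨-, h2⟩ := count_val f g hV
  have hc : (SS f g).card / 2 = Fintype.card I := by
    rw [SS, card_union_of_disjoint, card_image_of_injective _ hf, card_image_of_injective _ hg, card_univ]
    · omega
    · rw [Finset.disjoint_left]
      intro x hx hx'
      simp only [mem_image, mem_univ, true_and] at hx hx'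
      obtain ⟨i, rfl⟩ := hx
      obtain ⟨j, hj⟩ := hx'
      exact hfg i j hj.symm
  rw [hc] at h2
  rw [← h2]
  apply mul_le_mul_of_nonneg_left _ (by positivity)
  have hm' : (2 : ℝ) * Fintype.card I ≤ Fintype.card H := by exact_mod_cast hm
  calc _ = ∏ j ∈ range (Fintype.card I), ((Fintype.card H : ℝ) - 2 * Fintype.card I) := by simp
    _ ≤ _ := by
      apply Finset.prod_le_prod
      · intros; linarith
      · intro j hj
        rw [mem_range] at hj
        have : (j : ℝ) + 1 ≤ Fintype.card I := by exact_mod_cast hj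
        linarith

variable {V : Type*} [Fintype V] {r : ℕ}

/-- A half-edge is bad if it is in a loop or in a multiple edge. -/
def BadH (σ : Equiv.Perm (V × Fin r)) (h : V × Fin r) : Prop :=
  (σ h).1 = h.1 ∨ ∃ h', h' ≠ h ∧ h'.1 = h.1 ∧ (σ h').1 = (σ h).1

noncomputable def Xb (σ : Equiv.Perm (V × Fin r)) : Finset (V × Fin r) := univ.filter (BadH σ)

noncomputable def swi (σ : Equiv.Perm (V × Fin r)) (h c : V × Fin r) : Equiv.Perm (V × Fin r) :=
  Equiv.swap (σ h) c * σ * Equiv.swap (σ h) c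

/-- admissible partner for switching -/
def Adm (σ : Equiv.Perm (V × Fin r)) (h c : V × Fin r) : Prop :=
  c.1 ≠ h.1 ∧ c.1 ≠ (σ h).1 ∧ c.1 ≠ (σ c).1 ∧ (∀ x, x.1 = h.1 → (σ x).1 ≠ c.1) ∧
  (σ c).1 ≠ (σ h).1 ∧ (∀ x, x.1 = (σ h).1 → (σ x).1 ≠ (σ c).1)

lemma badH_sigma (σ : Equiv.Perm (V × Fin r)) (hσ : σ ∈ PM (V × Fin r)) (x : V × Fin r)
    (hx : BadH σ (σ x)) : BadH σ x := by
  rw [mem_PM] at hσ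
  rcases hx with h | ⟨y, h1, h2, h3⟩
  · left; rw [(hσ x).2] at h; exact h.symm
  · right
    refine ⟨σ y, ?_, ?_, ?_⟩
    · rintro rfl; exact h1 ((hσ y).2).symm
    · rw [h3, (hσ x).2]
    · rw [(hσ y).2, h2]

lemma swi_facts (σ : Equiv.Perm (V × Fin r)) (hσ : σ ∈ PM (V × Fin r)) (h c : V × Fin r)
    (hc : Adm σ h c) :
    swi σ h c ∈ PM (V × Fin r) ∧ swi σ h c h = c ∧ swi σ h c c = h ∧ swi σ h c (σ h) = σ c ∧
    swi σ h c (σ c) = σ h ∧ (∀ y, y ≠ h → y ≠ c → y ≠ σ h → y ≠ σ c → swi σ h c y = σ y) := by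
  rw [mem_PM] at hσ
  obtain ⟨a1, a2, a3, a4, a5, a6⟩ := hc
  have n1 : h ≠ σ h := (hσ h).1.symm
  have n2 : h ≠ c := fun e => a1 (by rw [e])
  have n3 : c ≠ σ h := fun e => a2 (by rw [← e])
  have n4 : c ≠ σ c := (hσ c).1.symm
  have n5 : σ c ≠ σ h := fun e => a5 (by rw [e])
  have n6 : h ≠ σ c := fun e => n3 (by rw [e, (hσ c).2])
  refine ⟨?_, ?_, ?_, ?_, ?_, ?_⟩
  · rw [mem_PM]
    intro z
    simp only [swi, Equiv.Perm.mul_apply, Equiv.swap_apply_self, (hσ _).2, and_true]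
    intro e
    apply (hσ (Equiv.swap (σ h) c z)).1
    have := congrArg (Equiv.swap (σ h) c) e
    rwa [Equiv.swap_apply_self] at this
  · simp only [swi, Equiv.Perm.mul_apply]
    rw [Equiv.swap_apply_of_ne_of_ne n1 n2, Equiv.swap_apply_left]
  · simp only [swi, Equiv.Perm.mul_apply]
    rw [Equiv.swap_apply_right, (hσ h).2, Equiv.swap_apply_of_ne_of_ne n1 n2]
  · simp only [swi, Equiv.Perm.mul_apply]
    rw [Equiv.swap_apply_left, Equiv.swap_apply_of_ne_of_ne n5 n4.symm]
  · simp only [swi, Equiv.Perm.mul_apply]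
    rw [Equiv.swap_apply_of_ne_of_ne n5 n4.symm, (hσ c).2, Equiv.swap_apply_right]
  · intro y y1 y2 y3 y4
    simp only [swi, Equiv.Perm.mul_apply]
    rw [Equiv.swap_apply_of_ne_of_ne y3 y2, Equiv.swap_apply_of_ne_of_ne]
    · exact fun e => y1 (σ.injective e)
    · intro e; exact y4 (by rw [← e, (hσ y).2])

lemma swi_good (σ : Equiv.Perm (V × Fin r)) (hσ : σ ∈ PM (V × Fin r)) (h c : V × Fin r)
    (hc : Adm σ h c) : ¬ BadH (swi σ h c) h ∧ ¬ BadH (swi σ h c) (σ h) := by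
  obtain ⟨f1, f2, f3, f4, f5, f6⟩ := swi_facts σ hσ h c hc
  obtain ⟨a1, a2, a3, a4, a5, a6⟩ := hc
  constructor
  · rintro (e | ⟨x, x1, x2, x3⟩)
    · rw [f2] at e; exact a1 e
    · rw [f2] at x3
      by_cases e1 : x = c
      · exact a1 (by rw [← e1, x2])
      by_cases e2 : x = σ h
      · rw [e2, f4] at x3; exact a3 x3.symm
      by_cases e3 : x = σ c
      · rw [e3, f5] at x3; exact a2 x3.symm
      rw [f6 x x1 e1 e2 e3] at x3
      exact a4 x x2 x3
  · rintro (e | ⟨x, x1, x2, x3⟩)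
    · rw [f4] at e; exact a5 e
    · rw [f4] at x3
      by_cases e1 : x = c
      · exact a2 (by rw [← e1, x2])
      by_cases e2 : x = h
      · rw [e2, f2] at x3; exact a3 x3
      by_cases e3 : x = σ c
      · rw [e3] at x2; exact a5 x2
      rw [f6 x e2 e1 x1 e3] at x3
      exact a6 x x2 x3

lemma swi_Xb (σ : Equiv.Perm (V × Fin r)) (hσ : σ ∈ PM (V × Fin r)) (h c : V × Fin r)
    (hc : Adm σ h c) (hbad : BadH σ h) : (Xb (swi σ h c)).card < (Xb σ).card := by
  obtain ⟨f1, f2, f3, f4, f5, f6⟩ := swi_facts σ hσ h c hc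
  obtain ⟨g1, g2⟩ := swi_good σ hσ h c hc
  have g3 : ¬ BadH (swi σ h c) c := fun hb => g1 (badH_sigma _ f1 h (by rw [f2]; exact hb))
  have g4 : ¬ BadH (swi σ h c) (σ c) := fun hb => g2 (badH_sigma _ f1 (σ h) (by rw [f4]; exact hb))
  apply Finset.card_lt_card
  rw [Finset.ssubset_iff_of_subset]
  · exact ⟨h, by simp [Xb, hbad], by simp [Xb, g1]⟩
  · intro y hy
    simp only [Xb, mem_filter, mem_univ, true_and] at hy ⊢
    have y1 : y ≠ h := by rintro rfl; exact g1 hy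
    have y2 : y ≠ c := by rintro rfl; exact g3 hy
    have y3 : y ≠ σ h := by rintro rfl; exact g2 hy
    have y4 : y ≠ σ c := by rintro rfl; exact g4 hy
    rcases hy with e | ⟨x, x1, x2, x3⟩
    · left; rwa [f6 y y1 y2 y3 y4] at e
    · right
      have hxb : BadH (swi σ h c) x := Or.inr ⟨y, x1.symm, x2.symm, x3.symm⟩
      have z1 : x ≠ h := by rintro rfl; exact g1 hxb
      have z2 : x ≠ c := by rintro rfl; exact g3 hxb
      have z3 : x ≠ σ h := by rintro rfl; exact g2 hxb
      have z4 : x ≠ σ c := by rintro rfl; exact g4 hxb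
      rw [f6 y y1 y2 y3 y4, f6 x z1 z2 z3 z4] at x3
      exact ⟨x, x1, x2, x3⟩

lemma swi_back (σ : Equiv.Perm (V × Fin r)) (hσ : σ ∈ PM (V × Fin r)) (h c : V × Fin r)
    (hc : Adm σ h c) (hbad : BadH σ h) : 
    (σ h).1 = h.1 ∨ ∃ x, x.1 = h.1 ∧ (swi σ h c x).1 = (σ h).1 := by
  obtain ⟨f1, f2, f3, f4, f5, f6⟩ := swi_facts σ hσ h c hc
  obtain ⟨a1, a2, a3, a4, a5, a6⟩ := hc
  rw [mem_PM] at hσ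
  rcases hbad with e | ⟨x, x1, x2, x3⟩
  · exact Or.inl e
  · by_cases e1 : x = σ h
    · left; rw [← e1, x2]
    · right
      refine ⟨x, x2, ?_⟩
      rw [f6 x x1 _ e1 _, x3]
      · rintro rfl; exact a1 x2
      · rintro rfl; rw [(hσ _).2] at x3; exact a2 x3

/-- half-edges at a vertex satisfying `P` -/
lemma card_fst (a : V) : (univ.filter (fun x : V × Fin r => x.1 = a)).card ≤ r := by
  calc _ ≤ ((univ : Finset (Fin r)).image (fun i => (a, i))).card := by
        apply card_le_card
        intro x hx
        simp only [mem_filter, mem_univ, true_and, mem_image] at hx ⊢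
        exact ⟨x.2, by rw [← hx]⟩
    _ ≤ r := card_image_le.trans (by simp)

lemma card_nbr (σ : Equiv.Perm (V × Fin r)) (a : V) :
    (univ.filter (fun x : V × Fin r => ∃ y, y.1 = a ∧ (σ y).1 = x.1)).card ≤ r ^ 2 := by
  calc _ ≤ ((univ : Finset (Fin r × Fin r)).image (fun i => ((σ (a, i.1)).1, i.2))).card := by
        apply card_le_card
        intro x hx
        simp only [mem_filter, mem_univ, true_and, mem_image] at hx ⊢
        obtain ⟨y, rfl, h⟩ := hx
        exact ⟨(y.2, x.2), by simp [h]⟩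
    _ ≤ r ^ 2 := card_image_le.trans (by simp [sq])

lemma card_comp (σ : Equiv.Perm (V × Fin r)) (p : V × Fin r → Prop) :
    (univ.filter (fun x : V × Fin r => p (σ x))).card = (univ.filter p).card := by
  apply Finset.card_bij (fun x _ => σ x)
  · intro x hx; simpa using hx
  · intro x _ y _ h; exact σ.injective h
  · intro y hy; exact ⟨σ.symm y, by simpa using hy, by simp⟩

lemma card_adm (σ : Equiv.Perm (V × Fin r)) (h : V × Fin r) :
    Fintype.card (V × Fin r) ≤ (univ.filter (Adm σ h)).card + (3 * r + 2 * r ^ 2 + (Xb σ).card) := by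
  have hsub : (univ : Finset (V × Fin r)) ⊆ univ.filter (Adm σ h) ∪
      (univ.filter (fun x : V × Fin r => x.1 = h.1) ∪ univ.filter (fun x : V × Fin r => x.1 = (σ h).1) ∪
       Xb σ ∪ univ.filter (fun x : V × Fin r => ∃ y, y.1 = h.1 ∧ (σ y).1 = x.1) ∪
       univ.filter (fun x : V × Fin r => (σ x).1 = (σ h).1) ∪
       univ.filter (fun x : V × Fin r => ∃ y, y.1 = (σ h).1 ∧ (σ y).1 = (σ x).1)) := by
    intro x _
    simp only [mem_union, mem_filter, mem_univ, true_and, Adm, Xb, BadH]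
    by_contra hcon
    push Not at hcon
    obtain ⟨k0, ⟨⟨⟨⟨k1, k2⟩, k3⟩, k4⟩, k5⟩, k6⟩ := hcon
    obtain ⟨y, hy1, hy2⟩ := k0 k1 k2 k3.1.symm k4 k5
    exact k6 y hy1 hy2
  have h1 := card_le_card hsub
  have c1 := card_fst (r := r) h.1
  have c2 := card_fst (r := r) (σ h).1
  have c3 := card_nbr σ h.1
  have c4 := card_nbr σ (σ h).1
  have c5 := card_comp σ (fun x => x.1 = (σ h).1)
  have c6 : (univ.filter (fun x : V × Fin r => ∃ y, y.1 = (σ h).1 ∧ (σ y).1 = (σ x).1)).card ≤ r ^ 2 := by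
    refine le_trans (le_of_eq ?_) c4
    convert card_comp σ (fun x => ∃ y, y.1 = (σ h).1 ∧ (σ y).1 = x.1)
  rw [card_univ] at h1
  have u1 := card_union_le (univ.filter (Adm σ h)) 
      (univ.filter (fun x : V × Fin r => x.1 = h.1) ∪ univ.filter (fun x : V × Fin r => x.1 = (σ h).1) ∪
       Xb σ ∪ univ.filter (fun x : V × Fin r => ∃ y, y.1 = h.1 ∧ (σ y).1 = x.1) ∪
       univ.filter (fun x : V × Fin r => (σ x).1 = (σ h).1) ∪
       univ.filter (fun x : V × Fin r => ∃ y, y.1 = (σ h).1 ∧ (σ y).1 = (σ x).1))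
  have u2 := card_union_le (univ.filter (fun x : V × Fin r => x.1 = h.1) ∪ univ.filter (fun x : V × Fin r => x.1 = (σ h).1) ∪
       Xb σ ∪ univ.filter (fun x : V × Fin r => ∃ y, y.1 = h.1 ∧ (σ y).1 = x.1) ∪
       univ.filter (fun x : V × Fin r => (σ x).1 = (σ h).1))
       (univ.filter (fun x : V × Fin r => ∃ y, y.1 = (σ h).1 ∧ (σ y).1 = (σ x).1))
  have u3 := card_union_le (univ.filter (fun x : V × Fin r => x.1 = h.1) ∪ univ.filter (fun x : V × Fin r => x.1 = (σ h).1) ∪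
       Xb σ ∪ univ.filter (fun x : V × Fin r => ∃ y, y.1 = h.1 ∧ (σ y).1 = x.1))
       (univ.filter (fun x : V × Fin r => (σ x).1 = (σ h).1))
  have u4 := card_union_le (univ.filter (fun x : V × Fin r => x.1 = h.1) ∪ univ.filter (fun x : V × Fin r => x.1 = (σ h).1) ∪
       Xb σ) (univ.filter (fun x : V × Fin r => ∃ y, y.1 = h.1 ∧ (σ y).1 = x.1))
  have u5 := card_union_le (univ.filter (fun x : V × Fin r => x.1 = h.1) ∪ univ.filter (fun x : V × Fin r => x.1 = (σ h).1)) (Xb σ)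
  have u6 := card_union_le (univ.filter (fun x : V × Fin r => x.1 = h.1)) (univ.filter (fun x : V × Fin r => x.1 = (σ h).1))
  omega

end PartG
end Fried

namespace Fried
section PartG2
open Finset

variable {V : Type*} [Fintype V] {r : ℕ}

noncomputable def Sj (V : Type*) [Fintype V] (r j : ℕ) : Finset (Equiv.Perm (V × Fin r)) :=
  (PM (V × Fin r)).filter (fun σ => (Xb σ).card = j)
noncomputable def Tj (V : Type*) [Fintype V] (r j : ℕ) : Finset (Equiv.Perm (V × Fin r)) :=
  (PM (V × Fin r)).filter (fun σ => (Xb σ).card ≤ j)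

lemma swi_undo (σ : Equiv.Perm (V × Fin r)) (h c : V × Fin r) :
    Equiv.swap (σ h) c * swi σ h c * Equiv.swap (σ h) c = σ := by
  ext1 x
  simp [swi, Equiv.Perm.mul_apply]

lemma switch_ineq (V : Type*) [Fintype V] (r j : ℕ) :
    (Sj V r (j + 1)).card * (Fintype.card (V × Fin r) - (3 * r + 2 * r ^ 2 + (j + 1))) ≤
    (Tj V r j).card * (Fintype.card (V × Fin r) * (r + r ^ 2)) := by
  rcases isEmpty_or_nonempty (V × Fin r) with hem | hne
  · simp
  have hex : ∀ σ : Equiv.Perm (V × Fin r), ∃ h : V × Fin r, σ ∈ Sj V r (j + 1) → BadH σ h := by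
    intro σ
    by_cases hσ : σ ∈ Sj V r (j + 1)
    · have h1 := (mem_filter.1 hσ).2
      have : (Xb σ).Nonempty := by rw [← card_pos]; omega
      obtain ⟨h, hh⟩ := this
      exact ⟨h, fun _ => (mem_filter.1 hh).2⟩
    · exact ⟨hne.some, fun h => absurd h hσ⟩
  choose h hh using hex
  let A := (Sj V r (j + 1)).sigma (fun σ => univ.filter (Adm σ (h σ)))
  let B := ((Tj V r j) ×ˢ (univ : Finset (V × Fin r))).sigma (fun p =>
    univ.filter (fun g : V × Fin r => g.1 = p.2.1) ∪
    univ.filter (fun g : V × Fin r => ∃ y, y.1 = p.2.1 ∧ (p.1 y).1 = g.1))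
  have hA : (Sj V r (j + 1)).card * (Fintype.card (V × Fin r) - (3 * r + 2 * r ^ 2 + (j + 1))) ≤ A.card := by
    rw [card_sigma, ← smul_eq_mul, ← Finset.sum_const]
    apply Finset.sum_le_sum
    intro σ hσ
    have h1 := card_adm σ (h σ)
    have h2 := (mem_filter.1 hσ).2
    omega
  have hB : B.card ≤ (Tj V r j).card * (Fintype.card (V × Fin r) * (r + r ^ 2)) := by
    rw [card_sigma]
    calc _ ≤ ∑ p ∈ (Tj V r j) ×ˢ (univ : Finset (V × Fin r)), (r + r ^ 2) := by
          apply Finset.sum_le_sum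
          intro p _
          exact (card_union_le _ _).trans (add_le_add (card_fst _) (card_nbr _ _))
      _ = _ := by rw [Finset.sum_const, card_product, card_univ, smul_eq_mul, mul_assoc]
  refine hA.trans (le_trans ?_ hB)
  apply Finset.card_le_card_of_injOn
    (fun p => ⟨(swi p.1 (h p.1) p.2, h p.1), p.1 (h p.1)⟩)
  · rintro ⟨σ, c⟩ hp
    have hp' : σ ∈ Sj V r (j + 1) ∧ Adm σ (h σ) c := by
      simpa [A] using hp
    obtain ⟨hσ, hc⟩ := hp'
    have hPM := (mem_filter.1 hσ).1
    have h2 := (mem_filter.1 hσ).2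
    have h3 := swi_Xb σ hPM (h σ) c hc (hh σ hσ)
    have h4 := (swi_facts σ hPM (h σ) c hc).1
    have h5 := swi_back σ hPM (h σ) c hc (hh σ hσ)
    simp only [B, coe_sigma, Set.mem_sigma_iff, mem_coe, mem_product, mem_univ, and_true, mem_union, mem_filter,
      true_and]
    exact ⟨mem_filter.2 ⟨h4, by omega⟩, h5⟩
  · rintro ⟨σ, c⟩ hp ⟨σ', c'⟩ hp' heq
    have hp1 : σ ∈ Sj V r (j + 1) ∧ Adm σ (h σ) c := by
      simpa [A] using hp
    have hp2 : σ' ∈ Sj V r (j + 1) ∧ Adm σ' (h σ') c' := by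
      simpa [A] using hp'
    simp only [Sigma.mk.injEq, Prod.mk.injEq, heq_eq_eq] at heq
    obtain ⟨⟨e1, e2⟩, e3⟩ := heq
    have f1 := (swi_facts σ (mem_filter.1 hp1.1).1 (h σ) c hp1.2).2.1
    have f2 := (swi_facts σ' (mem_filter.1 hp2.1).1 (h σ') c' hp2.2).2.1
    have ec : c = c' := by rw [← f1, ← f2, e1, e2]
    have es : σ = σ' := by
      rw [← swi_undo σ (h σ) c, ← swi_undo σ' (h σ') c', e1, e3, ec]
    subst es
    subst ec
    rfl

lemma T_bound (V : Type*) [Fintype V] (r j : ℕ)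
    (hm : 2 * (3 * r + 2 * r ^ 2 + (j + 1)) ≤ Fintype.card (V × Fin r)) (h0 : 0 < Fintype.card (V × Fin r)) :
    (Tj V r (j + 1)).card ≤ (1 + 2 * (r + r ^ 2)) * (Tj V r j).card := by
  have h1 := switch_ineq V r j
  have h2 : (Tj V r (j + 1)).card ≤ (Tj V r j).card + (Sj V r (j + 1)).card := by
    refine le_trans (card_le_card ?_) (card_union_le _ _)
    intro σ hσ
    simp only [Tj, Sj, mem_filter, mem_union] at hσ ⊢
    have := hσ.2
    by_cases h : (Xb σ).card ≤ j
    · exact Or.inl ⟨hσ.1, h⟩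
    · exact Or.inr ⟨hσ.1, by omega⟩
  set m := Fintype.card (V × Fin r)
  have h3 : (Sj V r (j + 1)).card * m ≤ (2 * (r + r ^ 2) * (Tj V r j).card) * m := by
    calc (Sj V r (j + 1)).card * m ≤ (Sj V r (j + 1)).card * (2 * (m - (3 * r + 2 * r ^ 2 + (j + 1)))) := by
          gcongr; omega
      _ = 2 * ((Sj V r (j + 1)).card * (m - (3 * r + 2 * r ^ 2 + (j + 1)))) := by ring
      _ ≤ 2 * ((Tj V r j).card * (m * (r + r ^ 2))) := by gcongr
      _ = _ := by ring
  have h4 := Nat.le_of_mul_le_mul_right h3 h0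
  calc _ ≤ _ := h2
    _ ≤ (Tj V r j).card + 2 * (r + r ^ 2) * (Tj V r j).card := by gcongr
    _ = _ := by ring

lemma T_bound' (V : Type*) [Fintype V] (r j : ℕ)
    (hm : 2 * (3 * r + 2 * r ^ 2 + j) ≤ Fintype.card (V × Fin r)) (h0 : 0 < Fintype.card (V × Fin r)) :
    (Tj V r j).card ≤ (1 + 2 * (r + r ^ 2)) ^ j * (Tj V r 0).card := by
  induction j with
  | zero => simp
  | succ j ih =>
    calc _ ≤ _ := T_bound V r j hm h0
      _ ≤ (1 + 2 * (r + r ^ 2)) * ((1 + 2 * (r + r ^ 2)) ^ j * (Tj V r 0).card) := by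
        gcongr; exact ih (by omega)
      _ = _ := by ring

lemma prob1 (h g : V × Fin r) (hg : g ≠ h) (hm : 8 ≤ Fintype.card (V × Fin r)) :
    (((PM (V × Fin r)).filter (fun σ => σ h = g)).card : ℝ) * (Fintype.card (V × Fin r) : ℝ) ≤
      2 * (PM (V × Fin r)).card := by
  have h1 := prob_le (fun _ : Fin 1 => h) (fun _ => g) (fun _ _ _ => Subsingleton.elim _ _)
    (fun _ _ _ => Subsingleton.elim _ _) (fun _ _ => hg.symm) (by simp only [Fintype.card_fin]; omega)
  simp only [Fintype.card_fin, forall_const, pow_one, Nat.cast_one, mul_one] at h1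
  have hm' : (8 : ℝ) ≤ Fintype.card (V × Fin r) := by exact_mod_cast hm
  have : (0 : ℝ) ≤ (((PM (V × Fin r)).filter (fun σ => σ h = g)).card : ℝ) := by positivity
  nlinarith

lemma prob2 (h h' g g' : V × Fin r) (h1 : h ≠ h') (h2 : g ≠ g') (h3 : h ≠ g) (h4 : h ≠ g') (h5 : h' ≠ g)
    (h6 : h' ≠ g') (hm : 8 ≤ Fintype.card (V × Fin r)) :
    (((PM (V × Fin r)).filter (fun σ => σ h = g ∧ σ h' = g')).card : ℝ) *
      (Fintype.card (V × Fin r) : ℝ) ^ 2 ≤ 4 * (PM (V × Fin r)).card := by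
  have h1 := prob_le (![h, h']) (![g, g']) (by
      intro i j; fin_cases i <;> fin_cases j <;> simp [h1, h1.symm]) (by
      intro i j; fin_cases i <;> fin_cases j <;> simp [h2, h2.symm]) (by
      intro i j; fin_cases i <;> fin_cases j <;> simp [h3, h4, h5, h6])
      (by simp only [Fintype.card_fin]; omega)
  simp only [Fintype.card_fin, Fin.forall_fin_two, Matrix.cons_val_zero, Matrix.cons_val_one] at h1
  have hm' : (8 : ℝ) ≤ Fintype.card (V × Fin r) := by exact_mod_cast hm
  have h0 : (0 : ℝ) ≤ (((PM (V × Fin r)).filter (fun σ => σ h = g ∧ σ h' = g')).card : ℝ) := by positivity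
  have h2 : (Fintype.card (V × Fin r) : ℝ) ^ 2 ≤ 4 * ((Fintype.card (V × Fin r) : ℝ) - 2 * (2 : ℕ)) ^ 2 := by
    push_cast; nlinarith
  calc _ ≤ _ := mul_le_mul_of_nonneg_left h2 h0
    _ ≤ _ := by linarith

lemma prob_bad (h : V × Fin r) (hm : 8 ≤ Fintype.card (V × Fin r)) :
    (((PM (V × Fin r)).filter (fun σ => BadH σ h)).card : ℝ) * (Fintype.card (V × Fin r) : ℝ) ≤
      (2 * r + 4 * r ^ 2) * (PM (V × Fin r)).card := by
  let F1 := univ.filter (fun g : V × Fin r => g.1 = h.1 ∧ g ≠ h)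
  let F2 := ((univ.filter (fun x : V × Fin r => x.1 = h.1)) ×ˢ
    (univ : Finset (V × Fin r)).sigma (fun g => univ.filter (fun x : V × Fin r => x.1 = g.1))).filter
    (fun p => h ≠ p.1 ∧ p.2.1 ≠ p.2.2 ∧ h ≠ p.2.1 ∧ h ≠ p.2.2 ∧ p.1 ≠ p.2.1 ∧ p.1 ≠ p.2.2)
  have hF1 : F1.card ≤ r := by
    refine le_trans (card_le_card ?_) (card_fst (r := r) h.1)
    intro x hx
    simp only [F1, mem_filter, mem_univ, true_and] at hx ⊢
    exact hx.1
  have hF2 : F2.card ≤ r * (Fintype.card (V × Fin r) * r) := by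
    refine (card_filter_le _ _).trans ?_
    rw [card_product, card_sigma]
    apply Nat.mul_le_mul (card_fst _)
    calc _ ≤ ∑ g : V × Fin r, r := Finset.sum_le_sum fun g _ => card_fst _
      _ = _ := by simp
  have hsub : (PM (V × Fin r)).filter (fun σ => BadH σ h) ⊆
      F1.biUnion (fun g => (PM (V × Fin r)).filter (fun σ => σ h = g)) ∪
      F2.biUnion (fun p => (PM (V × Fin r)).filter (fun σ => σ h = p.2.1 ∧ σ p.1 = p.2.2)) := by
    intro σ hσ
    obtain ⟨hσ1, hb⟩ := mem_filter.1 hσ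
    have hP := mem_PM.1 hσ1
    rw [mem_union, mem_biUnion, mem_biUnion]
    by_cases hl : (σ h).1 = h.1
    · left
      exact ⟨σ h, by simp [F1, hl, (hP h).1], by simp [hσ1]⟩
    · right
      rcases hb with hb | ⟨x, x1, x2, x3⟩
      · exact absurd hb hl
      · refine ⟨(x, ⟨σ h, σ x⟩), ?_, by simp [hσ1]⟩
        simp only [F2, mem_filter, mem_product, mem_univ, true_and, mem_sigma]
        refine ⟨⟨x2, x3⟩, x1.symm, ?_, (hP h).1.symm, ?_, ?_, (hP x).1.symm⟩
        · intro e; exact x1 (σ.injective e).symm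
        · intro e; exact hl (by rw [e, (hP x).2, ← e, x2])
        · intro e; exact hl (by rw [← e, x2])
  have c1 := card_le_card hsub
  have c2 := c1.trans (card_union_le _ _)
  have c3 := c2.trans (add_le_add card_biUnion_le card_biUnion_le)
  set m := Fintype.card (V × Fin r)
  have hm0 : (0 : ℝ) < m := by exact_mod_cast (by omega : 0 < m)
  set N : ℝ := ((PM (V × Fin r)).card : ℝ)
  have d1 : (∑ g ∈ F1, (((PM (V × Fin r)).filter (fun σ => σ h = g)).card : ℝ)) ≤ r * (2 * N / m) := by
    calc _ ≤ ∑ g ∈ F1, (2 * N / m) := by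
          apply Finset.sum_le_sum
          intro g hg
          rw [le_div_iff₀ hm0]
          exact prob1 h g (mem_filter.1 hg).2.2 hm
      _ = F1.card * (2 * N / m) := by rw [Finset.sum_const, nsmul_eq_mul]
      _ ≤ _ := by gcongr
  have d2 : (∑ p ∈ F2, (((PM (V × Fin r)).filter (fun σ => σ h = p.2.1 ∧ σ p.1 = p.2.2)).card : ℝ))
      ≤ (r * (m * r)) * (4 * N / m ^ 2) := by
    calc _ ≤ ∑ p ∈ F2, (4 * N / m ^ 2) := by
          apply Finset.sum_le_sum
          intro p hp
          rw [le_div_iff₀ (by positivity)]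
          obtain ⟨k1, k2, k3, k4, k5, k6⟩ := (mem_filter.1 hp).2
          exact prob2 h p.1 p.2.1 p.2.2 k1 k2 k3 k4 k5 k6 hm
      _ = F2.card * (4 * N / m ^ 2) := by rw [Finset.sum_const, nsmul_eq_mul]
      _ ≤ _ := by
        gcongr
        exact_mod_cast hF2
  have c4 : (((PM (V × Fin r)).filter (fun σ => BadH σ h)).card : ℝ) ≤
     (∑ g ∈ F1, (((PM (V × Fin r)).filter (fun σ => σ h = g)).card : ℝ)) +
     (∑ p ∈ F2, (((PM (V × Fin r)).filter (fun σ => σ h = p.2.1 ∧ σ p.1 = p.2.2)).card : ℝ)) := by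
    exact_mod_cast c3
  have c5 := c4.trans (add_le_add d1 d2)
  calc _ ≤ (r * (2 * N / m) + (r * (m * r)) * (4 * N / m ^ 2)) * m := by gcongr
    _ = _ := by field_simp

lemma E_bad (V : Type*) [Fintype V] (r : ℕ) (hm : 8 ≤ Fintype.card (V × Fin r)) :
    ∑ σ ∈ PM (V × Fin r), ((Xb σ).card : ℝ) ≤ (2 * r + 4 * r ^ 2) * (PM (V × Fin r)).card := by
  have hm0 : (0 : ℝ) < Fintype.card (V × Fin r) := by exact_mod_cast (by omega)
  have e : ∑ σ ∈ PM (V × Fin r), ((Xb σ).card : ℝ) =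
      ∑ h : V × Fin r, (((PM (V × Fin r)).filter (fun σ => BadH σ h)).card : ℝ) := by
    simp only [Xb, card_filter, Nat.cast_sum]
    rw [Finset.sum_comm]
  rw [e]
  calc _ ≤ ∑ h : V × Fin r, ((2 * r + 4 * r ^ 2) * (PM (V × Fin r)).card / (Fintype.card (V × Fin r) : ℝ)) := by
        apply Finset.sum_le_sum
        intro h _
        rw [le_div_iff₀ hm0]
        exact prob_bad h hm
    _ = _ := by rw [Finset.sum_const, card_univ, nsmul_eq_mul]; field_simp

theorem simple_prob (r : ℕ) (hr : 1 ≤ r) : ∃ (C : ℝ) (n0 : ℕ), 0 < C ∧ ∀ n : ℕ, n0 ≤ n →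
    ((PM (Fin n × Fin r)).card : ℝ) ≤ C * (Tj (Fin n) r 0).card := by
  set k := 2 * (2 * r + 4 * r ^ 2) with hk
  refine ⟨2 * ((1 + 2 * (r + r ^ 2)) ^ k : ℕ), 8 + 2 * (3 * r + 2 * r ^ 2 + k), by positivity, ?_⟩
  intro n hn
  have hc : Fintype.card (Fin n × Fin r) = n * r := by simp
  have hnm : n ≤ Fintype.card (Fin n × Fin r) := by rw [hc]; exact Nat.le_mul_of_pos_right _ hr
  have h1 := E_bad (Fin n) r (by omega)
  have h2 := T_bound' (Fin n) r k (by omega) (by omega)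
  have h3 : (k : ℝ) * ((PM (Fin n × Fin r)).card - (Tj (Fin n) r k).card) ≤ 
      ∑ σ ∈ PM (Fin n × Fin r), ((Xb σ).card : ℝ) := by
    have e1 : ((PM (Fin n × Fin r)).card : ℝ) - (Tj (Fin n) r k).card =
      (((PM (Fin n × Fin r)).filter (fun σ => ¬ (Xb σ).card ≤ k)).card : ℝ) := by
      rw [Tj, ← Finset.card_filter_add_card_filter_not (s := PM (Fin n × Fin r)) (fun σ => (Xb σ).card ≤ k)]
      push_cast; ring
    rw [e1, mul_comm, ← nsmul_eq_mul, ← Finset.sum_const, Finset.sum_filter]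
    apply Finset.sum_le_sum
    intro σ _
    by_cases h : (Xb σ).card ≤ k
    · rw [if_neg (not_not.mpr h)]; positivity
    · rw [if_pos h]; exact_mod_cast (by omega)
  have h4 : ((Tj (Fin n) r k).card : ℝ) ≤ ((1 + 2 * (r + r ^ 2)) ^ k : ℕ) * (Tj (Fin n) r 0).card := by
    exact_mod_cast h2
  have h5 : (k : ℝ) = 2 * (2 * r + 4 * r ^ 2) := by rw [hk]; push_cast; ring
  have h6 : (0 : ℝ) < 2 * r + 4 * r ^ 2 := by
    have : (1 : ℝ) ≤ r := by exact_mod_cast hr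
    positivity
  have h7 := h3.trans h1
  rw [h5] at h7
  have h8 : 2 * (((PM (Fin n × Fin r)).card : ℝ) - (Tj (Fin n) r k).card) ≤ (PM (Fin n × Fin r)).card := by
    apply le_of_mul_le_mul_left _ h6
    linarith
  linarith

end PartG2
end Fried

namespace Fried
section PartH
open Finset Filter Topology

/-- the simple graph underlying a matching of the half-edges -/
def Gs {V : Type*} {r : ℕ} (σ : Equiv.Perm (V × Fin r)) : SimpleGraph V :=
  SimpleGraph.fromRel (fun u v => ∃ h, h.1 = u ∧ (σ h).1 = v)

lemma Gs_adj {V : Type*} {r : ℕ} [Fintype V] (σ : Equiv.Perm (V × Fin r)) (hσ : σ ∈ PM (V × Fin r)) (u v : V) :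
    (Gs σ).Adj u v ↔ u ≠ v ∧ ∃ h, h.1 = u ∧ (σ h).1 = v := by
  rw [mem_PM] at hσ
  simp only [Gs, SimpleGraph.fromRel_adj]
  constructor
  · rintro ⟨h, h1 | ⟨x, h1, h2⟩⟩
    · exact ⟨h, h1⟩
    · exact ⟨h, σ x, h2, by rw [(hσ x).2]; exact h1⟩
  · rintro ⟨h, h1⟩; exact ⟨h, Or.inl h1⟩

/-- edges inside `U` -/
def Ein {V : Type*} (G : SimpleGraph V) (U : Finset V) : Set (Sym2 V) :=
  {e : Sym2 V | e ∈ G.edgeSet ∧ ∀ x ∈ e, x ∈ U}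

noncomputable def HU {V : Type*} [Fintype V] (r : ℕ) (U : Finset V) : Finset (V × Fin r) := U ×ˢ univ

lemma dense_D {V : Type*} [Fintype V] {r : ℕ} (σ : Equiv.Perm (V × Fin r)) (hσ : σ ∈ PM (V × Fin r))
    (U : Finset V) (t : ℕ) (ht : t ≤ (Ein (Gs σ) U).ncard) :
    ∃ D ∈ powersetCard t (HU r U ×ˢ HU r U), 
      ((∀ d ∈ D, ∀ d' ∈ D, d.1 = d'.1 → d = d') ∧ (∀ d ∈ D, ∀ d' ∈ D, d.2 = d'.2 → d = d') ∧ 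
        (∀ d ∈ D, ∀ d' ∈ D, d.1 ≠ d'.2)) ∧ ∀ d ∈ D, σ d.1 = d.2 := by
  have hσ' := hσ
  rw [mem_PM] at hσ'
  rw [Set.ncard_eq_toFinset_card' ] at ht
  obtain ⟨T, hT, hTc⟩ := Finset.exists_subset_card_eq ht
  have key : ∀ e : T, ∃ h : V × Fin r, s(h.1, (σ h).1) = e.1 ∧ h.1 ∈ U ∧ (σ h).1 ∈ U := by
    rintro ⟨e, he⟩
    have he' := hT he
    rw [Set.mem_toFinset] at he'
    induction e using Sym2.ind with
    | _ u v =>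
      obtain ⟨h1, h2⟩ := he'
      rw [SimpleGraph.mem_edgeSet, Gs_adj σ hσ] at h1
      obtain ⟨-, h, rfl, rfl⟩ := h1
      exact ⟨h, rfl, h2 _ (by simp), h2 _ (by simp)⟩
  choose φ hφ using key
  have hinj : ∀ e e' : T, φ e = φ e' → e = e' := by
    intro e e' h
    apply Subtype.ext
    rw [← (hφ e).1, ← (hφ e').1, h]
  refine ⟨univ.image (fun e : T => (φ e, σ (φ e))), ?_, ⟨?_, ?_, ?_⟩, ?_⟩
  · rw [mem_powersetCard]
    constructor
    · intro d hd
      simp only [mem_image, mem_univ, true_and] at hd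
      obtain ⟨e, rfl⟩ := hd
      simp only [HU, mem_product, mem_univ, and_true]
      exact (hφ e).2
    · rw [card_image_of_injective, card_univ, Fintype.card_coe, hTc]
      intro e e' h
      exact hinj _ _ (Prod.ext_iff.mp h).1
  · simp only [mem_image, mem_univ, true_and]
    rintro d ⟨e, rfl⟩ d' ⟨e', rfl⟩ h
    rw [hinj _ _ h]
  · simp only [mem_image, mem_univ, true_and]
    rintro d ⟨e, rfl⟩ d' ⟨e', rfl⟩ h
    rw [hinj _ _ (σ.injective h)]
  · simp only [mem_image, mem_univ, true_and]
    rintro d ⟨e, rfl⟩ d' ⟨e', rfl⟩ h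
    simp only at h
    have h2 : σ (φ e) = φ e' := by rw [h, (hσ' _).2]
    have : e = e' := by
      apply Subtype.ext
      rw [← (hφ e).1, ← (hφ e').1, h2, h, Sym2.eq_swap]
    subst this
    exact (hσ' _).1 h2
  · simp only [mem_image, mem_univ, true_and]
    rintro d ⟨e, rfl⟩
    rfl

lemma dense_count (V : Type*) [Fintype V] (r s t : ℕ) (hm : 2 * t ≤ Fintype.card (V × Fin r)) :
    (((PM (V × Fin r)).filter (fun σ => ∃ U : Finset V, U.card = s ∧ t ≤ (Ein (Gs σ) U).ncard)).card : ℝ) *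
      ((Fintype.card (V × Fin r) : ℝ) - 2 * t) ^ t ≤
      ((Fintype.card V).choose s : ℝ) * (((s * r) * (s * r)).choose t : ℝ) * (PM (V × Fin r)).card := by
  set GD : Finset ((V × Fin r) × (V × Fin r)) → Prop := fun D =>
    ((∀ d ∈ D, ∀ d' ∈ D, d.1 = d'.1 → d = d') ∧ (∀ d ∈ D, ∀ d' ∈ D, d.2 = d'.2 → d = d') ∧ 
        (∀ d ∈ D, ∀ d' ∈ D, d.1 ≠ d'.2)) with hGD
  have hm' : (2 : ℝ) * t ≤ Fintype.card (V × Fin r) := by exact_mod_cast hm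
  set M := ((Fintype.card (V × Fin r) : ℝ) - 2 * t) ^ t with hM
  have hM0 : 0 ≤ M := pow_nonneg (by linarith) _
  have hsub : (PM (V × Fin r)).filter (fun σ => ∃ U : Finset V, U.card = s ∧ t ≤ (Ein (Gs σ) U).ncard) ⊆
      (powersetCard s (univ : Finset V)).biUnion (fun U => 
        ((powersetCard t (HU r U ×ˢ HU r U)).filter GD).biUnion (fun D => 
          (PM (V × Fin r)).filter (fun σ => ∀ d ∈ D, σ d.1 = d.2))) := by
    intro σ hσ
    rw [mem_filter] at hσ
    obtain ⟨hσ, U, hU, ht⟩ := hσ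
    obtain ⟨D, hD1, hD2, hD3⟩ := dense_D σ hσ U t ht
    simp only [mem_biUnion]
    exact ⟨U, by simp [mem_powersetCard, hU], D, by rw [mem_filter]; exact ⟨hD1, hD2⟩, by
      rw [mem_filter]; exact ⟨hσ, hD3⟩⟩
  have hone : ∀ U : Finset V, ∀ D ∈ (powersetCard t (HU r U ×ˢ HU r U)).filter GD,
      (((PM (V × Fin r)).filter (fun σ => ∀ d ∈ D, σ d.1 = d.2)).card : ℝ) * M ≤ (PM (V × Fin r)).card := by
    intro U D hD
    rw [mem_filter, mem_powersetCard] at hD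
    obtain ⟨⟨-, hDc⟩, h1, h2, h3⟩ := hD
    have := prob_le (fun d : D => d.1.1) (fun d : D => d.1.2)
      (fun d d' h => Subtype.ext (h1 _ d.2 _ d'.2 h)) (fun d d' h => Subtype.ext (h2 _ d.2 _ d'.2 h))
      (fun d d' => h3 _ d.2 _ d'.2) (by rw [Fintype.card_coe, hDc]; exact hm)
    rw [Fintype.card_coe, hDc] at this
    convert this using 5
    simp
  calc _ ≤ (∑ U ∈ powersetCard s (univ : Finset V), ∑ D ∈ (powersetCard t (HU r U ×ˢ HU r U)).filter GD,
        (((PM (V × Fin r)).filter (fun σ => ∀ d ∈ D, σ d.1 = d.2)).card : ℝ)) * M := by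
        apply mul_le_mul_of_nonneg_right _ hM0
        have := (card_le_card hsub).trans (card_biUnion_le.trans (Finset.sum_le_sum fun U _ => card_biUnion_le))
        exact_mod_cast this
    _ = ∑ U ∈ powersetCard s (univ : Finset V), ∑ D ∈ (powersetCard t (HU r U ×ˢ HU r U)).filter GD,
        (((PM (V × Fin r)).filter (fun σ => ∀ d ∈ D, σ d.1 = d.2)).card : ℝ) * M := by
        simp only [Finset.sum_mul]
    _ ≤ ∑ U ∈ powersetCard s (univ : Finset V), (((s * r) * (s * r)).choose t : ℝ) * (PM (V × Fin r)).card := by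
        apply Finset.sum_le_sum
        intro U hU
        rw [mem_powersetCard] at hU
        refine (Finset.sum_le_sum (hone U)).trans ?_
        rw [Finset.sum_const, nsmul_eq_mul]
        apply mul_le_mul_of_nonneg_right _ (by positivity)
        have := card_filter_le (powersetCard t (HU r U ×ˢ HU r U)) GD
        rw [card_powersetCard, card_product, HU, card_product, hU.2, card_univ, Fintype.card_fin] at this
        exact_mod_cast this
    _ = _ := by
        rw [Finset.sum_const, card_powersetCard, card_univ, nsmul_eq_mul]; ring

lemma dense_real (n r s k : ℕ) (hn : 0 < n) (hr : 1 ≤ r) (hm : 4 * (s + k) ^ 2 ≤ n) :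
    (((PM (Fin n × Fin r)).filter (fun σ => ∃ U : Finset (Fin n), U.card = s ∧ 
      s + k ≤ (Ein (Gs σ) U).ncard)).card : ℝ) * (n : ℝ) ^ k ≤
      2 * (r * Real.exp 1) ^ (2 * s) * (r * s) ^ k * (PM (Fin n × Fin r)).card := by
  have hc : Fintype.card (Fin n × Fin r) = n * r := by simp
  have hnr : n ≤ n * r := Nat.le_mul_of_pos_right _ hr
  have h0 := dense_count (Fin n) r s (s + k) (by rw [hc]; nlinarith)
  rw [hc, Fintype.card_fin] at h0
  set N := (((PM (Fin n × Fin r)).filter (fun σ => ∃ U : Finset (Fin n), U.card = s ∧ 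
      s + k ≤ (Ein (Gs σ) U).ncard)).card : ℝ) with hN
  set P := ((PM (Fin n × Fin r)).card : ℝ)
  have hN0 : 0 ≤ N := by positivity
  have hP0 : 0 ≤ P := by positivity
  have hn' : (0 : ℝ) < n := by exact_mod_cast hn
  have hr' : (1 : ℝ) ≤ r := by exact_mod_cast hr
  have hmR : 4 * ((s : ℝ) + k) ^ 2 ≤ n * r := by
    have : 4 * (s + k) ^ 2 ≤ n * r := hm.trans hnr
    exact_mod_cast this
  have hmp : (0 : ℝ) < n * r := by positivity
  have hB : ((n : ℝ) * r) ^ (s + k) / 2 ≤ (((n * r : ℕ) : ℝ) - 2 * ((s + k : ℕ) : ℝ)) ^ (s + k) := by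
    have e : (((n * r : ℕ) : ℝ) - 2 * ((s + k : ℕ) : ℝ)) = (n * r) * (1 + (-(2 * ((s + k : ℕ) : ℝ) / (n * r)))) := by
      push_cast; field_simp; ring
    rw [e, mul_pow (_ * _) (1 + _), div_eq_mul_inv]
    apply mul_le_mul_of_nonneg_left _ (by positivity)
    have h1 : 2 * ((s + k : ℕ) : ℝ) / (n * r) ≤ 2 := by
      rw [div_le_iff₀ hmp]
      have : (s + k : ℕ) ≤ n * r := by nlinarith
      have : ((s + k : ℕ) : ℝ) ≤ n * r := by exact_mod_cast this
      linarith
    refine le_trans ?_ (one_add_mul_le_pow (by linarith) (s + k))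
    have : ((s + k : ℕ) : ℝ) * (2 * ((s + k : ℕ) : ℝ) / (n * r)) ≤ 1 / 2 := by
      rw [mul_div_assoc', div_le_iff₀ hmp]
      push_cast
      nlinarith
    linarith
  have hC1 : ((n.choose s : ℕ) : ℝ) * (s : ℝ) ^ s ≤ (n : ℝ) ^ s * Real.exp s := by
    have h1 := Nat.choose_le_pow_div (α := ℝ) s n
    have h2 := Real.pow_div_factorial_le_exp (s : ℝ) (by positivity) s
    calc _ ≤ ((n : ℝ) ^ s / s.factorial) * (s : ℝ) ^ s := mul_le_mul_of_nonneg_right h1 (by positivity)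
      _ = (n : ℝ) ^ s * ((s : ℝ) ^ s / s.factorial) := by ring
      _ ≤ _ := mul_le_mul_of_nonneg_left h2 (by positivity)
  have hC2 : (((s * r) * (s * r)).choose (s + k) : ℝ) ≤ (r : ℝ) ^ (2 * (s + k)) * (s : ℝ) ^ (s + k) * Real.exp s := by
    have h1 := Nat.choose_le_pow_div (α := ℝ) (s + k) ((s * r) * (s * r))
    have h2 := Real.pow_div_factorial_le_exp (s : ℝ) (by positivity) (s + k)
    calc _ ≤ (((s * r) * (s * r) : ℕ) : ℝ) ^ (s + k) / (s + k).factorial := h1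
      _ = (r : ℝ) ^ (2 * (s + k)) * (s : ℝ) ^ (s + k) * ((s : ℝ) ^ (s + k) / (s + k).factorial) := by
        push_cast; rw [pow_mul]; field_simp; ring
      _ ≤ _ := mul_le_mul_of_nonneg_left h2 (by positivity)
  have h1 : N * (((n : ℝ) * r) ^ (s + k) / 2) ≤ 
      (n : ℝ) ^ s * Real.exp s * ((r : ℝ) ^ (2 * (s + k)) * (s : ℝ) ^ k * Real.exp s) * P := by
    refine (mul_le_mul_of_nonneg_left hB hN0).trans (h0.trans ?_)
    apply mul_le_mul_of_nonneg_right _ hP0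
    calc _ ≤ ((n.choose s : ℕ) : ℝ) * ((r : ℝ) ^ (2 * (s + k)) * (s : ℝ) ^ (s + k) * Real.exp s) :=
          mul_le_mul_of_nonneg_left hC2 (by positivity)
      _ = (((n.choose s : ℕ) : ℝ) * (s : ℝ) ^ s) * ((r : ℝ) ^ (2 * (s + k)) * (s : ℝ) ^ k * Real.exp s) := by ring
      _ ≤ _ := mul_le_mul_of_nonneg_right hC1 (by positivity)
  have hex : Real.exp s = Real.exp 1 ^ s := by rw [← Real.exp_nat_mul]; simp
  have hpos : (0 : ℝ) < (n : ℝ) ^ s * (r : ℝ) ^ (s + k) / 2 := by positivity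
  rw [← mul_le_mul_iff_right₀ hpos]
  calc _ = N * (((n : ℝ) * r) ^ (s + k) / 2) := by ring
    _ ≤ _ := h1
    _ = ((n : ℝ) ^ s * (r : ℝ) ^ (s + k)) * (Real.exp 1 ^ (2 * s) * (r ^ k * s ^ k)) * P * r ^ s := by
      rw [hex]; ring
    _ ≤ ((n : ℝ) ^ s * (r : ℝ) ^ (s + k)) * (Real.exp 1 ^ (2 * s) * (r ^ k * s ^ k)) * P * r ^ (2 * s) := by
      apply mul_le_mul_of_nonneg_left _ (by positivity)
      exact pow_le_pow_right₀ hr' (by omega)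
    _ = _ := by rw [mul_pow, mul_pow]; ring

theorem bad_dense_tendsto (r : ℕ) (hr : 1 ≤ r) : ∃ u : ℕ → ℝ, Tendsto u atTop (𝓝 0) ∧ 
    ∀ᶠ n : ℕ in atTop, (((PM (Fin n × Fin r)).filter (fun σ => ¬ (∀ s : ℕ, (s : ℝ) ≤ Real.log n →
      ∀ U : Finset (Fin n), U.card = s → (Ein (Gs σ) U).ncard ≤
        s + ⌈2 * (s : ℝ) * Real.log ((r : ℝ) * Real.exp 1) / Real.log n⌉₊))).card : ℝ) ≤ 
      (PM (Fin n × Fin r)).card * u n := by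
  set y := 2 * Real.log ((r : ℝ) * Real.exp 1) with hy
  set c := ⌈y⌉₊ + 1 with hc
  have hr' : (1 : ℝ) ≤ r := by exact_mod_cast hr
  have hre : (1 : ℝ) ≤ r * Real.exp 1 := by
    have := Real.one_le_exp (zero_le_one)
    nlinarith
  have hl0 : 0 ≤ Real.log ((r : ℝ) * Real.exp 1) := Real.log_nonneg hre
  refine ⟨fun n => (4 * r ^ c) * Real.log n ^ (c + 1) / n, log_pow_div _ _, ?_⟩
  have hl2 : ∀ᶠ n : ℕ in atTop, 16 * Real.log n ^ 2 / n < 1 := 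
    (log_pow_div 2 16).eventually_lt_const (by norm_num)
  filter_upwards [hl2, log_ge c, log_ge 1, eventually_gt_atTop 0] with n hn2 hnc hn1 hn
  have hn' : (0 : ℝ) < n := by exact_mod_cast hn
  rw [div_lt_one hn'] at hn2
  set L := Real.log n with hL
  set P := ((PM (Fin n × Fin r)).card : ℝ) with hP
  have hP0 : 0 ≤ P := by positivity
  set Q : ℕ → Equiv.Perm (Fin n × Fin r) → Prop := fun s σ => ∃ U : Finset (Fin n), U.card = s ∧ 
      s + (⌈2 * (s : ℝ) * Real.log ((r : ℝ) * Real.exp 1) / L⌉₊ + 1) ≤ (Ein (Gs σ) U).ncard with hQ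
  have hone : ∀ s ∈ range (⌊L⌋₊ + 1), (((PM (Fin n × Fin r)).filter (Q s)).card : ℝ) ≤ P * (2 * (r * L) ^ c / n) := by
    intro s hs
    have hsL : (s : ℝ) ≤ L := by
      rw [mem_range] at hs
      exact (Nat.le_floor_iff (by linarith)).mp (by omega)
    set x := 2 * (s : ℝ) * Real.log ((r : ℝ) * Real.exp 1) / L with hx
    have hx0 : 0 ≤ x := by positivity
    have hxy : x ≤ y := by
      rw [hx, hy, div_le_iff₀ (by linarith)]
      nlinarith
    have hkc : ⌈x⌉₊ + 1 ≤ c := by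
      rw [hc]; have := Nat.ceil_mono hxy; omega
    have hkc' : ((⌈x⌉₊ + 1 : ℕ) : ℝ) ≤ c := by exact_mod_cast hkc
    have h1 := dense_real n r s (⌈x⌉₊ + 1) hn hr (by
      have : 4 * ((s : ℝ) + ((⌈x⌉₊ + 1 : ℕ) : ℝ)) ^ 2 ≤ n := by
        have a : (s : ℝ) + ((⌈x⌉₊ + 1 : ℕ) : ℝ) ≤ 2 * L := by linarith
        have b : 0 ≤ (s : ℝ) + ((⌈x⌉₊ + 1 : ℕ) : ℝ) := by positivity
        nlinarith
      exact_mod_cast this)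
    set k := ⌈x⌉₊ + 1 with hk
    have h2 : (r * Real.exp 1) ^ (2 * s) * n ≤ (n : ℝ) ^ k := by
      have e1 : (r * Real.exp 1) ^ (2 * s) = Real.exp (x * L) := by
        have : x * L = ((2 * s : ℕ) : ℝ) * Real.log ((r : ℝ) * Real.exp 1) := by
          rw [hx]; push_cast; field_simp
        rw [this, Real.exp_nat_mul, Real.exp_log (by linarith)]
      have e2 : (n : ℝ) = Real.exp L := (Real.exp_log hn').symm
      rw [e1]
      calc _ = Real.exp (x * L) * Real.exp L := by rw [← e2]
        _ = Real.exp ((x + 1) * L) := by rw [← Real.exp_add]; ring_nf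
        _ ≤ Real.exp (k * L) := by
          apply Real.exp_le_exp.mpr
          apply mul_le_mul_of_nonneg_right _ (by linarith)
          rw [hk]; push_cast; linarith [Nat.le_ceil x]
        _ = Real.exp L ^ k := Real.exp_nat_mul _ _
        _ = _ := by rw [← e2]
    have h3 : ((r : ℝ) * s) ^ k ≤ (r * L) ^ c := by
      calc _ ≤ ((r : ℝ) * L) ^ k := by gcongr
        _ ≤ _ := pow_le_pow_right₀ (by nlinarith) hkc
    have hpos : (0 : ℝ) < (r * Real.exp 1) ^ (2 * s) := by positivity
    rw [mul_div_assoc', le_div_iff₀ hn', ← mul_le_mul_iff_right₀ hpos]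
    calc _ = (((PM (Fin n × Fin r)).filter (Q s)).card : ℝ) * ((r * Real.exp 1) ^ (2 * s) * n) := by ring
      _ ≤ (((PM (Fin n × Fin r)).filter (Q s)).card : ℝ) * (n : ℝ) ^ k := 
        mul_le_mul_of_nonneg_left h2 (by positivity)
      _ ≤ _ := h1
      _ ≤ 2 * (r * Real.exp 1) ^ (2 * s) * (r * L) ^ c * P := by gcongr
      _ = _ := by ring
  have hsub : ((PM (Fin n × Fin r)).filter (fun σ => ¬ (∀ s : ℕ, (s : ℝ) ≤ L →
      ∀ U : Finset (Fin n), U.card = s → (Ein (Gs σ) U).ncard ≤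
        s + ⌈2 * (s : ℝ) * Real.log ((r : ℝ) * Real.exp 1) / L⌉₊))) ⊆ 
      (range (⌊L⌋₊ + 1)).biUnion (fun s => (PM (Fin n × Fin r)).filter (Q s)) := by
    intro σ hσ
    rw [mem_filter] at hσ
    obtain ⟨h1, h2⟩ := hσ
    push Not at h2
    obtain ⟨s, hs, U, hU, h3⟩ := h2
    rw [mem_biUnion]
    refine ⟨s, ?_, ?_⟩
    · rw [mem_range]; have := (Nat.le_floor_iff (by linarith)).mpr hs; omega
    · rw [mem_filter]; exact ⟨h1, U, hU, by omega⟩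
  calc _ ≤ ∑ s ∈ range (⌊L⌋₊ + 1), (((PM (Fin n × Fin r)).filter (Q s)).card : ℝ) := by
        exact_mod_cast (card_le_card hsub).trans card_biUnion_le
    _ ≤ ∑ s ∈ range (⌊L⌋₊ + 1), P * (2 * (r * L) ^ c / n) := Finset.sum_le_sum hone
    _ = (⌊L⌋₊ + 1) * (P * (2 * (r * L) ^ c / n)) := by 
        rw [Finset.sum_const, card_range, nsmul_eq_mul]; push_cast; ring
    _ ≤ (2 * L) * (P * (2 * (r * L) ^ c / n)) := by
        apply mul_le_mul_of_nonneg_right _ (by positivity)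
        have := Nat.floor_le (show 0 ≤ L by linarith)
        linarith
    _ = _ := by rw [mul_pow]; ring

end PartH
end Fried

namespace Fried
section PartI
open Finset Filter Topology Matrix

lemma mem_T0 {V : Type*} [Fintype V] {r : ℕ} (σ : Equiv.Perm (V × Fin r)) :
    σ ∈ Tj V r 0 ↔ σ ∈ PM (V × Fin r) ∧ ∀ h, ¬ BadH σ h := by
  simp [Tj, Xb, Finset.filter_eq_empty_iff]

lemma T0_adj {V : Type*} [Fintype V] {r : ℕ} (σ : Equiv.Perm (V × Fin r)) (hσ : σ ∈ Tj V r 0) (u v : V) :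
    (Gs σ).Adj u v ↔ ∃ i, (σ (u, i)).1 = v := by
  rw [mem_T0] at hσ
  rw [Gs_adj σ hσ.1]
  constructor
  · rintro ⟨-, ⟨a, i⟩, rfl, h⟩; exact ⟨i, h⟩
  · rintro ⟨i, h⟩
    refine ⟨?_, (u, i), rfl, h⟩
    rintro rfl
    exact hσ.2 (u, i) (Or.inl h)

lemma T0_inj {V : Type*} [Fintype V] {r : ℕ} (σ : Equiv.Perm (V × Fin r)) (hσ : σ ∈ Tj V r 0) (u : V) 
    (i j : Fin r) (h : (σ (u, i)).1 = (σ (u, j)).1) : i = j := by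
  rw [mem_T0] at hσ
  by_contra hne
  exact hσ.2 (u, j) (Or.inr ⟨(u, i), by simpa using hne, rfl, h⟩)

lemma T0_Am {n r : ℕ} (σ : Equiv.Perm (Fin n × Fin r)) (hσ : σ ∈ Tj (Fin n) r 0) :
    Am σ = (Gs σ).adjMatrix ℝ := by
  ext u v
  rw [Am_apply, SimpleGraph.adjMatrix_apply]
  split_ifs with h
  · rw [T0_adj σ hσ] at h
    obtain ⟨i, hi⟩ := h
    have : (univ.filter (fun i : Fin r => (σ (u,i)).1 = v)) = {i} := by
      ext j
      simp only [mem_filter, mem_univ, true_and, mem_singleton]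
      constructor
      · intro hj; exact T0_inj σ hσ u j i (hj.trans hi.symm)
      · rintro rfl; exact hi
    rw [this]; simp
  · rw [T0_adj σ hσ] at h
    push Not at h
    rw [Finset.filter_eq_empty_iff.mpr (fun i _ => h i)]; simp

lemma bad_P1 {n r : ℕ} (hn : 0 < n) (ε : ℝ) (hε : 0 < ε) (σ : Equiv.Perm (Fin n × Fin r))
    (hσ : σ ∈ Tj (Fin n) r 0) (h : ¬ PropP1 r ε (Gs σ)) :
    BadSpec (Am σ) r (min (2 * √((r : ℝ) - 1) + ε) r) := by
  by_cases hc : (Gs σ).Connected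
  · left
    have h1 : ¬ sSup {μ : ℝ | μ ∈ spectrum ℝ ((Gs σ).adjMatrix ℝ) ∧ μ ≠ (r : ℝ)} ≤
      2 * Real.sqrt ((r : ℝ) - 1) + ε := fun h2 => h ⟨hc, h2⟩
    by_contra h2
    push Not at h2
    apply h1
    apply Real.sSup_le
    · rintro μ ⟨hμ, hμr⟩
      have := h2 μ (by rw [T0_Am σ hσ]; exact hμ) hμr
      by_contra h3
      push Not at h3
      exact absurd ((min_le_left _ _).trans h3.le) (not_le.mpr this)
    · positivity
  · right
    have : Nonempty (Fin n) := ⟨⟨0, hn⟩⟩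
    have hpc : ¬ (Gs σ).Preconnected := fun h => hc ⟨h⟩
    simp only [SimpleGraph.Preconnected] at hpc
    push Not at hpc
    obtain ⟨u, v, huv⟩ := hpc
    refine ⟨fun w => if (Gs σ).Reachable u w then 1 else 0, ?_, u, v, ?_⟩
    · ext w
      rw [Matrix.mulVec, dotProduct, Pi.smul_apply, smul_eq_mul, ← Am_row σ w, Finset.sum_mul]
      apply Finset.sum_congr rfl
      intro x _
      by_cases hA : (Gs σ).Adj w x
      · have : (Gs σ).Reachable u w ↔ (Gs σ).Reachable u x := 
          ⟨fun h => h.trans hA.reachable, fun h => h.trans hA.symm.reachable⟩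
        simp only [this]
      · have : Am σ w x = 0 := by rw [T0_Am σ hσ, SimpleGraph.adjMatrix_apply, if_neg hA]
        rw [this]; simp
    · simp [huv]

noncomputable def mkP {V : Type*} {r : ℕ} (G : SimpleGraph V) (e : ∀ v, Fin r ≃ G.neighborSet v) :
    Equiv.Perm (V × Fin r) :=
  Function.Involutive.toPerm (fun h => ((e h.1 h.2).1, (e (e h.1 h.2).1).symm ⟨h.1, (e h.1 h.2).2.symm⟩))
    (by
      rintro ⟨v, i⟩
      have h : ∀ (a : V) (_ : a = v) (hb : G.Adj a (e v i).1), (e a).symm ⟨(e v i).1, hb⟩ = i := by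
        intro a ha hb
        subst ha
        exact (e a).symm_apply_apply i
      refine Prod.ext ?_ ?_
      · simp
      · exact h _ (by simp) _)

lemma mkP_apply {V : Type*} {r : ℕ} (G : SimpleGraph V) (e : ∀ v, Fin r ≃ G.neighborSet v) (v : V) (i : Fin r) :
    mkP G e (v, i) = ((e v i).1, (e (e v i).1).symm ⟨v, (e v i).2.symm⟩) := rfl

lemma mkP_mem {V : Type*} [Fintype V] {r : ℕ} (G : SimpleGraph V) (e : ∀ v, Fin r ≃ G.neighborSet v) :
    mkP G e ∈ Tj V r 0 ∧ Gs (mkP G e) = G := by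
  have h1 : mkP G e ∈ Tj V r 0 := by
    rw [mem_T0, mem_PM]
    refine ⟨?_, ?_⟩
    · rintro ⟨v, i⟩
      refine ⟨?_, Function.Involutive.toPerm_involutive _ _⟩
      rw [mkP_apply]
      intro h
      have := (Prod.ext_iff.mp h).1
      exact G.ne_of_adj (e v i).2 this.symm
    · rintro ⟨v, i⟩ (h | ⟨⟨v', i'⟩, h1, h2, h3⟩)
      · rw [mkP_apply] at h
        exact G.ne_of_adj (e v i).2 h.symm
      · simp only at h2
        subst h2
        rw [mkP_apply, mkP_apply] at h3
        apply h1
        rw [(e v').injective (Subtype.ext h3)]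
  refine ⟨h1, ?_⟩
  ext u v
  rw [T0_adj _ h1]
  constructor
  · rintro ⟨i, rfl⟩
    exact (e u i).2
  · intro h
    exact ⟨(e u).symm ⟨v, h⟩, by simp [mkP_apply]⟩

lemma T0_reg {V : Type*} [Fintype V] {r : ℕ} (σ : Equiv.Perm (V × Fin r)) (hσ : σ ∈ Tj V r 0) :
    ∃ e : ∀ v, Fin r ≃ (Gs σ).neighborSet v, mkP (Gs σ) e = σ := by
  have hσ1 := ((mem_T0 σ).mp hσ).1
  rw [mem_PM] at hσ1
  refine ⟨fun v => Equiv.ofBijective (fun i => ⟨(σ (v, i)).1, (T0_adj σ hσ _ _).mpr ⟨i, rfl⟩⟩) ⟨?_, ?_⟩, ?_⟩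
  · intro i j h
    exact T0_inj σ hσ v i j (congrArg Subtype.val h)
  · rintro ⟨w, hw⟩
    obtain ⟨i, rfl⟩ := (T0_adj σ hσ _ _).mp hw
    exact ⟨i, rfl⟩
  · ext1 ⟨v, i⟩
    rw [mkP_apply]
    refine Prod.ext rfl ?_
    simp only
    rw [Equiv.symm_apply_eq]
    apply Subtype.ext
    change v = (σ (σ (v, i))).1
    rw [(hσ1 _).2]

lemma fiber_card {n r : ℕ} (G : SimpleGraph (Fin n)) (hG : ∀ x, (G.neighborSet x).ncard = r) :
    ((Tj (Fin n) r 0).filter (fun σ => Gs σ = G)).card = r.factorial ^ n := by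
  have hc : ∀ x, Fintype.card (G.neighborSet x) = r := by
    intro x; rw [← hG x, Set.ncard_eq_toFinset_card', Set.toFinset_card]
  have : Fintype.card (∀ v, Fin r ≃ G.neighborSet v) = r.factorial ^ n := by
    rw [Fintype.card_pi]
    rw [Finset.prod_congr rfl (fun v _ => Fintype.card_equiv (Fintype.equivFinOfCardEq (hc v)).symm)]
    simp
  rw [← this, ← card_univ]
  symm
  apply Finset.card_bij (fun e _ => mkP G e)
  · intro e _
    rw [mem_filter]
    exact mkP_mem G e
  · intro e _ e' _ h
    ext v i
    have := congrArg (fun σ => (σ (v, i)).1) h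
    simp only [mkP_apply] at this
    exact congrArg _ this
  · intro σ hσ
    rw [mem_filter] at hσ
    obtain ⟨h1, rfl⟩ := hσ
    obtain ⟨e, he⟩ := T0_reg σ h1
    exact ⟨e, mem_univ _, he⟩

lemma count_Q {n r : ℕ} (Q : SimpleGraph (Fin n) → Prop) :
    ((Tj (Fin n) r 0).filter (fun σ => Q (Gs σ))).card = 
      r.factorial ^ n * Set.ncard {G : SimpleGraph (Fin n) | (∀ x, (G.neighborSet x).ncard = r) ∧ Q G} := by
  rw [Set.ncard_eq_toFinset_card _ (Set.toFinite _)]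
  rw [Finset.card_eq_sum_card_fiberwise (f := fun σ => Gs σ)
    (t := (Set.toFinite {G : SimpleGraph (Fin n) | (∀ x, (G.neighborSet x).ncard = r) ∧ Q G}).toFinset)]
  · rw [Finset.sum_congr rfl (g := fun _ => r.factorial ^ n)]
    · rw [Finset.sum_const, smul_eq_mul, mul_comm]
    · intro G hG
      rw [Set.Finite.mem_toFinset] at hG
      rw [← fiber_card G hG.1, filter_filter]
      congr 1
      apply filter_congr
      intro σ _
      constructor
      · exact fun h => h.2
      · intro h; exact ⟨by rw [h]; exact hG.2, h⟩
  · intro σ hσ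
    simp only [coe_filter, Set.mem_ofPred_eq] at hσ
    simp only [Set.Finite.coe_toFinset, Set.mem_ofPred_eq]
    refine ⟨?_, hσ.2⟩
    intro x
    obtain ⟨e, -⟩ := T0_reg σ hσ.1
    rw [← Nat.card_coe_set_eq, ← Nat.card_congr (e x)]
    simp

theorem main (r : ℕ) (hr : 4 ≤ r) (ε : ℝ) (hε : 0 < ε) :
    Filter.Tendsto (fun n : ℕ =>
        (Set.ncard {G : SimpleGraph (Fin n) |
            (∀ x, (G.neighborSet x).ncard = r) ∧ PropP1 r ε G ∧ PropP2 r G} : ℝ) /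
          (Set.ncard {G : SimpleGraph (Fin n) | ∀ x, (G.neighborSet x).ncard = r} : ℝ))
      (Filter.atTop ⊓ Filter.principal {n : ℕ | Even (r * n)}) (nhds 1) := by
  obtain ⟨u1, hu1, hb1⟩ := bad_spec_tendsto r (by omega) ε hε
  obtain ⟨u2, hu2, hb2⟩ := bad_dense_tendsto r (by omega)
  obtain ⟨C, n0, hC, hs⟩ := simple_prob r (by omega)
  have hlim : Tendsto (fun n => 1 - C * (u1 n + u2 n)) (Filter.atTop ⊓ Filter.principal {n : ℕ | Even (r * n)}) (𝓝 1) := by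
    have := ((hu1.add hu2).const_mul C).const_sub 1
    simp only [add_zero, mul_zero, sub_zero] at this
    exact this.mono_left inf_le_left
  have hreg : ∀ n : ℕ, {G : SimpleGraph (Fin n) | ∀ x, (G.neighborSet x).ncard = r} = 
      {G : SimpleGraph (Fin n) | (∀ x, (G.neighborSet x).ncard = r) ∧ True} := by
    intro n; simp
  apply tendsto_of_tendsto_of_tendsto_of_le_of_le' hlim tendsto_const_nhds
  · rw [Filter.eventually_inf_principal]
    filter_upwards [hb1, hb2, eventually_ge_atTop n0, eventually_gt_atTop 0] with n h1 h2 hn hn0 hev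
    have hPM : 0 < (PM (Fin n × Fin r)).card := by
      apply Finset.card_pos.mpr
      apply PM_nonempty
      have : Even (r * n) := hev
      simpa [mul_comm] using this
    have hPM' : (0 : ℝ) < (PM (Fin n × Fin r)).card := by exact_mod_cast hPM
    have h3 := hs n hn
    have hT : (0 : ℝ) < (Tj (Fin n) r 0).card := by
      by_contra h; push Not at h; nlinarith
    have cT := count_Q (n := n) (r := r) (fun _ => True)
    rw [← hreg, Finset.filter_true] at cT
    have cB := count_Q (n := n) (r := r) (fun G => ¬ (PropP1 r ε G ∧ PropP2 r G))
    have cG := count_Q (n := n) (r := r) (fun G => (PropP1 r ε G ∧ PropP2 r G))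
    have hadd := Finset.card_filter_add_card_filter_not (s := Tj (Fin n) r 0) (fun σ => PropP1 r ε (Gs σ) ∧ PropP2 r (Gs σ))
    have hbad : (((Tj (Fin n) r 0).filter (fun σ => ¬ (PropP1 r ε (Gs σ) ∧ PropP2 r (Gs σ)))).card : ℝ) ≤
        C * (u1 n + u2 n) * (Tj (Fin n) r 0).card := by
      have hsub : (Tj (Fin n) r 0).filter (fun σ => ¬ (PropP1 r ε (Gs σ) ∧ PropP2 r (Gs σ))) ⊆
          ((PM (Fin n × Fin r)).filter (fun σ => BadSpec (Am σ) r (min (2*√((r:ℝ)-1)+ε) r))) ∪ 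
          ((PM (Fin n × Fin r)).filter (fun σ => ¬ (∀ s : ℕ, (s : ℝ) ≤ Real.log n →
      ∀ U : Finset (Fin n), U.card = s → (Ein (Gs σ) U).ncard ≤
        s + ⌈2 * (s : ℝ) * Real.log ((r : ℝ) * Real.exp 1) / Real.log n⌉₊))) := by
        intro σ hσ
        rw [mem_filter] at hσ
        obtain ⟨hσ1, hσ2⟩ := hσ
        have hσ3 := ((mem_T0 σ).mp hσ1).1
        rw [mem_union, mem_filter, mem_filter]
        by_cases hp : PropP1 r ε (Gs σ)
        · right
          exact ⟨hσ3, fun h => hσ2 ⟨hp, h⟩⟩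
        · left
          exact ⟨hσ3, bad_P1 hn0 ε hε σ hσ1 hp⟩
      have h4 : (((Tj (Fin n) r 0).filter (fun σ => ¬ (PropP1 r ε (Gs σ) ∧ PropP2 r (Gs σ)))).card : ℝ) ≤
          (PM (Fin n × Fin r)).card * (u1 n + u2 n) := by
        have := (card_le_card hsub).trans (card_union_le _ _)
        have := (Nat.cast_le (α := ℝ)).mpr this
        rw [Nat.cast_add] at this
        linarith
      have hu : 0 ≤ u1 n + u2 n := by
        by_contra h
        push Not at h
        have : (0 : ℝ) ≤ (((Tj (Fin n) r 0).filter (fun σ => ¬ (PropP1 r ε (Gs σ) ∧ PropP2 r (Gs σ)))).card : ℝ) := by positivity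
        nlinarith
      nlinarith
    have hf : (0 : ℝ) < (r.factorial : ℝ) ^ n := by positivity
    have cT' : ((Tj (Fin n) r 0).card : ℝ) = (r.factorial : ℝ) ^ n * 
      (Set.ncard {G : SimpleGraph (Fin n) | ∀ x, (G.neighborSet x).ncard = r} : ℝ) := by exact_mod_cast cT
    have cG' : (((Tj (Fin n) r 0).filter (fun σ => (PropP1 r ε (Gs σ) ∧ PropP2 r (Gs σ)))).card : ℝ) = (r.factorial : ℝ) ^ n * 
      (Set.ncard {G : SimpleGraph (Fin n) | (∀ x, (G.neighborSet x).ncard = r) ∧ PropP1 r ε G ∧ PropP2 r G} : ℝ) := by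
      have := congrArg (Nat.cast (R := ℝ)) cG
      push_cast at this
      convert this
    have hadd' := congrArg (Nat.cast (R := ℝ)) hadd
    rw [Nat.cast_add] at hadd'
    have hR : (0 : ℝ) < (Set.ncard {G : SimpleGraph (Fin n) | ∀ x, (G.neighborSet x).ncard = r} : ℝ) := by
      rw [cT'] at hT
      exact pos_of_mul_pos_right hT hf.le
    rw [le_div_iff₀ hR, ← mul_le_mul_iff_right₀ hf]
    rw [← cG']
    have : (r.factorial : ℝ) ^ n * ((1 - C * (u1 n + u2 n)) * (Set.ncard {G : SimpleGraph (Fin n) | ∀ x, (G.neighborSet x).ncard = r} : ℝ)) = 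
      (Tj (Fin n) r 0).card - C * (u1 n + u2 n) * (Tj (Fin n) r 0).card := by
      rw [cT']; ring
    rw [this]
    linarith
  · filter_upwards with n
    apply div_le_one_of_le₀ _ (by positivity)
    have : {G : SimpleGraph (Fin n) | (∀ x, (G.neighborSet x).ncard = r) ∧ PropP1 r ε G ∧ PropP2 r G} ⊆
        {G : SimpleGraph (Fin n) | ∀ x, (G.neighborSet x).ncard = r} := fun G hG => hG.1
    exact_mod_cast Set.ncard_le_ncard this (Set.toFinite _)

end PartI
end Fried

/-- Fix an integer `r ≥ 4` and `ε > 0`.  Among the simple `r`-regular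
graphs on vertex set `{1,…,n}` (for `rn` even), the proportion of graphs satisfying both
(P1) and (P2) tends to `1` as `n → ∞`. -/
theorem stmt8 (r : ℕ) (hr : 4 ≤ r) (ε : ℝ) (hε : 0 < ε) :
    Filter.Tendsto (fun n : ℕ =>
        (Set.ncard {G : SimpleGraph (Fin n) |
            (∀ x, (G.neighborSet x).ncard = r) ∧ PropP1 r ε G ∧ PropP2 r G} : ℝ) /
          (Set.ncard {G : SimpleGraph (Fin n) | ∀ x, (G.neighborSet x).ncard = r} : ℝ))
      (Filter.atTop ⊓ Filter.principal {n : ℕ | Even (r * n)}) (nhds 1) := by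
  exact Fried.main r hr ε hε
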